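/- Let M be a compact connected boundaryless topological manifold of dimension n with a compatible metric and let f : M → M be an expansive homeomorphism such that the closure of Per_H equals M. Then either Per_H^{n−1} = Per_H or Per_H^{n−1} = ∅. Analogously, either Per_H^1 = Per_H or Per_H^1 = ∅. -/

import Mathlib

open Metric Set

variable {M : Type*} [MetricSpace M]

/-- Iterates of a homeomorphism, indexed by `ℤ`. -/
def iterZ (f : M ≃ₜ M) (k : ℤ) (x : M) : M := (f.toEquiv ^ k) x

/-- `f` is expansive with expansivity constant `α`. -/
def IsExpansive (f : M ≃ₜ M) (α : ℝ) : Prop :=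
  ∀ x y : M, x ≠ y → ∃ k : ℤ, α < dist (iterZ f k x) (iterZ f k y)

/-- Stable set of `x`. -/
def Ws (f : M ≃ₜ M) (x : M) : Set M :=
  {y | Filter.Tendsto (fun k : ℤ => dist (iterZ f k x) (iterZ f k y)) Filter.atTop (nhds 0)}

/-- Unstable set of `x`. -/
def Wu (f : M ≃ₜ M) (x : M) : Set M :=
  {y | Filter.Tendsto (fun k : ℤ => dist (iterZ f k x) (iterZ f k y)) Filter.atBot (nhds 0)}

/-- Local (`ε`-local) stable set of `x`. -/
def WsLoc (f : M ≃ₜ M) (ε : ℝ) (x : M) : Set M :=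
  {y | ∀ k : ℤ, 0 ≤ k → dist (iterZ f k x) (iterZ f k y) ≤ ε}

/-- Local (`ε`-local) unstable set of `x`. -/
def WuLoc (f : M ≃ₜ M) (ε : ℝ) (x : M) : Set M :=
  {y | ∀ k : ℤ, k ≤ 0 → dist (iterZ f k x) (iterZ f k y) ≤ ε}

/-- The model space `ℝ^r × ℝ^{n-r}`. -/
abbrev ModelSp (n r : ℕ) := (Fin r → ℝ) × (Fin (n - r) → ℝ)

/-- The model hyperbolic linear map `L(a,b) = (a/2, 2b)`. -/
noncomputable def modelL (n r : ℕ) : ModelSp n r → ModelSp n r :=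
  fun q => (fun i => q.1 i / 2, fun i => 2 * q.2 i)

/-- Topologically hyperbolic periodic points of index `r` (`Per_H^r`). -/
def PerHr (f : M ≃ₜ M) (n r : ℕ) : Set M :=
  {p | ∃ l : ℕ, 1 ≤ l ∧ (f.toEquiv ^ l) p = p ∧
    ∃ (U : Set M) (V : Set (ModelSp n r)) (h : U ≃ₜ V),
      IsOpen U ∧ IsOpen V ∧ (0 : ModelSp n r) ∈ V ∧
      ∃ hp : p ∈ U, ((h ⟨p, hp⟩ : V) : ModelSp n r) = 0 ∧
        ∀ z : M, ∀ hz : z ∈ U, ∀ hz' : (f.toEquiv ^ l) z ∈ U,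
          ((h ⟨(f.toEquiv ^ l) z, hz'⟩ : V) : ModelSp n r) = modelL n r (h ⟨z, hz⟩)}

/-- All topologically hyperbolic periodic points (`Per_H`). -/
def PerH (f : M ≃ₜ M) (n : ℕ) : Set M := ⋃ r ∈ Finset.range (n + 1), PerHr f n r

/-- `p` admits a local product structure. -/
def AdmitsLPS (f : M ≃ₜ M) (n : ℕ) (p : M) : Prop :=
  ∃ (k : ℕ) (h : (Fin k → ℝ) × (Fin (n - k) → ℝ) → M) (ε : ℝ),
    0 < ε ∧ Topology.IsEmbedding h ∧ p ∈ Set.range h ∧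
    ∀ x : Fin k → ℝ, ∀ y : Fin (n - k) → ℝ,
      h '' ({x} ×ˢ univ) = WsLoc f ε (h (x, y)) ∩ Set.range h ∧
      h '' (univ ×ˢ {y}) = WuLoc f ε (h (x, y)) ∩ Set.range h

/-!
No topologically hyperbolic periodic point is a sink or a source, since a connected compact space is
not a single stable manifold. Near a limit of topologically hyperbolic points, reading
`(a, b) ↦ Φu b - Φs a` in a chart for stable and unstable parametrizations gives essential maps, and
these show that such a point is never a limit of points of a different index. Hence the set `P` of
points of index `n - 1` and the set `Q` of points of smaller index avoid each other's closure. If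
both are nonempty, connectedness and density yield a point `x` in both closures.

Near `x`, the stable plaque of each `p ∈ P` has codimension one and separates a chart ball between
the two ends of an unstable arm through `p`. By pigeonhole and Baire category, a relatively open
piece of `closure P ∩ closure Q` moves along unstable arms into the plaque of a single `p ∈ P`, and
the plaques near it have all nearby points of `Q` on the same side. This motion is injective: two
points on one unstable set would be limits of pairs of disjoint plaques, one of which lies on the
`Q`-free side of the other. Its image has empty interior in the `(n - 1)`-dimensional plaque, as
intersections of the plaque with unstable arms of `P` accumulate at every point of it, while these
arms avoid `closure Q`. A compact set of that kind cannot separate the ball locally, whereas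
`closure P ∩ closure Q` separates `P` from `Q`. The statement on index one is the same theorem for
the inverse homeomorphism.
-/

namespace ExpansiveDynamics

open Filter Topology MeasureTheory

/-! ### Integrals of Jacobian determinants -/

section JacobianIntegral

variable {E : Type*} [NormedAddCommGroup E] [NormedSpace ℝ E]

variable [FiniteDimensional ℝ E]

theorem det_zero_continuousLinearMap [Nontrivial E] : (0 : E →L[ℝ] E).det = 0 := by
  simp [ContinuousLinearMap.det]

theorem det_id_add_pos_of_norm_lt_one {A : E →L[ℝ] E} (hA : ‖A‖ < 1) :
    0 < (ContinuousLinearMap.id ℝ E + A).det := by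
  have det_ne_zero : ∀ t ∈ Icc (0 : ℝ) 1, (ContinuousLinearMap.id ℝ E + t • A).det ≠ 0 := by
    intro t ht
    have norm_lt : ‖-(t • A)‖ < 1 := by
      rw [norm_neg, norm_smul, Real.norm_of_nonneg ht.1]
      exact (mul_le_of_le_one_left (norm_nonneg A) ht.2).trans_lt hA
    have unit := (isUnit_one_sub_of_norm_lt_one norm_lt).map
      (ContinuousLinearMap.toLinearMapRingHom (R₁ := ℝ) (M₁ := E))
    rw [sub_neg_eq_add] at unit
    exact (LinearMap.isUnit_iff_isUnit_det _).1 unit |>.ne_zero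
  have cont : Continuous fun t : ℝ => (ContinuousLinearMap.id ℝ E + t • A).det :=
    ContinuousLinearMap.continuous_det.comp (by fun_prop)
  by_contra! hneg
  obtain ⟨t, ht, hzero⟩ := intermediate_value_Icc' zero_le_one cont.continuousOn
    (show (0 : ℝ) ∈ Icc _ _ from ⟨by simpa using hneg, by simp [ContinuousLinearMap.det]⟩)
  exact det_ne_zero t ht hzero

theorem eval_charpoly_neg (A : E →L[ℝ] E) (t : ℝ) :
    (-(A : E →ₗ[ℝ] E)).charpoly.eval t = (t • ContinuousLinearMap.id ℝ E + A).det := by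
  rw [LinearMap.eval_charpoly, ContinuousLinearMap.det]
  congr 1
  ext x
  simp [Algebra.algebraMap_eq_smul_one]

theorem det_smul_continuousLinearMap (c : ℝ) (A : E →L[ℝ] E) :
    (c • A).det = c ^ Module.finrank ℝ E * A.det := by
  simp [ContinuousLinearMap.det]

theorem exists_weights_eval_zero {d : ℕ} {s : Fin (d + 1) → ℝ} (hs : Function.Injective s) :
    ∃ w : Fin (d + 1) → ℝ, ∀ p : Polynomial ℝ, p.natDegree ≤ d →
      p.eval 0 = ∑ i, w i * p.eval (s i) := by
  refine ⟨fun i => (Lagrange.basis Finset.univ s i).eval 0, fun p hp => ?_⟩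
  have hdeg : p.degree < (Finset.univ : Finset (Fin (d + 1))).card := by
    simpa using Polynomial.degree_le_of_natDegree_le hp |>.trans_lt
      (by exact_mod_cast Nat.lt_succ_self d)
  conv_lhs => rw [Lagrange.eq_interpolate (v := s) hs.injOn hdeg]
  simp [Lagrange.interpolate_apply, Polynomial.eval_finsetSum, mul_comm]

variable [MeasurableSpace E] [BorelSpace E] (μ : Measure E) [μ.IsAddHaarMeasure]

theorem setIntegral_det_id_add_fderiv {Ψ : E → E} (hΨ : Differentiable ℝ Ψ) {c : NNReal}
    (hc : c < 1) (hL : LipschitzWith c Ψ) {K : Set E} (hK : MeasurableSet K)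
    (hzero : ∀ x ∉ K, Ψ x = 0) :
    ∫ x in K, (ContinuousLinearMap.id ℝ E + fderiv ℝ Ψ x).det ∂μ = μ.real K := by
  let T : E → E := fun x => x + Ψ x
  have approx : ApproximatesLinearOn T
      (ContinuousLinearEquiv.refl ℝ E : E →L[ℝ] E) univ c := by
    rw [ApproximatesLinearOn.approximatesLinearOn_iff_lipschitzOnWith, lipschitzOnWith_univ]
    convert hL using 1
    funext x
    simp [T]
  have small : Subsingleton E ∨
      c < ‖((ContinuousLinearEquiv.refl ℝ E).symm : E →L[ℝ] E)‖₊⁻¹ := by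
    rcases subsingleton_or_nontrivial E with h | h
    · exact Or.inl h
    · exact Or.inr (by simpa using hc)
  have T_inj : Function.Injective T := injOn_univ.1 (approx.injOn small)
  have T_eq_self : ∀ x ∉ K, T x = x := fun x hx => by simp [T, hzero x hx]
  have T_image : T '' K = K := by
    apply Subset.antisymm
    · rintro _ ⟨x, hx, rfl⟩
      by_contra hTx
      rw [T_inj (T_eq_self _ hTx)] at hTx
      exact hTx hx
    · intro y hy
      obtain ⟨x, rfl⟩ := approx.surjective small y
      refine ⟨x, ?_, rfl⟩
      by_contra hx
      exact hx (T_eq_self x hx ▸ hy)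
  have change_of_variables := integral_image_eq_integral_abs_det_fderiv_smul μ hK
    (fun x _ => ((hasFDerivAt_id x).add (hΨ x).hasFDerivAt).hasFDerivWithinAt (s := K))
    T_inj.injOn (fun _ => (1 : ℝ))
  change ∫ _ in T '' K, (1 : ℝ) ∂μ = _ at change_of_variables
  rw [T_image] at change_of_variables
  simp only [integral_const, smul_eq_mul, mul_one, measureReal_restrict_apply_univ]
    at change_of_variables
  rw [change_of_variables]
  refine integral_congr_ae (Eventually.of_forall fun x => (abs_of_pos ?_).symm)
  exact det_id_add_pos_of_norm_lt_one
    ((norm_fderiv_le_of_lipschitz ℝ hL).trans_lt (by exact_mod_cast hc))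

theorem setIntegral_det_smul_id_add_fderiv {Ψ : E → E} (hΨ : Differentiable ℝ Ψ) {C : NNReal}
    (hL : LipschitzWith C Ψ) {K : Set E} (hK : MeasurableSet K) (hzero : ∀ x ∉ K, Ψ x = 0)
    {s : NNReal} (hs : C < s) :
    ∫ x in K, ((s : ℝ) • ContinuousLinearMap.id ℝ E + fderiv ℝ Ψ x).det ∂μ
      = s ^ Module.finrank ℝ E * μ.real K := by
  have hs_ne : s ≠ 0 := (pos_of_gt hs).ne'
  have small : ‖(s : ℝ)⁻¹‖₊ * C < 1 := by
    rwa [nnnorm_inv, NNReal.nnnorm_eq, inv_mul_lt_iff₀ (pos_of_gt hs), mul_one]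
  have unscaled := setIntegral_det_id_add_fderiv μ (Ψ := fun x => (s : ℝ)⁻¹ • Ψ x)
    (hΨ.const_smul _) small ((lipschitzWith_smul (s : ℝ)⁻¹).comp hL) hK
    (fun x hx => by simp [hzero x hx])
  rw [← unscaled, ← integral_const_mul]
  refine integral_congr_ae (Eventually.of_forall fun x => ?_)
  have factor : (s : ℝ) • ContinuousLinearMap.id ℝ E + fderiv ℝ Ψ x =
      (s : ℝ) • (ContinuousLinearMap.id ℝ E + fderiv ℝ (fun x => (s : ℝ)⁻¹ • Ψ x) x) := by
    rw [fderiv_fun_const_smul (hΨ x), smul_add, smul_smul,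
      mul_inv_cancel₀ (by exact_mod_cast hs_ne), one_smul]
  simp only [factor, det_smul_continuousLinearMap]

variable [Nontrivial E]

-- `∫ det (s • id + DΨ)` is a polynomial in `s` which equals `s ^ d * μ K` for large `s`, so it
-- vanishes at `s = 0`; interpolation at `d + 1` large values of `s` makes this precise.
theorem integral_det_fderiv_eq_zero {Ψ : E → E} (hΨ : ContDiff ℝ 1 Ψ)
    (hsupp : HasCompactSupport Ψ) : ∫ x, (fderiv ℝ Ψ x).det ∂μ = 0 := by
  obtain ⟨C, hC⟩ := hΨ.lipschitzWith_of_hasCompactSupport hsupp one_ne_zero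
  have hΨ' := hΨ.differentiable one_ne_zero
  set d := Module.finrank ℝ E
  set K := tsupport Ψ
  let s : Fin (d + 1) → NNReal := fun i => C + 1 + i
  have s_gt : ∀ i, C < s i := fun i => lt_add_of_lt_of_nonneg (lt_add_one C) zero_le
  have s_inj : Function.Injective fun i => (s i : ℝ) := fun i j hij =>
    Fin.ext (by simpa [s] using hij)
  obtain ⟨w, hw⟩ := exists_weights_eval_zero s_inj
  have det_eq_sum : ∀ A : E →L[ℝ] E,
      A.det = ∑ i, w i * ((s i : ℝ) • ContinuousLinearMap.id ℝ E + A).det := by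
    intro A
    simpa [eval_charpoly_neg] using hw (-(A : E →ₗ[ℝ] E)).charpoly
      (LinearMap.charpoly_natDegree _).le
  have sum_pow_eq_zero : ∑ i, w i * (s i : ℝ) ^ d = 0 := by
    simpa [Module.finrank_pos.ne', d] using (hw (Polynomial.X ^ d) (by simp)).symm
  have restrict_support : ∫ x, (fderiv ℝ Ψ x).det ∂μ = ∫ x in K, (fderiv ℝ Ψ x).det ∂μ := by
    refine (setIntegral_eq_integral_of_forall_compl_eq_zero fun x hx => ?_).symm
    rw [image_eq_zero_of_notMem_tsupport fun h => hx (tsupport_fderiv_subset ℝ h),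
      det_zero_continuousLinearMap]
  have integral_at : ∀ i, ∫ x in K, ((s i : ℝ) • ContinuousLinearMap.id ℝ E +
      fderiv ℝ Ψ x).det ∂μ = s i ^ d * μ.real K := fun i =>
    setIntegral_det_smul_id_add_fderiv μ hΨ' hC (isClosed_tsupport Ψ).measurableSet
      (fun x => image_eq_zero_of_notMem_tsupport) (s_gt i)
  rw [restrict_support]
  simp_rw [det_eq_sum (fderiv ℝ Ψ _)]
  rw [integral_finsetSum]
  · simp_rw [integral_const_mul, integral_at, ← mul_assoc]
    rw [← Finset.sum_mul, sum_pow_eq_zero, zero_mul]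
  · have cont := hΨ.continuous_fderiv one_ne_zero
    exact fun i _ => (continuous_const.mul (ContinuousLinearMap.continuous_det.comp
      (continuous_const.add cont))).continuousOn.integrableOn_compact hsupp

theorem integral_det_fderiv_sub_eq_zero {Φ Ψ : E → E} (hΦ : ContDiff ℝ 1 Φ) (hΨ : ContDiff ℝ 1 Ψ)
    {K : Set E} (hK : IsCompact K) (heq : ∀ x ∉ K, Φ x = Ψ x) :
    ∫ x, ((fderiv ℝ Φ x).det - (fderiv ℝ Ψ x).det) ∂μ = 0 := by
  obtain ⟨R, hR, hKR⟩ := hK.isBounded.subset_ball_lt 0 (0 : E)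
  let χ : ContDiffBump (0 : E) := ⟨R, R + 1, hR, by linarith⟩
  have cut_contDiff : ∀ {F : E → E}, ContDiff ℝ 1 F → ContDiff ℝ 1 fun x => χ x • F x :=
    fun hF => χ.contDiff.smul hF
  have cut_support : ∀ F : E → E, HasCompactSupport fun x => χ x • F x :=
    fun F => χ.hasCompactSupport.smul_right
  have cut_integrable : ∀ {F : E → E}, ContDiff ℝ 1 F →
      Integrable (fun x => (fderiv ℝ (fun x => χ x • F x) x).det) μ := fun hF =>
    (ContinuousLinearMap.continuous_det.comp ((cut_contDiff hF).continuous_fderiv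
      one_ne_zero)).integrable_of_hasCompactSupport
      (((cut_support _).fderiv ℝ).comp_left det_zero_continuousLinearMap)
  have integral_cut : ∫ x, ((fderiv ℝ (fun x => χ x • Φ x) x).det -
      (fderiv ℝ (fun x => χ x • Ψ x) x).det) ∂μ = 0 := by
    rw [integral_sub (cut_integrable hΦ) (cut_integrable hΨ),
      integral_det_fderiv_eq_zero μ (cut_contDiff hΦ) (cut_support Φ),
      integral_det_fderiv_eq_zero μ (cut_contDiff hΨ) (cut_support Ψ), sub_zero]
  rw [← integral_cut]
  congr 1 with x
  by_cases hx : x ∈ K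
  · have fderiv_cut : ∀ F : E → E, fderiv ℝ (fun x => χ x • F x) x = fderiv ℝ F x := fun F =>
      EventuallyEq.fderiv_eq <| by
        filter_upwards [χ.eventuallyEq_one_of_mem_ball (hKR hx)] with y hy
        simp [hy]
    rw [fderiv_cut, fderiv_cut]
  · have eq_near : Φ =ᶠ[𝓝 x] Ψ := eventually_of_mem (hK.isClosed.isOpen_compl.mem_nhds hx) heq
    have cut_eq_near : (fun x => χ x • Φ x) =ᶠ[𝓝 x] fun x => χ x • Ψ x :=
      eq_near.mono fun y hy => by simp only [hy]
    rw [eq_near.fderiv_eq, cut_eq_near.fderiv_eq, sub_self, sub_self]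

end JacobianIntegral

/-! ### Squashing maps -/

section Squashing

theorem exists_contDiff_hasDerivAt {b : ℝ → ℝ} (hb : Continuous b) :
    ∃ g : ℝ → ℝ, ContDiff ℝ 1 g ∧ ∀ t, HasDerivAt g (b t) t := by
  have deriv_integral : ∀ t, HasDerivAt (fun t => ∫ s in (0 : ℝ)..t, b s) (b t) t :=
    fun t => hb.integral_hasStrictDerivAt 0 t |>.hasDerivAt
  refine ⟨_, contDiff_one_iff_deriv.2 ⟨fun t => (deriv_integral t).differentiableAt, ?_⟩,
    deriv_integral⟩
  rwa [funext fun t => (deriv_integral t).deriv]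

theorem det_fderiv_pi_map {ι : Type*} [Fintype ι] {g g' : ℝ → ℝ}
    (hg : ∀ t, HasDerivAt g (g' t) t) (y : ι → ℝ) :
    (fderiv ℝ (fun (y : ι → ℝ) i => g (y i)) y).det = ∏ i, g' (y i) := by
  have deriv_eq : HasFDerivAt (fun (y : ι → ℝ) i => g (y i))
      (ContinuousLinearMap.pi fun i => (ContinuousLinearMap.toSpanSingleton ℝ (g' (y i))).comp
        (ContinuousLinearMap.proj i)) y :=
    hasFDerivAt_pi.2 fun i =>
      (hg (y i)).hasFDerivAt.comp y (hasFDerivAt_apply i y)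
  rw [deriv_eq.fderiv, ContinuousLinearMap.det_pi]
  simp [ContinuousLinearMap.det, LinearMap.det_ring]

theorem exists_contDiff_pi_det_fderiv_nonneg {ι : Type*} [Fintype ι] {ε : ℝ} (hε : 0 < ε) :
    ∃ Θ : (ι → ℝ) → ι → ℝ, ContDiff ℝ 1 Θ ∧ (∀ y, 0 ≤ (fderiv ℝ Θ y).det) ∧
      (∀ y, ε ≤ ‖y‖ → (fderiv ℝ Θ y).det = 0) ∧ (fderiv ℝ Θ 0).det ≠ 0 := by
  let b : ContDiffBump (0 : ℝ) := ⟨ε / 2, ε, half_pos hε, half_lt_self hε⟩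
  obtain ⟨g, hg, hg'⟩ := exists_contDiff_hasDerivAt b.continuous
  refine ⟨fun y i => g (y i), contDiff_pi.2 fun i => hg.comp (contDiff_apply ℝ ℝ i), ?_, ?_, ?_⟩
  · intro y
    rw [det_fderiv_pi_map hg']
    exact Finset.prod_nonneg fun i _ => b.nonneg
  · intro y hy
    obtain ⟨i, hi⟩ : ∃ i, ε ≤ ‖y i‖ := by
      by_contra! h
      exact ((pi_norm_lt_iff hε).2 h).not_ge hy
    rw [det_fderiv_pi_map hg']
    exact Finset.prod_eq_zero (Finset.mem_univ i) (b.zero_of_le_dist (by simpa using hi))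
  · rw [det_fderiv_pi_map hg']
    simp [b.one_of_mem_closedBall (mem_closedBall_self b.rIn_pos.le)]

variable {E : Type*} [NormedAddCommGroup E] [NormedSpace ℝ E] [FiniteDimensional ℝ E]
  [MeasurableSpace E] [BorelSpace E] (μ : Measure E) [μ.IsAddHaarMeasure]

theorem exists_contDiff_integral_det_fderiv_pos {ε : ℝ} (hε : 0 < ε) :
    ∃ Θ : E → E, ContDiff ℝ 1 Θ ∧ (∀ y, ε ≤ ‖y‖ → (fderiv ℝ Θ y).det = 0) ∧
      0 < ∫ y, (fderiv ℝ Θ y).det ∂μ := by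
  let A : E ≃L[ℝ] (Fin (Module.finrank ℝ E) → ℝ) :=
    ContinuousLinearEquiv.ofFinrankEq (by simp)
  obtain ⟨C, hC, hA⟩ : ∃ C > 0, ∀ y, ‖y‖ ≤ C * ‖A y‖ := by
    obtain ⟨C, hC, hbound⟩ := (A.symm : (Fin (Module.finrank ℝ E) → ℝ) →L[ℝ] E).bound
    exact ⟨C, hC, fun y => by simpa using hbound (A y)⟩
  obtain ⟨Θ, hΘ, hnonneg, hfar, hzero⟩ :=
    exists_contDiff_pi_det_fderiv_nonneg (ι := Fin (Module.finrank ℝ E)) (div_pos hε hC)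
  have contDiff_conj : ContDiff ℝ 1 fun y => A.symm (Θ (A y)) :=
    A.symm.contDiff.comp (hΘ.comp A.contDiff)
  have det_conj : ∀ y, (fderiv ℝ (fun y => A.symm (Θ (A y))) y).det = (fderiv ℝ Θ (A y)).det := by
    intro y
    have deriv_conj : HasFDerivAt (fun y => A.symm (Θ (A y))) _ y := A.symm.hasFDerivAt.comp y
      ((hΘ.differentiable one_ne_zero (A y)).hasFDerivAt.comp y A.hasFDerivAt)
    rw [deriv_conj.fderiv]
    exact LinearMap.det_conj (fderiv ℝ Θ (A y)).toLinearMap A.symm.toLinearEquiv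
  have far_conj : ∀ y, ε ≤ ‖y‖ → (fderiv ℝ (fun y => A.symm (Θ (A y))) y).det = 0 := by
    intro y hy
    rw [det_conj, hfar _ ((div_le_iff₀' hC).2 (hy.trans (hA y)))]
  refine ⟨_, contDiff_conj, far_conj, ?_⟩
  refine Continuous.integral_pos_of_hasCompactSupport_nonneg_nonzero (x := 0)
    (ContinuousLinearMap.continuous_det.comp (contDiff_conj.continuous_fderiv one_ne_zero))
    (HasCompactSupport.intro (isCompact_closedBall 0 ε) fun y hy => far_conj y ?_)
    (fun y => (det_conj y).symm ▸ hnonneg _) (by simpa [det_conj] using hzero)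
  simpa using (not_le.1 (mem_closedBall_zero_iff.not.1 hy)).le

end Squashing

/-! ### Essential maps -/

section DegreeCore

variable {E : Type*} [NormedAddCommGroup E] [NormedSpace ℝ E] [FiniteDimensional ℝ E]

-- If `Θ` squashes the complement of a small ball, then `det D(Θ ∘ G)` vanishes identically on `K`
-- while `det D(Θ ∘ F)` is that of a translate of `Θ` there; the integrals of these two Jacobians
-- agree.
theorem exists_norm_lt_of_contDiff {F G : E → E} (hF : ContDiff ℝ 1 F) (hG : ContDiff ℝ 1 G)
    {K : Set E} (hK : IsCompact K) (hFG : ∀ x ∉ K, G x = F x) {ρ c : ℝ} (hρ : 0 < ρ)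
    (hc : 0 < c) {p : E} (hρK : ball p ρ ⊆ K) (hid : ∀ x ∈ ball p ρ, F x = x - p)
    (hFc : ∀ x ∈ K, ρ ≤ ‖x - p‖ → c ≤ ‖F x‖) :
    ∃ x ∈ K, ‖G x‖ < c := by
  rcases subsingleton_or_nontrivial E with hE | hE
  · exact ⟨p, hρK (mem_ball_self hρ), by rwa [Subsingleton.elim (G p) 0, norm_zero]⟩
  by_contra! hGc
  borelize E
  obtain ⟨Θ, hΘ, hfar, hpos⟩ :=
    exists_contDiff_integral_det_fderiv_pos (E := E) (Measure.addHaar) (lt_min hc hρ)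
  have det_comp_eq_zero : ∀ {Φ : E → E} {x : E}, ContDiff ℝ 1 Φ → c ≤ ‖Φ x‖ →
      (fderiv ℝ (Θ ∘ Φ) x).det = 0 := by
    intro Φ x hΦ hx
    rw [fderiv_comp x (hΘ.differentiable one_ne_zero _) (hΦ.differentiable one_ne_zero x)]
    exact (LinearMap.det_comp _ _).trans
      (mul_eq_zero_of_left (hfar _ ((min_le_left c ρ).trans hx)) _)
  have det_eq_zero : ∀ x, ρ ≤ ‖x - p‖ → (fderiv ℝ Θ (x - p)).det = 0 := fun x hx =>
    hfar _ ((min_le_right c ρ).trans hx)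
  have det_diff : ∀ x, (fderiv ℝ (Θ ∘ F) x).det - (fderiv ℝ (Θ ∘ G) x).det =
      (fderiv ℝ Θ (x - p)).det := by
    intro x
    rcases lt_or_ge ‖x - p‖ ρ with hx | hx
    · have hxρ : x ∈ ball p ρ := mem_ball_iff_norm.2 hx
      have eq_near : Θ ∘ F =ᶠ[𝓝 x] fun y => Θ (y - p) := by
        filter_upwards [isOpen_ball.mem_nhds hxρ] with y hy using congrArg Θ (hid y hy)
      rw [eq_near.fderiv_eq, fderiv_comp_sub, det_comp_eq_zero hG (hGc x (hρK hxρ)), sub_zero]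
    rw [det_eq_zero x hx, sub_eq_zero]
    by_cases hxK : x ∈ K
    · rw [det_comp_eq_zero hF (hFc x hxK hx), det_comp_eq_zero hG (hGc x hxK)]
    · have eq_near : Θ ∘ F =ᶠ[𝓝 x] Θ ∘ G := by
        filter_upwards [hK.isClosed.isOpen_compl.mem_nhds hxK] with y hy
        exact congrArg Θ (hFG y hy).symm
      rw [eq_near.fderiv_eq]
  refine hpos.ne' ?_
  rw [← integral_sub_right_eq_self _ p]
  simp_rw [← det_diff]
  exact integral_det_fderiv_sub_eq_zero _ (hΘ.comp hF) (hΘ.comp hG) hK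
    fun x hx => congrArg Θ (hFG x hx).symm

theorem exists_contDiff_pair_near {F G : E → E} (hF : Continuous F) (hG : Continuous G)
    {S U : Set E} (hS : IsClosed S) (hU : U ∈ 𝓝ˢ S) (hFU : ContDiffOn ℝ 1 F U) {c : ℝ}
    (hc : 0 < c) : ∃ F' G' : E → E, ContDiff ℝ 1 F' ∧ ContDiff ℝ 1 G' ∧ EqOn F' F S ∧
      (∀ x, G x = F x → G' x = F' x) ∧ (∀ x, ‖F' x - F x‖ < c) ∧ ∀ x, ‖G' x - G x‖ < c := by
  have hc2 : ∀ _ : E, 0 < c / 2 := fun _ => half_pos hc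
  obtain ⟨F', hF', F_near, F_eq, -⟩ :=
    hF.exists_contDiff_approx_and_eqOn 1 continuous_const hc2 hS hU hFU
  obtain ⟨D, hD, D_near, D_supp⟩ :=
    (hG.sub hF).exists_contDiff_approx 1 continuous_const hc2
  simp_rw [dist_eq_norm] at F_near D_near
  refine ⟨F', F' + D, hF', hF'.add hD, F_eq, fun x hx => ?_,
    fun x => (F_near x).trans (half_lt_self hc), fun x => ?_⟩
  · have : D x = 0 := Function.notMem_support.1 fun h => D_supp h (by simp [hx])
    simp [this]
  · calc ‖(F' + D) x - G x‖ = ‖(F' x - F x) + (D x - (G - F) x)‖ := by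
          congr 1
          simp only [Pi.add_apply, Pi.sub_apply]
          abel
      _ ≤ ‖F' x - F x‖ + ‖D x - (G - F) x‖ := norm_add_le _ _
      _ < c / 2 + c / 2 := add_lt_add (F_near x) (D_near x)
      _ = c := add_halves c

theorem exists_zero_of_eventuallyEq_sub {F G : E → E} (hF : Continuous F) (hG : Continuous G)
    {Ω : Set E} (hΩ : IsOpen Ω) (hb : Bornology.IsBounded Ω) {p : E} (hp : p ∈ Ω)
    (hFG : ∀ x ∉ Ω, G x = F x) (hF0 : ∀ x ∈ closure Ω, F x = 0 → x = p)
    (hid : ∀ᶠ x in 𝓝 p, F x = x - p) : ∃ x ∈ closure Ω, G x = 0 := by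
  by_contra! hG0
  obtain ⟨r, hr, hball⟩ := Metric.eventually_nhds_iff_ball.1 (hid.and (hΩ.mem_nhds hp))
  obtain ⟨ρ, hρ, hρr⟩ := exists_between hr
  have low_pos : ∀ x ∈ closure Ω, 0 < min ‖G x‖ (max ‖F x‖ (ρ - ‖x - p‖)) := by
    intro x hx
    refine lt_min (norm_pos_iff.2 (hG0 x hx)) (lt_max_iff.2 ?_)
    by_cases hxp : x = p
    · exact Or.inr (by simpa [hxp] using hρ)
    · exact Or.inl (norm_pos_iff.2 fun h => hxp (hF0 x hx h))
  obtain ⟨c, hc, hlow⟩ := hb.isCompact_closure.exists_forall_le'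
    (Continuous.continuousOn (by fun_prop)) low_pos
  have G_low : ∀ x ∈ closure Ω, c ≤ ‖G x‖ := fun x hx => (le_min_iff.1 (hlow x hx)).1
  have F_low : ∀ x ∈ closure Ω, ρ ≤ ‖x - p‖ → c ≤ ‖F x‖ := fun x hx hxρ =>
    (le_max_iff.1 (le_min_iff.1 (hlow x hx)).2).resolve_right (by linarith)
  obtain ⟨F', G', hF', hG', F_eq, G_eq, F_near, G_near⟩ := exists_contDiff_pair_near hF hG
    (isClosed_closedBall (x := p) (ε := ρ)) (isOpen_ball.mem_nhdsSet.2 (closedBall_subset_ball hρr))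
    ((contDiff_id.sub contDiff_const).contDiffOn.congr fun x hx => (hball x hx).1) (half_pos hc)
  obtain ⟨x, hx, hx_lt⟩ := exists_norm_lt_of_contDiff hF' hG' hb.isCompact_closure
    (fun x hx => G_eq x (hFG x fun h => hx (subset_closure h))) hρ (half_pos hc)
    (fun x hx => subset_closure (hball x (ball_subset_ball hρr.le hx)).2)
    (fun x hx => (F_eq (ball_subset_closedBall hx)).trans
      (hball x (ball_subset_ball hρr.le hx)).1)
    (fun x hx hxρ => by
      linarith [F_low x hx hxρ, F_near x, norm_sub_norm_le (F x) (F' x),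
        norm_sub_rev (F x) (F' x)])
  linarith [G_low x hx, G_near x, norm_sub_norm_le (G x) (G' x), norm_sub_rev (G x) (G' x)]

end DegreeCore

theorem exists_continuous_eqOn {X Y : Type*} [TopologicalSpace X] [NormalSpace X]
    [NormedAddCommGroup Y] [NormedSpace ℝ Y] [FiniteDimensional ℝ Y] {f : X → Y} {s : Set X}
    (hs : IsClosed s) (hf : ContinuousOn f s) : ∃ g : X → Y, Continuous g ∧ EqOn g f s := by
  have : TietzeExtension Y := RCLike.instTietzeExtensionTVS (𝕜 := ℝ)
  obtain ⟨g, hg⟩ := ContinuousMap.exists_restrict_eq hs ⟨s.domRestrict f, hf.domRestrict⟩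
  exact ⟨g, g.continuous, fun x hx => congrArg (fun k => k ⟨x, hx⟩) hg⟩

section Essential

variable {X Y : Type*}

/-- An essential map in the sense of Granas, a substitute for nonvanishing Brouwer degree: every map
on `closure Ω` with the boundary values of `F` has a zero. -/
def IsEssential [TopologicalSpace X] [TopologicalSpace Y] [Zero Y] (F : X → Y) (Ω : Set X) :
    Prop :=
  ∀ G : X → Y, ContinuousOn G (closure Ω) → EqOn G F (frontier Ω) → ∃ x ∈ closure Ω, G x = 0

theorem IsEssential.congr [TopologicalSpace X] [TopologicalSpace Y] [Zero Y] {F G : X → Y}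
    {Ω : Set X} (hF : IsEssential F Ω) (h : EqOn F G (frontier Ω)) :
    IsEssential G Ω :=
  fun _ hG' hG'G => hF _ hG' (hG'G.trans h.symm)

theorem IsEssential.of_homotopy [TopologicalSpace X] [T4Space X] [NormedAddCommGroup Y]
    [NormedSpace ℝ Y] {F G : X → Y} {Ω : Set X} (hF : IsEssential F Ω)
    (hK : IsCompact (closure Ω)) {H : X × ℝ → Y} (hH : ContinuousOn H (closure Ω ×ˢ Icc 0 1))
    (hHF : ∀ x ∈ frontier Ω, H (x, 0) = F x) (hHG : ∀ x ∈ frontier Ω, H (x, 1) = G x)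
    (hH0 : ∀ x ∈ frontier Ω, ∀ t ∈ Icc (0 : ℝ) 1, H (x, t) ≠ 0) : IsEssential G Ω := by
  intro G' hG' hG'G
  let K : X × ℝ → Y := fun z => H z + z.2 • (G' z.1 - H (z.1, 1))
  have K_cont : ContinuousOn K (closure Ω ×ˢ Icc 0 1) := by
    refine hH.add (continuousOn_snd.smul (.sub ?_ ?_))
    · exact hG'.comp continuousOn_fst fun z hz => hz.1
    · exact hH.comp (by fun_prop) fun z hz => ⟨hz.1, by simp⟩
  have K_frontier : ∀ x ∈ frontier Ω, ∀ t, K (x, t) = H (x, t) := fun x hx t => by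
    simp [K, hHG x hx, hG'G hx]
  let Z : Set X := Prod.fst '' ((closure Ω ×ˢ Icc (0 : ℝ) 1) ∩ K ⁻¹' {0})
  have Z_closed : IsClosed Z := by
    have hKI := hK.prod (isCompact_Icc (a := (0 : ℝ)) (b := 1))
    exact ((hKI.of_isClosed_subset (K_cont.preimage_isClosed_of_isClosed hKI.isClosed
      isClosed_singleton) inter_subset_left).image continuous_fst).isClosed
  have Z_disjoint : Disjoint (frontier Ω) Z := by
    rw [Set.disjoint_left]
    rintro _ hx ⟨⟨x, t⟩, ⟨⟨-, ht⟩, hz⟩, rfl⟩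
    exact hH0 x hx t ht ((K_frontier x hx t).symm.trans hz)
  obtain ⟨τ, τ_zero, τ_one, τ_mem⟩ :=
    exists_continuous_zero_one_of_isClosed isClosed_frontier Z_closed Z_disjoint
  obtain ⟨x, hx, hzero⟩ := hF (fun x => K (x, τ x))
    (K_cont.comp (by fun_prop) fun x hx => ⟨hx, τ_mem x⟩)
    (fun x hx => by simp [K_frontier x hx, τ_zero hx, hHF x hx])
  have τx : τ x = 1 := τ_one ⟨(x, τ x), ⟨⟨hx, τ_mem x⟩, hzero⟩, rfl⟩
  exact ⟨x, hx, by simpa [K, τx] using hzero⟩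

theorem exists_radial_retraction [NormedAddCommGroup Y] [NormedSpace ℝ Y] {ε : ℝ} (hε : 0 < ε) :
    ∃ ρ : Y → Y, Continuous ρ ∧ (∀ y, ‖ρ y‖ ≤ ε) ∧ (∀ y, ‖y‖ ≤ ε → ρ y = y) ∧
      ∀ y, ρ y = 0 → y = 0 := by
  have max_pos : ∀ y : Y, 0 < max ε ‖y‖ := fun y => lt_max_of_lt_left hε
  refine ⟨fun y => (ε / max ε ‖y‖) • y, ?_, fun y => ?_, fun y hy => ?_, fun y hy => ?_⟩
  · exact (continuous_const.div (by fun_prop) fun y => (max_pos y).ne').smul continuous_id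
  · rw [norm_smul, Real.norm_of_nonneg (div_pos hε (max_pos y)).le, div_mul_eq_mul_div,
      div_le_iff₀ (max_pos y)]
    exact mul_le_mul_of_nonneg_left (le_max_right _ _) hε.le
  · simp [max_eq_left hy, hε.ne']
  · exact (smul_eq_zero.1 hy).resolve_left (div_pos hε (max_pos y)).ne'


variable [NormedAddCommGroup X] [NormedSpace ℝ X] [FiniteDimensional ℝ X] {Ω : Set X} {p : X}

theorem isEssential_of_eventuallyEq_sub {F : X → X} (hΩ : IsOpen Ω)
    (hb : Bornology.IsBounded Ω) (hp : p ∈ Ω) (hF : ContinuousOn F (closure Ω))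
    (hF0 : ∀ x ∈ closure Ω, F x = 0 → x = p) (hid : ∀ᶠ x in 𝓝 p, F x = x - p) :
    IsEssential F Ω := by
  classical
  intro G hG hGF
  obtain ⟨F', hF', F'_eq⟩ := exists_continuous_eqOn isClosed_closure hF
  have G_eq : ∀ x ∈ closure Ω, x ∉ Ω → G x = F' x := fun x hx hxΩ => by
    rw [F'_eq hx, hGF (hΩ.frontier_eq ▸ ⟨hx, hxΩ⟩)]
  have glued_continuous : Continuous ((closure Ω).piecewise G F') := by
    refine continuous_piecewise (fun x hx => ?_) (by rwa [closure_closure]) hF'.continuousOn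
    have hx' := frontier_closure_subset hx
    rw [hΩ.frontier_eq] at hx'
    exact G_eq x hx'.1 hx'.2
  obtain ⟨x, hx, hzero⟩ := exists_zero_of_eventuallyEq_sub hF' glued_continuous hΩ hb hp
    (fun x hxΩ => by
      by_cases hx : x ∈ closure Ω
      · rw [piecewise_eq_of_mem _ _ _ hx, G_eq x hx hxΩ]
      · rw [piecewise_eq_of_notMem _ _ _ hx])
    (fun x hx h => hF0 x hx (F'_eq hx ▸ h))
    (by
      filter_upwards [hid, hΩ.mem_nhds hp] with x hx hxΩ
      rw [F'_eq (subset_closure hxΩ), hx])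
  exact ⟨x, hx, by rwa [piecewise_eq_of_mem _ _ _ hx] at hzero⟩

theorem isEssential_of_eventuallyEq_openPartialHomeomorph [NormedAddCommGroup Y]
    [NormedSpace ℝ Y] {F : X → Y} (hΩ : IsOpen Ω) (hb : Bornology.IsBounded Ω) (hp : p ∈ Ω)
    (hF : ContinuousOn F (closure Ω))
    (hF0 : ∀ x ∈ closure Ω, F x = 0 → x = p) {e : OpenPartialHomeomorph X Y}
    (hpe : p ∈ e.source) (he0 : e p = 0) (hFe : ∀ᶠ x in 𝓝 p, F x = e x) : IsEssential F Ω := by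
  have zero_mem : (0 : Y) ∈ e.target := he0 ▸ e.map_source hpe
  obtain ⟨ε, hε, hεt⟩ := nhds_basis_closedBall.mem_iff.1 (e.open_target.mem_nhds zero_mem)
  obtain ⟨ρ, hρ, hρε, hρ_id, hρ0⟩ := exists_radial_retraction (Y := Y) hε
  have ρ_mem : ∀ y, ρ y ∈ e.target := fun y => hεt (mem_closedBall_zero_iff.2 (hρε y))
  let τ : Y → X := fun y => e.symm (ρ y) - p
  have hτ : Continuous τ := (e.continuousOn_symm.comp_continuous hρ ρ_mem).sub continuous_const
  have τ_eq_zero : ∀ y, τ y = 0 → y = 0 := fun y hy =>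
    hρ0 y (by rw [← e.right_inv (ρ_mem y), sub_eq_zero.1 hy, he0])
  have τF_near : ∀ᶠ x in 𝓝 p, τ (F x) = x - p := by
    have small : ∀ᶠ x in 𝓝 p, ‖e x‖ ≤ ε := 
      (e.continuousAt hpe).norm.eventually_le_const (by simpa [he0] using hε)
    filter_upwards [hFe, small, e.open_source.mem_nhds hpe] with x hx hxε hxs
    simp [τ, hx, hρ_id _ hxε, e.left_inv hxs]
  intro G hG hGF
  obtain ⟨x, hx, hzero⟩ := isEssential_of_eventuallyEq_sub hΩ hb hp (hτ.comp_continuousOn hF)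
    (fun x hx h => hF0 x hx (τ_eq_zero _ h)) τF_near (τ ∘ G) (hτ.comp_continuousOn hG)
    (fun x hx => congrArg τ (hGF hx))
  exact ⟨x, hx, τ_eq_zero _ hzero⟩

end Essential

section Cutoff

theorem exists_continuous_cutoff {E : Type*} [NormedAddCommGroup E] {a b : ℝ} (hab : a < b) :
    ∃ μ : E → ℝ, Continuous μ ∧ (∀ v, μ v ∈ Icc (0 : ℝ) 1) ∧ (∀ v, ‖v‖ ≤ a → μ v = 1) ∧
      ∀ v, b ≤ ‖v‖ → μ v = 0 := by
  have hab' : 0 < b - a := sub_pos.2 hab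
  refine ⟨fun v => max 0 (min 1 ((b - ‖v‖) / (b - a))), by fun_prop, fun v => ?_, fun v hv => ?_,
    fun v hv => ?_⟩
  · exact ⟨le_max_left _ _, max_le zero_le_one (min_le_left _ _)⟩
  · have h : 1 ≤ (b - ‖v‖) / (b - a) := (one_le_div hab').2 (by linarith)
    simp only [min_eq_left h, max_eq_right zero_le_one]
  · exact max_eq_left ((min_le_right _ _).trans
      (div_nonpos_of_nonpos_of_nonneg (by linarith) hab'.le))

theorem norm_smul_le_of_mem_Icc {E : Type*} [NormedAddCommGroup E] [NormedSpace ℝ E] {t : ℝ}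
    (ht : t ∈ Icc (0 : ℝ) 1) (v : E) : ‖t • v‖ ≤ ‖v‖ := by
  rw [norm_smul, Real.norm_of_nonneg ht.1]
  exact mul_le_of_le_one_left (norm_nonneg v) ht.2

open Classical in
theorem continuousOn_piecewise_of_eqOn_diff {X Y : Type*} [TopologicalSpace X]
    [TopologicalSpace Y] {U K s : Set X} {f g : X → Y} (hU : IsOpen U) (hK : IsClosed K)
    (hKU : K ⊆ U) (hf : ContinuousOn f U) (hg : ContinuousOn g s) (hfg : EqOn f g (U \ K)) :
    ContinuousOn (U.piecewise f g) s := by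
  intro x hx
  by_cases hxU : x ∈ U
  · refine ((hf.continuousAt (hU.mem_nhds hxU)).congr ?_).continuousWithinAt
    filter_upwards [hU.mem_nhds hxU] with y hy using (piecewise_eq_of_mem _ _ _ hy).symm
  · have eq_off : ∀ y ∉ K, U.piecewise f g y = g y := fun y hyK => by
      by_cases hyU : y ∈ U
      · rw [piecewise_eq_of_mem _ _ _ hyU, hfg ⟨hyU, hyK⟩]
      · exact piecewise_eq_of_notMem _ _ _ hyU
    have hxK : x ∉ K := fun h => hxU (hKU h)
    refine (hg x hx).congr_of_eventuallyEq ?_ (eq_off x hxK)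
    filter_upwards [mem_nhdsWithin_of_mem_nhds (hK.isOpen_compl.mem_nhds hxK)] with y hy
    exact eq_off y hy

end Cutoff

section Split

variable {S U Y : Type*} [NormedAddCommGroup S] [NormedSpace ℝ S] [NormedAddCommGroup U]
  [NormedAddCommGroup Y] {F : S × U → Y} {Ω : Set (S × U)}

/-- The pair of points of `S × U` at which a chart is compared: it interpolates between
`((0, u), (s, 0))` for `t = 0` and `((-s, u), (0, 0))` for `t = 1`. -/
def splitPoints (t : ℝ) (x : S × U) : (S × U) × (S × U) :=
  ((-(t • x.1), x.2), ((1 - t) • x.1, 0))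

theorem norm_splitPoints_fst_le {t : ℝ} (ht : t ∈ Icc (0 : ℝ) 1) (x : S × U) :
    ‖(splitPoints t x).1‖ ≤ ‖x‖ :=
  max_le_max ((norm_neg _).trans_le (norm_smul_le_of_mem_Icc ht x.1)) le_rfl

theorem norm_splitPoints_snd_le {t : ℝ} (ht : t ∈ Icc (0 : ℝ) 1) (x : S × U) :
    ‖(splitPoints t x).2‖ ≤ ‖x‖ := by
  have ht' : 1 - t ∈ Icc (0 : ℝ) 1 := ⟨sub_nonneg.2 ht.2, sub_le_self 1 ht.1⟩
  exact max_le ((norm_smul_le_of_mem_Icc ht' x.1).trans (norm_fst_le x))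
    (norm_zero.trans_le (norm_nonneg x))

theorem eq_zero_of_splitPoints_eq {t : ℝ} {x : S × U}
    (h : (splitPoints t x).1 = (splitPoints t x).2) : x = 0 := by
  obtain ⟨h₁, h₂⟩ := Prod.ext_iff.1 h
  refine Prod.ext ?_ h₂
  simpa [splitPoints, sub_smul, eq_sub_iff_add_eq] using h₁.symm

theorem exists_deformation_of_split {ψ : OpenPartialHomeomorph (S × U) Y} (hΩ : IsOpen Ω)
    (h0 : 0 ∈ Ω) (hF : ContinuousOn F (closure Ω)) (hF0 : ∀ x ∈ closure Ω, F x = 0 → x = 0)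
    (hψ0 : 0 ∈ ψ.source) (hid : ∀ᶠ x in 𝓝 0, F x = ψ (0, x.2) - ψ (x.1, 0)) :
    ∃ F' : S × U → Y, ContinuousOn F' (closure Ω) ∧ EqOn F' F (frontier Ω) ∧
      (∀ x ∈ closure Ω, F' x = 0 → x = 0) ∧ ∀ᶠ x in 𝓝 0, F' x = ψ (-x.1, x.2) - ψ 0 := by
  classical
  obtain ⟨ρ, hρ, hball⟩ : ∃ ρ > 0, ∀ x : S × U, ‖x‖ < ρ →
      F x = ψ (0, x.2) - ψ (x.1, 0) ∧ x ∈ ψ.source ∧ x ∈ Ω := by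
    simpa only [dist_zero_right] using Metric.eventually_nhds_iff.1
      (hid.and ((ψ.open_source.eventually_mem hψ0).and (hΩ.eventually_mem h0)))
  obtain ⟨τ, hτ, τ_mem, τ_one, τ_zero⟩ := exists_continuous_cutoff (E := S × U)
    (show ρ / 3 < 2 * ρ / 3 by linarith)
  let P := fun x => (splitPoints (τ x) x).1
  let Q := fun x => (splitPoints (τ x) x).2
  have P_mem : ∀ x ∈ ball 0 ρ, P x ∈ ψ.source := fun x hx =>
    (hball _ ((norm_splitPoints_fst_le (τ_mem x) x).trans_lt (mem_ball_zero_iff.1 hx))).2.1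
  have Q_mem : ∀ x ∈ ball 0 ρ, Q x ∈ ψ.source := fun x hx =>
    (hball _ ((norm_splitPoints_snd_le (τ_mem x) x).trans_lt (mem_ball_zero_iff.1 hx))).2.1
  have hP : Continuous P := by unfold P splitPoints; fun_prop
  have hQ : Continuous Q := by unfold Q splitPoints; fun_prop
  refine ⟨(ball 0 ρ).piecewise (fun x => ψ (P x) - ψ (Q x)) F, ?_, fun x hx => ?_,
    fun x hx hzero => ?_, ?_⟩
  · refine continuousOn_piecewise_of_eqOn_diff isOpen_ball
      (isClosed_closedBall (x := 0) (ε := 2 * ρ / 3)) (closedBall_subset_ball (by linarith))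
      ((ψ.continuousOn.comp hP.continuousOn P_mem).sub
        (ψ.continuousOn.comp hQ.continuousOn Q_mem)) hF fun x hx => ?_
    have hτx : τ x = 0 := τ_zero x (by simpa using (not_le.1 fun h => hx.2 (by simpa using h)).le)
    simp [P, Q, splitPoints, hτx, (hball x (mem_ball_zero_iff.1 hx.1)).1]
  · rw [hΩ.frontier_eq] at hx
    exact piecewise_eq_of_notMem _ _ _ fun h => hx.2 (hball x (mem_ball_zero_iff.1 h)).2.2
  · by_cases hxρ : x ∈ ball 0 ρ
    · rw [piecewise_eq_of_mem _ _ _ hxρ, sub_eq_zero] at hzero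
      exact eq_zero_of_splitPoints_eq (ψ.injOn (P_mem x hxρ) (Q_mem x hxρ) hzero)
    · exact hF0 x hx (by rwa [piecewise_eq_of_notMem _ _ _ hxρ] at hzero)
  · filter_upwards [ball_mem_nhds 0 (show 0 < ρ / 3 by positivity)] with x hx
    rw [mem_ball_zero_iff] at hx
    rw [piecewise_eq_of_mem _ _ _ (mem_ball_zero_iff.2 (by linarith))]
    simp [P, Q, splitPoints, τ_one x hx.le, Prod.zero_eq_mk]

theorem isEssential_of_eventuallyEq_split [FiniteDimensional ℝ S] [NormedSpace ℝ U]
    [FiniteDimensional ℝ U] [NormedSpace ℝ Y] {ψ : OpenPartialHomeomorph (S × U) Y}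
    (hΩ : IsOpen Ω) (hb : Bornology.IsBounded Ω) (h0 : 0 ∈ Ω) (hF : ContinuousOn F (closure Ω))
    (hF0 : ∀ x ∈ closure Ω, F x = 0 → x = 0) (hψ0 : 0 ∈ ψ.source)
    (hid : ∀ᶠ x in 𝓝 0, F x = ψ (0, x.2) - ψ (x.1, 0)) : IsEssential F Ω := by
  obtain ⟨F', hF', hF'F, hF'0, F'_near⟩ := exists_deformation_of_split hΩ h0 hF hF0 hψ0 hid
  let e : OpenPartialHomeomorph (S × U) Y :=
    (((Homeomorph.neg S).prodCongr (Homeomorph.refl U)).toOpenPartialHomeomorph.trans ψ).trans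
      (Homeomorph.addRight (-ψ 0)).toOpenPartialHomeomorph
  have e_apply : ∀ x, e x = ψ (-x.1, x.2) - ψ 0 := fun x => (sub_eq_add_neg _ _).symm
  have zero_mem : (0 : S × U) ∈ e.source := by
    have neg_zero_eq : (Prod.map Neg.neg id (0 : S × U) : S × U) = 0 := Prod.ext neg_zero rfl
    simp [e, neg_zero_eq, hψ0]
  refine (isEssential_of_eventuallyEq_openPartialHomeomorph hΩ hb h0 hF' hF'0 zero_mem ?_ ?_).congr
    hF'F
  · simp [e_apply, ← Prod.zero_eq_mk]
  · filter_upwards [F'_near] with x hx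
    rw [hx, e_apply]

end Split

/-! ### General position and separation of balls -/

theorem interior_image_eq_empty {X Y : Type*} [TopologicalSpace X] [TopologicalSpace Y]
    (e : OpenPartialHomeomorph X Y) {s : Set X} (hs : s ⊆ e.source) (h : interior s = ∅) :
    interior (e '' s) = ∅ := by
  by_contra! hne
  obtain ⟨y, hy⟩ := hne
  obtain ⟨x, hx, rfl⟩ := interior_subset hy
  have preimage_subset : e.source ∩ e ⁻¹' interior (e '' s) ⊆ s := by
    rintro z ⟨hz, hz'⟩
    obtain ⟨w, hw, hwz⟩ := interior_subset hz'
    exact e.injOn (hs hw) hz hwz ▸ hw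
  have hx' : x ∈ interior s :=
    mem_interior.2 ⟨_, preimage_subset, e.isOpen_inter_preimage isOpen_interior, hs hx, hy⟩
  simp [h] at hx'

section GeneralPosition

variable {E : Type*} [NormedAddCommGroup E] [NormedSpace ℝ E] [FiniteDimensional ℝ E] {g : E → E}
  {K : Set E}

theorem isMeagre_image_of_det_fderiv_eq_zero (hg : Differentiable ℝ g) (hK : IsCompact K)
    (h0 : ∀ x ∈ K, (fderiv ℝ g x).det = 0) : IsMeagre (g '' K) := by
  borelize E
  have image_null : Measure.addHaar (g '' K) = 0 :=
    addHaar_image_eq_zero_of_det_fderivWithin_eq_zero Measure.addHaar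
      (fun x _ => (hg x).hasFDerivAt.hasFDerivWithinAt) h0
  exact (IsNowhereDense.of_isClosed_null (hK.image hg.continuous).isClosed image_null).isMeagre

theorem exists_nhds_isMeagre_image (hg : ContDiff ℝ 1 g) (hK : IsCompact K) (hK0 : interior K = ∅)
    {x : E} (hx : (fderiv ℝ g x).det ≠ 0) : ∃ V ∈ 𝓝 x, IsMeagre (g '' (K ∩ V)) := by
  have strict : HasStrictFDerivAt g
      (((fderiv ℝ g x).toContinuousLinearEquivOfDetNeZero hx : E ≃L[ℝ] E) : E →L[ℝ] E) x := by
    simpa using hg.contDiffAt.hasStrictFDerivAt (x := x) one_ne_zero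
  let e := strict.toOpenPartialHomeomorph g
  obtain ⟨r, hr, hrs⟩ := nhds_basis_closedBall.mem_iff.1
    (e.open_source.mem_nhds strict.mem_toOpenPartialHomeomorph_source)
  have image_closed : IsClosed (g '' (K ∩ closedBall x r)) :=
    ((hK.inter_right isClosed_closedBall).image hg.continuous).isClosed
  refine ⟨closedBall x r, closedBall_mem_nhds x hr,
    (image_closed.isNowhereDense_iff.2 (interior_image_eq_empty e ?_ ?_)).isMeagre⟩
  · exact inter_subset_right.trans hrs
  · exact subset_eq_empty (interior_mono inter_subset_left) hK0

theorem isMeagre_image_of_contDiff (hg : ContDiff ℝ 1 g) (hK : IsCompact K)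
    (hK0 : interior K = ∅) : IsMeagre (g '' K) := by
  have det_cont : Continuous fun x => (fderiv ℝ g x).det :=
    ContinuousLinearMap.continuous_det.comp (hg.continuous_fderiv one_ne_zero)
  let C := K ∩ {x | (fderiv ℝ g x).det = 0}
  have critical_meagre : IsMeagre (g '' C) :=
    isMeagre_image_of_det_fderiv_eq_zero (hg.differentiable one_ne_zero)
      (hK.inter_right (isClosed_eq det_cont continuous_const)) fun x hx => hx.2
  have regular : ∀ x ∈ K \ C, ∃ V ∈ 𝓝 x, IsMeagre (g '' (K ∩ V)) := fun x hx =>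
    exists_nhds_isMeagre_image hg hK hK0 fun h => hx.2 ⟨hx.1, h⟩
  choose! V hV hVm using regular
  obtain ⟨t, htK, htc, hcover⟩ := TopologicalSpace.countable_cover_nhdsWithin
    fun x hx => mem_nhdsWithin_of_mem_nhds (hV x hx)
  have regular_meagre : IsMeagre (⋃ x ∈ t, g '' (K ∩ V x)) := by
    have := htc.to_subtype
    rw [biUnion_eq_iUnion]
    exact isMeagre_iUnion fun x => hVm x (htK x.2)
  refine (critical_meagre.union regular_meagre).mono ?_
  rintro _ ⟨x, hx, rfl⟩
  by_cases hxC : x ∈ C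
  · exact Or.inl (mem_image_of_mem g hxC)
  · obtain ⟨y, hy, hxy⟩ := mem_iUnion₂.1 (hcover ⟨hx, hxC⟩)
    exact Or.inr (mem_iUnion₂.2 ⟨y, hy, mem_image_of_mem g ⟨hx, hxy⟩⟩)

theorem exists_continuous_near_ne_zero (hg : Continuous g) (hK : IsCompact K)
    (hK0 : interior K = ∅) {c : ℝ} (hc : 0 < c) :
    ∃ g' : E → E, Continuous g' ∧ (∀ x, ‖g' x - g x‖ < c) ∧ ∀ x ∈ K, g' x ≠ 0 := by
  obtain ⟨g₁, hg₁, near, -⟩ := hg.exists_contDiff_approx 1 (ε := fun _ => c / 2) continuous_const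
    fun _ => half_pos hc
  have dense_compl : Dense (g₁ '' K)ᶜ :=
    dense_of_mem_residual (isMeagre_image_of_contDiff (by exact_mod_cast hg₁) hK hK0)
  obtain ⟨y, hyK, hy⟩ := dense_compl.exists_dist_lt 0 (half_pos hc)
  refine ⟨fun x => g₁ x - y, hg₁.continuous.sub continuous_const, fun x => ?_,
    fun x hx h => hyK ⟨x, hx, sub_eq_zero.1 h⟩⟩
  calc ‖g₁ x - y - g x‖ = ‖(g₁ x - g x) - y‖ := by congr 1; abel
    _ ≤ ‖g₁ x - g x‖ + ‖y‖ := norm_sub_le _ _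
    _ < c / 2 + c / 2 := add_lt_add (by simpa [dist_eq_norm] using near x) (by simpa using hy)
    _ = c := add_halves c

end GeneralPosition

theorem continuousOn_image_of_leftInvOn {X Y : Type*} [TopologicalSpace X] [TopologicalSpace Y]
    [T2Space Y] {K : Set X} (hK : IsCompact K) {f : X → Y} (hf : ContinuousOn f K) {σ : Y → X}
    (hσ : LeftInvOn σ f K) : ContinuousOn σ (f '' K) := by
  refine continuousOn_iff_isClosed.2 fun t ht => ⟨f '' (K ∩ t),
    ((hK.inter_right ht).image_of_continuousOn (hf.mono inter_subset_left)).isClosed, ?_⟩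
  ext y
  constructor
  · rintro ⟨hxt, x, hx, rfl⟩
    exact ⟨mem_image_of_mem f ⟨hx, hσ hx ▸ hxt⟩, mem_image_of_mem f hx⟩
  · rintro ⟨⟨x, hx, rfl⟩, h⟩
    exact ⟨by simpa only [mem_preimage, hσ hx.1] using hx.2, h⟩

section Separation

theorem exists_pos_forall_le_norm_sub {E : Type*} [NormedAddCommGroup E] {s t : Set E}
    (hs : IsCompact s) (ht : IsClosed t) (hst : Disjoint s t) :
    ∃ c > 0, ∀ x ∈ t, ∀ y ∈ s, c ≤ ‖x - y‖ := by
  obtain ⟨c, hc, h⟩ := exists_pos_forall_lt_edist hs ht hst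
  refine ⟨c, hc, fun x hx y hy => ?_⟩
  have := (h y hy x hx).le
  rwa [edist_nndist, ENNReal.coe_le_coe, ← NNReal.coe_le_coe, coe_nndist, dist_comm,
    dist_eq_norm] at this

variable {Y P : Type*} [NormedAddCommGroup Y] [NormedSpace ℝ Y] [FiniteDimensional ℝ Y]
  [NormedAddCommGroup P] [NormedSpace ℝ P] [FiniteDimensional ℝ P] {X : Set Y} {π : Y → P}
  {γ : ℝ → Y} {c : ℝ}

-- After extending `π⁻¹`, the map `(x, t) ↦ x - γ t` on `X × [0, 1]` factors through the subset
-- `π '' X × [0, 1]` of `P × ℝ ≃ Y`, which has empty interior.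
theorem exists_continuous_near_sub_ne_zero (hdim : Module.finrank ℝ Y = Module.finrank ℝ P + 1)
    (hX : IsCompact X) (hπ : ContinuousOn π X) (hinj : InjOn π X) (h0 : interior (π '' X) = ∅)
    (hγ : Continuous γ) (hc : 0 < c) :
    ∃ h : Y × ℝ → Y, Continuous h ∧ ∀ x ∈ X, ∀ t ∈ Icc (0 : ℝ) 1,
      h (x, t) ≠ 0 ∧ ‖h (x, t) - (x - γ t)‖ < c := by
  have image_compact := hX.image_of_continuousOn hπ
  have left_inv : LeftInvOn (Function.invFunOn π X) π X := hinj.leftInvOn_invFunOn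
  obtain ⟨σ, hσ, σ_eq⟩ :=
    exists_continuous_eqOn image_compact.isClosed (continuousOn_image_of_leftInvOn hX hπ left_inv)
  obtain ⟨π', hπ', π'_eq⟩ := exists_continuous_eqOn hX.isClosed hπ
  let A : Y ≃L[ℝ] P × ℝ := ContinuousLinearEquiv.ofFinrankEq (by simp [hdim])
  let Z : Set Y := A ⁻¹' ((π '' X) ×ˢ Icc (0 : ℝ) 1)
  have Z_compact : IsCompact Z :=
    A.toHomeomorph.isCompact_preimage.2 (image_compact.prod isCompact_Icc)
  have Z_interior : interior Z = ∅ := by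
    have := A.toHomeomorph.preimage_interior ((π '' X) ×ˢ Icc (0 : ℝ) 1)
    rwa [interior_prod_eq, h0, empty_prod, preimage_empty, eq_comm] at this
  obtain ⟨g, hg, g_near, g_ne⟩ := exists_continuous_near_ne_zero
    (g := fun y => σ (A y).1 - γ (A y).2) (by fun_prop) Z_compact Z_interior hc
  refine ⟨fun z => g (A.symm (π' z.1, z.2)), by fun_prop, fun x hx t ht => ?_⟩
  have σπ' : σ (π' x) = x := by rw [π'_eq hx, σ_eq (mem_image_of_mem π hx), left_inv hx]
  refine ⟨g_ne _ ?_, by simpa [σπ'] using g_near (A.symm (π' x, t))⟩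
  simpa [Z, π'_eq hx] using ⟨⟨x, hx, rfl⟩, ht⟩

theorem exists_continuous_avoiding (hdim : Module.finrank ℝ Y = Module.finrank ℝ P + 1)
    (hX : IsCompact X) (hπ : ContinuousOn π X) (hinj : InjOn π X) (h0 : interior (π '' X) = ∅)
    (hγ : Continuous γ) (hc : 0 < c) :
    ∃ H : Y × ℝ → Y, Continuous H ∧ (∀ x t, c ≤ ‖x - γ t‖ → H (x, t) = x - γ t) ∧
      ∀ x ∈ X, ∀ t ∈ Icc (0 : ℝ) 1, H (x, t) ≠ 0 := by
  obtain ⟨h, hh, h_spec⟩ :=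
    exists_continuous_near_sub_ne_zero hdim hX hπ hinj h0 hγ (half_pos hc)
  obtain ⟨μ, hμ, μ_mem, μ_one, μ_zero⟩ := exists_continuous_cutoff (E := Y) (half_lt_self hc)
  refine ⟨fun z => (z.1 - γ z.2) + μ (z.1 - γ z.2) • (h z - (z.1 - γ z.2)), by fun_prop,
    fun x t hxt => by simp [μ_zero _ hxt], fun x hx t ht hzero => ?_⟩
  obtain ⟨h_ne, h_near⟩ := h_spec x hx t ht
  rcases le_or_gt ‖x - γ t‖ (c / 2) with hle | hgt
  · simp only [μ_one _ hle, one_smul, add_sub_cancel] at hzero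
    exact h_ne hzero
  · have norm_eq := norm_smul_le_of_mem_Icc (μ_mem (x - γ t)) (h (x, t) - (x - γ t))
    rw [← norm_neg, ← eq_neg_of_add_eq_zero_left hzero] at norm_eq
    linarith

theorem mem_closure_of_frontier_subset (hdim : Module.finrank ℝ Y = Module.finrank ℝ P + 1)
    (hX : IsCompact X) (hπ : ContinuousOn π X) (hinj : InjOn π X) (h0 : interior (π '' X) = ∅)
    (hγ : Continuous γ) {U K : Set Y} (hU : IsOpen U) (hb : Bornology.IsBounded U)
    (hK : IsClosed K) (hUK : frontier U ⊆ X ∪ K) (hγK : ∀ t ∈ Icc (0 : ℝ) 1, γ t ∉ K)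
    (hγ0 : γ 0 ∈ U) : γ 1 ∈ closure U := by
  by_contra hγ1
  obtain ⟨c₀, hc₀, far₀⟩ := exists_pos_forall_le_norm_sub isCompact_singleton
    (isClosed_frontier (s := U)) (disjoint_singleton_left.2 fun h => hU.frontier_eq ▸ h |>.2 hγ0)
  obtain ⟨c₁, hc₁, far₁⟩ := exists_pos_forall_le_norm_sub isCompact_singleton
    (isClosed_closure (s := U)) (disjoint_singleton_left.2 hγ1)
  obtain ⟨c₂, hc₂, far₂⟩ := exists_pos_forall_le_norm_sub
    (isCompact_Icc.image_of_continuousOn hγ.continuousOn) hK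
    (Set.disjoint_left.2 (forall_mem_image.2 hγK))
  obtain ⟨H, hH, H_eq, H_ne⟩ := exists_continuous_avoiding hdim hX hπ hinj h0 hγ
    (lt_min hc₀ (lt_min hc₁ hc₂))
  have essential : IsEssential (fun x => x - γ 0) U :=
    isEssential_of_eventuallyEq_sub hU hb hγ0 (by fun_prop) (fun x _ => sub_eq_zero.1)
      (Eventually.of_forall fun _ => rfl)
  have H_one : ∀ x ∈ closure U, H (x, 1) = x - γ 1 := fun x hx =>
    H_eq x 1 (((min_le_right _ _).trans (min_le_left _ _)).trans (far₁ x hx _ rfl))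
  obtain ⟨x, hx, hzero⟩ := essential.of_homotopy hb.isCompact_closure hH.continuousOn
    (fun x hx => H_eq x 0 ((min_le_left _ _).trans (far₀ x hx _ rfl)))
    (fun x hx => H_one x (frontier_subset_closure hx))
    (fun x hx t ht => by
      rcases hUK hx with hxX | hxK
      · exact H_ne x hxX t ht
      · have far := far₂ x hxK _ (mem_image_of_mem γ ht)
        rw [H_eq x t (((min_le_right _ _).trans (min_le_right _ _)).trans far)]
        exact norm_pos_iff.1 (hc₂.trans_le far))
    (fun x => x - γ 1) (by fun_prop) (fun _ _ => rfl)
  exact (hc₁.trans_le (far₁ x hx _ rfl)).ne' (norm_eq_zero.2 hzero)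

theorem isPreconnected_ball_diff (hdim : Module.finrank ℝ Y = Module.finrank ℝ P + 1)
    (hX : IsCompact X) (hπ : ContinuousOn π X) (hinj : InjOn π X) (h0 : interior (π '' X) = ∅)
    {y₀ : Y} {r : ℝ} : IsPreconnected (ball y₀ r \ X) := by
  rw [isPreconnected_iff_subset_of_disjoint]
  intro u v hu hv huv hdisj
  by_contra! ⟨hnu, hnv⟩
  obtain ⟨q', hq', hq'u⟩ := not_subset.1 hnu
  obtain ⟨q, hq, hqv⟩ := not_subset.1 hnv
  have diff_open : IsOpen (ball y₀ r \ X) := isOpen_ball.sdiff hX.isClosed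
  set U := (ball y₀ r \ X) ∩ u
  have hU : IsOpen U := diff_open.inter hu
  have U_subset : U ⊆ ball y₀ r := fun x hx => hx.1.1
  have closure_disjoint : Disjoint (closure U) ((ball y₀ r \ X) ∩ v) := by
    refine Disjoint.closure_left (Set.disjoint_left.2 fun x hx hx' => ?_) (diff_open.inter hv)
    exact eq_empty_iff_forall_notMem.1 hdisj x ⟨hx.1, hx.2, hx'.2⟩
  have frontier_subset : frontier U ⊆ X ∪ sphere y₀ r := fun x hx => by
    rw [hU.frontier_eq] at hx
    by_contra! hxn
    obtain ⟨hxX, hxr⟩ := not_or.1 hxn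
    have hx_le : dist x y₀ ≤ r := closure_ball_subset_closedBall (closure_mono U_subset hx.1)
    have hxb : x ∈ ball y₀ r \ X := ⟨lt_of_le_of_ne hx_le hxr, hxX⟩
    rcases huv hxb with h | h
    · exact hx.2 ⟨hxb, h⟩
    · exact Set.disjoint_left.1 closure_disjoint hx.1 ⟨hxb, h⟩
  refine Set.disjoint_left.1 closure_disjoint ?_ ⟨hq', (huv hq').resolve_left hq'u⟩
  simpa using mem_closure_of_frontier_subset hdim hX hπ hinj h0
    (γ := fun t => AffineMap.lineMap q q' t) (by fun_prop) hU (isBounded_ball.subset U_subset)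
    isClosed_sphere frontier_subset
    (fun t ht h => ((convex_ball y₀ r).lineMap_mem hq.1 hq'.1 ht).ne h)
    (by simpa using ⟨hq, (huv hq).resolve_right hqv⟩)

end Separation

/-! ### Local stable sets of an expansive homeomorphism -/

section LocalStable

variable {f : M ≃ₜ M} {α ε ε' η : ℝ} {x y z : M}

theorem iterZ_natCast (f : M ≃ₜ M) (k : ℕ) (x : M) : iterZ f k x = f^[k] x := by
  rw [iterZ, zpow_natCast, ← Equiv.Perm.iterate_eq_pow]
  rfl

theorem iterZ_neg_natCast (f : M ≃ₜ M) (k : ℕ) (x : M) : iterZ f (-k) x = f.symm^[k] x := by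
  rw [iterZ, zpow_neg, ← inv_zpow, zpow_natCast, ← Equiv.Perm.iterate_eq_pow]
  rfl

theorem symm_iterate_iterate (f : M ≃ₜ M) (k : ℕ) (x : M) : f.symm^[k] (f^[k] x) = x :=
  Function.LeftInverse.iterate f.symm_apply_apply k x

theorem iterate_symm_iterate (f : M ≃ₜ M) (k : ℕ) (x : M) : f^[k] (f.symm^[k] x) = x :=
  Function.LeftInverse.iterate f.apply_symm_apply k x

theorem mem_WsLoc : y ∈ WsLoc f ε x ↔ ∀ k : ℕ, dist (f^[k] x) (f^[k] y) ≤ ε := by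
  simp only [← iterZ_natCast]
  refine ⟨fun h k => h k k.cast_nonneg, fun h k hk => ?_⟩
  obtain ⟨m, rfl⟩ := Int.eq_ofNat_of_zero_le hk
  exact h m

theorem self_mem_WsLoc (f : M ≃ₜ M) (hε : 0 ≤ ε) (x : M) : x ∈ WsLoc f ε x :=
  mem_WsLoc.2 fun k => by rwa [dist_self]

theorem mem_WsLoc_comm : y ∈ WsLoc f ε x ↔ x ∈ WsLoc f ε y := by
  simp only [mem_WsLoc, dist_comm]

theorem WsLoc_mono (h : ε ≤ ε') (x : M) : WsLoc f ε x ⊆ WsLoc f ε' x :=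
  fun _ hy k hk => (hy k hk).trans h

theorem mem_WsLoc_trans (hxy : y ∈ WsLoc f ε x) (hyz : z ∈ WsLoc f ε' y) :
    z ∈ WsLoc f (ε + ε') x :=
  fun k hk => (dist_triangle _ _ _).trans (add_le_add (hxy k hk) (hyz k hk))

theorem isClosed_setOf_mem_WsLoc (f : M ≃ₜ M) (ε : ℝ) :
    IsClosed {z : M × M | z.2 ∈ WsLoc f ε z.1} := by
  simp only [mem_WsLoc, ofPred_forall]
  refine isClosed_iInter fun k => isClosed_le ?_ continuous_const
  have := f.continuous.iterate k
  fun_prop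

theorem isClosed_WsLoc (f : M ≃ₜ M) (ε : ℝ) (x : M) : IsClosed (WsLoc f ε x) :=
  (isClosed_setOf_mem_WsLoc f ε).preimage (f := fun y => (x, y)) (by fun_prop)

theorem mem_WsLoc_of_tendsto {ι : Type*} {l : Filter ι} [l.NeBot] {u v : ι → M}
    (hu : Tendsto u l (𝓝 x)) (hv : Tendsto v l (𝓝 y)) (h : ∀ᶠ i in l, v i ∈ WsLoc f ε (u i)) :
    y ∈ WsLoc f ε x :=
  (isClosed_setOf_mem_WsLoc f ε).mem_of_tendsto (hu.prodMk_nhds hv) h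

theorem _root_.IsExpansive.eq_of_mem_WsLoc (hf : IsExpansive f α) (h : y ∈ WsLoc f α x)
    (h' : y ∈ WsLoc f.symm α x) : x = y := by
  by_contra hne
  obtain ⟨k, hk⟩ := hf x y hne
  obtain ⟨m, rfl | rfl⟩ := k.eq_nat_or_neg
  · rw [iterZ_natCast, iterZ_natCast] at hk
    exact hk.not_ge (mem_WsLoc.1 h m)
  · rw [iterZ_neg_natCast, iterZ_neg_natCast] at hk
    exact hk.not_ge (mem_WsLoc.1 h' m)

theorem _root_.IsExpansive.symm (hf : IsExpansive f α) : IsExpansive f.symm α := by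
  intro x y hne
  by_contra! h
  refine hne (hf.eq_of_mem_WsLoc (mem_WsLoc.2 fun k => ?_) (mem_WsLoc.2 fun k => ?_))
  · have := h (-k)
    rwa [iterZ_neg_natCast, iterZ_neg_natCast] at this
  · simpa only [iterZ_natCast] using h k

theorem _root_.IsExpansive.eq_of_mem_WsLoc_of_mem_WsLoc_symm (hf : IsExpansive f α)
    (hε : 2 * ε ≤ α) {a b : M} (ha : a ∈ WsLoc f ε x) (hb : b ∈ WsLoc f ε x)
    (ha' : a ∈ WsLoc f.symm ε y) (hb' : b ∈ WsLoc f.symm ε y) : a = b := by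
  rw [two_mul] at hε
  exact hf.eq_of_mem_WsLoc (WsLoc_mono hε a (mem_WsLoc_trans (mem_WsLoc_comm.1 ha) hb))
    (WsLoc_mono hε a (mem_WsLoc_trans (mem_WsLoc_comm.1 ha') hb'))

variable [CompactSpace M]

theorem exists_forall_dist_iterate_lt (f : M ≃ₜ M) (hη : 0 < η) (N : ℕ) :
    ∃ δ > 0, ∀ x y : M, dist x y < δ → ∀ k < N, dist (f^[k] x) (f^[k] y) < η := by
  have hunif : ∀ k : ℕ, ∀ᶠ δ in 𝓝[>] (0 : ℝ),
      ∀ x y : M, dist x y < δ → dist (f^[k] x) (f^[k] y) < η := fun k => by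
    obtain ⟨δ, hδ, h⟩ := Metric.uniformContinuous_iff.1
      (CompactSpace.uniformContinuous_of_continuous (f.continuous.iterate k)) η hη
    filter_upwards [Ioo_mem_nhdsGT hδ] with δ' hδ' x y hxy
    exact h (hxy.trans hδ'.2)
  obtain ⟨δ, hδ, h0⟩ :=
    (((Finset.eventually_all (Finset.range N)).2 fun k _ => hunif k).and
      self_mem_nhdsWithin).exists
  exact ⟨δ, h0, fun x y hxy k hk => hδ k (Finset.mem_range.2 hk) x y hxy⟩

theorem _root_.IsExpansive.exists_forall_dist_lt (hf : IsExpansive f α) (hη : 0 < η) :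
    ∃ N : ℕ, ∀ x, ∀ y ∈ WsLoc f α x,
      (∀ k ≤ N, dist (f.symm^[k] x) (f.symm^[k] y) ≤ α) → dist x y < η := by
  let C : ℕ → Set (M × M) := fun N => {z | η ≤ dist z.1 z.2} ∩ {z | z.2 ∈ WsLoc f α z.1} ∩
    {z | ∀ k ≤ N, dist (f.symm^[k] z.1) (f.symm^[k] z.2) ≤ α}
  have hclosed : ∀ N, IsClosed (C N) := fun N => by
    refine ((isClosed_le continuous_const continuous_dist).inter
      (isClosed_setOf_mem_WsLoc f α)).inter ?_
    simp only [ofPred_forall]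
    refine isClosed_iInter fun k => isClosed_iInter fun _ => isClosed_le ?_ continuous_const
    have := f.symm.continuous.iterate k
    fun_prop
  by_contra! hcon
  have hne : ∀ N, (C N).Nonempty := fun N => by
    obtain ⟨x, y, hy, hk, hxy⟩ := hcon N
    exact ⟨(x, y), ⟨hxy, hy⟩, hk⟩
  obtain ⟨z, hz⟩ := IsCompact.nonempty_iInter_of_sequence_nonempty_isCompact_isClosed C
    (fun N z hz => ⟨hz.1, fun k hk => hz.2 k (hk.trans N.le_succ)⟩) hne (hclosed 0).isCompact
    hclosed
  simp only [mem_iInter] at hz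
  have heq : z.1 = z.2 :=
    hf.eq_of_mem_WsLoc (hz 0).1.2 (mem_WsLoc.2 fun k => (hz k).2 k le_rfl)
  have hle : η ≤ dist z.1 z.2 := (hz 0).1.1
  rw [heq, dist_self] at hle
  exact hη.not_ge hle

theorem _root_.IsExpansive.exists_forall_dist_iterate_lt (hf : IsExpansive f α) (hε : ε ≤ α)
    (hη : 0 < η) :
    ∃ N : ℕ, ∀ x, ∀ y ∈ WsLoc f ε x, ∀ k ≥ N, dist (f^[k] x) (f^[k] y) < η := by
  obtain ⟨N, hN⟩ := hf.exists_forall_dist_lt hη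
  refine ⟨N, fun x y hy k hk => hN _ _ (mem_WsLoc.2 fun j => ?_) fun j hj => ?_⟩
  · rw [← Function.iterate_add_apply, ← Function.iterate_add_apply]
    exact (mem_WsLoc.1 hy _).trans hε
  · obtain ⟨i, rfl⟩ := Nat.exists_eq_add_of_le (hj.trans hk)
    rw [Function.iterate_add_apply, Function.iterate_add_apply, symm_iterate_iterate,
      symm_iterate_iterate]
    exact (mem_WsLoc.1 hy i).trans hε

theorem _root_.IsExpansive.exists_mem_WsLoc_of_dist_lt (hf : IsExpansive f α) (hε : ε ≤ α)
    (hη : 0 < η) :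
    ∃ δ > 0, ∀ x, ∀ y ∈ WsLoc f ε x, dist x y < δ → y ∈ WsLoc f η x := by
  obtain ⟨N, hN⟩ := hf.exists_forall_dist_iterate_lt hε hη
  obtain ⟨δ, hδ, h⟩ := exists_forall_dist_iterate_lt f hη N
  refine ⟨δ, hδ, fun x y hy hd => mem_WsLoc.2 fun k => ?_⟩
  rcases lt_or_ge k N with hk | hk
  · exact (h x y hd k hk).le
  · exact (hN x y hy k hk).le

end LocalStable

/-! ### Hyperbolic periodic points and their stable manifolds -/

section HalfPow

variable {S : Type*} [NormedAddCommGroup S] [NormedSpace ℝ S]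

theorem tendsto_half_pow_smul (a : S) :
    Tendsto (fun k : ℕ => (1 / 2 : ℝ) ^ k • a) atTop (𝓝 0) := by
  have := (tendsto_pow_atTop_nhds_zero_of_lt_one (r := (1 / 2 : ℝ)) (by norm_num)
    (by norm_num)).smul_const a
  rwa [zero_smul] at this

theorem norm_half_pow_smul_le (k : ℕ) (a : S) : ‖(1 / 2 : ℝ) ^ k • a‖ ≤ ‖a‖ :=
  norm_smul_le_of_mem_Icc
    ⟨by positivity, pow_le_one₀ (by norm_num) (by norm_num)⟩ a

theorem half_pow_smul_mem_ball {R : ℝ} {a : S} (ha : a ∈ ball 0 R) (k : ℕ) :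
    (1 / 2 : ℝ) ^ k • a ∈ ball 0 R :=
  mem_ball_zero_iff.2 ((norm_half_pow_smul_le k a).trans_lt (mem_ball_zero_iff.1 ha))

theorem eventually_half_pow_smul_mem_ball {R : ℝ} (hR : 0 < R) (a : S) :
    ∀ᶠ k : ℕ in atTop, (1 / 2 : ℝ) ^ k • a ∈ ball 0 R :=
  (tendsto_half_pow_smul a).eventually (ball_mem_nhds 0 hR)

theorem exists_continuous_eq_iterate_half_pow {X : Type*} [TopologicalSpace X] {G : X → X}
    {φ : S → X} {R : ℝ} (hG : Continuous G) (hR : 0 < R) (hφ : ContinuousOn φ (ball 0 R))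
    (hGφ : ∀ a ∈ ball (0 : S) R, G (φ ((1 / 2 : ℝ) • a)) = φ a) :
    ∃ Φ : S → X, Continuous Φ ∧ ∀ (k : ℕ) (a : S), (1 / 2 : ℝ) ^ k • a ∈ ball 0 R →
      Φ a = G^[k] (φ ((1 / 2 : ℝ) ^ k • a)) := by
  have iterate_add : ∀ (k m : ℕ) (a : S), (1 / 2 : ℝ) ^ k • a ∈ ball 0 R →
      G^[k + m] (φ ((1 / 2 : ℝ) ^ (k + m) • a)) = G^[k] (φ ((1 / 2 : ℝ) ^ k • a)) := by
    intro k m a ha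
    induction m with
    | zero => rfl
    | succ m ih =>
      rw [← ih, ← add_assoc, Function.iterate_succ_apply, pow_succ', mul_smul, hGφ]
      rw [pow_add, mul_comm, mul_smul]
      exact half_pow_smul_mem_ball ha m
  choose κ hκ using fun a : S => (eventually_half_pow_smul_mem_ball hR a).exists
  let Φ : S → X := fun a => G^[κ a] (φ ((1 / 2 : ℝ) ^ κ a • a))
  have hΦ : ∀ (k : ℕ) (a : S), (1 / 2 : ℝ) ^ k • a ∈ ball 0 R →
      Φ a = G^[k] (φ ((1 / 2 : ℝ) ^ k • a)) := fun k a ha =>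
    (iterate_add (κ a) k a (hκ a)).symm.trans (add_comm k (κ a) ▸ iterate_add k (κ a) a ha)
  refine ⟨Φ, continuous_iff_continuousAt.2 fun a => ?_, hΦ⟩
  have hopen : IsOpen {b : S | (1 / 2 : ℝ) ^ κ a • b ∈ ball 0 R} :=
    isOpen_ball.preimage (continuous_const_smul _)
  have hcont : ContinuousOn (fun b => G^[κ a] (φ ((1 / 2 : ℝ) ^ κ a • b)))
      {b : S | (1 / 2 : ℝ) ^ κ a • b ∈ ball 0 R} :=
    (hG.iterate _).comp_continuousOn (hφ.comp (by fun_prop) fun _ hb => hb)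
  exact (hcont.continuousAt (hopen.mem_nhds (hκ a))).congr
    (eventually_of_mem (hopen.mem_nhds (hκ a)) fun b hb => (hΦ _ b hb).symm)

theorem exists_extension_of_semiconj_half {X : Type*} [TopologicalSpace X] {F G : X → X}
    {φ : S → X} {R : ℝ} (hG : Continuous G) (hGF : Function.LeftInverse G F)
    (hFG : Function.RightInverse G F) (hR : 0 < R) (hφ : ContinuousOn φ (ball 0 R))
    (hinj : InjOn φ (ball 0 R)) (hF : ∀ a ∈ ball (0 : S) R, F (φ a) = φ ((1 / 2 : ℝ) • a)) :
    ∃ Φ : S → X, Continuous Φ ∧ Function.Injective Φ ∧ EqOn Φ φ (ball 0 R) ∧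
      ∀ a, F (Φ a) = Φ ((1 / 2 : ℝ) • a) := by
  obtain ⟨Φ, hcont, hΦ⟩ := exists_continuous_eq_iterate_half_pow hG hR hφ
    fun a ha => by rw [← hF a ha, hGF]
  have hmem := eventually_half_pow_smul_mem_ball (S := S) hR
  have hFΦ : ∀ (k : ℕ) (a : S), (1 / 2 : ℝ) ^ k • a ∈ ball 0 R →
      F^[k] (Φ a) = φ ((1 / 2 : ℝ) ^ k • a) := fun k a ha => by
    rw [hΦ k a ha, hFG.iterate k]
  refine ⟨Φ, hcont, fun a b hab => ?_, fun a ha => ?_, fun a => ?_⟩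
  · obtain ⟨k, hka, hkb⟩ := ((hmem a).and (hmem b)).exists
    have heq := congrArg F^[k] hab
    rw [hFΦ k a hka, hFΦ k b hkb] at heq
    exact smul_right_injective S (by positivity) (hinj hka hkb heq)
  · simpa using hΦ 0 a (by simpa using ha)
  · obtain ⟨k, hk, hk'⟩ := ((hmem a).and (hmem ((1 / 2 : ℝ) • a))).exists
    refine hGF.injective.iterate k ?_
    rw [← Function.iterate_succ_apply, Function.iterate_succ_apply', hFΦ k a hk, hF _ hk,
      hFΦ k _ hk', smul_comm]

end HalfPow

section LinearizingChart

variable {S U : Type*} [NormedAddCommGroup S] [NormedSpace ℝ S] [NormedAddCommGroup U]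
  [NormedSpace ℝ U] {f : M ≃ₜ M} {e : OpenPartialHomeomorph M (S × U)} {p : M} {l : ℕ}
  {α ε η : ℝ}

/-- The linear model `(a, b) ↦ (a / 2, 2 b)` of a hyperbolic fixed point with stable directions
`S` and unstable directions `U`. -/
noncomputable def modelMap (z : S × U) : S × U := ((1 / 2 : ℝ) • z.1, (2 : ℝ) • z.2)

/-- The chart `e` conjugates `f ^ l` near `p` to the linear model near `0`. -/
structure IsLinearizingChart (f : M ≃ₜ M) (e : OpenPartialHomeomorph M (S × U)) (p : M)
    (l : ℕ) : Prop where
  one_le : 1 ≤ l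
  mem_source : p ∈ e.source
  apply_eq_zero : e p = 0
  eventually_iterate_symm : ∀ᶠ z in 𝓝 (0 : S × U), f^[l] (e.symm z) = e.symm (modelMap z)

/-- The chart `e` with stable and unstable coordinates exchanged, for use with `f.symm`. -/
noncomputable def swapChart (e : OpenPartialHomeomorph M (S × U)) :
    OpenPartialHomeomorph M (U × S) :=
  e.transHomeomorph (Homeomorph.prodComm S U)

namespace IsLinearizingChart

theorem zero_mem_target (h : IsLinearizingChart f e p l) : (0 : S × U) ∈ e.target :=
  h.apply_eq_zero ▸ e.map_source h.mem_source

theorem symm_zero (h : IsLinearizingChart f e p l) : e.symm 0 = p := by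
  rw [← h.apply_eq_zero, e.left_inv h.mem_source]

theorem isFixedPt (h : IsLinearizingChart f e p l) : Function.IsFixedPt f^[l] p := by
  have h0 := h.eventually_iterate_symm.self_of_nhds
  have hL : modelMap (0 : S × U) = 0 := by simp [modelMap]
  rwa [hL, h.symm_zero] at h0

protected theorem symm (h : IsLinearizingChart f e p l) :
    IsLinearizingChart f.symm (swapChart e) p l := by
  refine ⟨h.one_le, h.mem_source, ?_, ?_⟩
  · change (e p).swap = 0
    rw [h.apply_eq_zero, Prod.swap_zero]
  · have ht : Tendsto (fun z : U × S => ((2 : ℝ) • z.2, (1 / 2 : ℝ) • z.1)) (𝓝 0)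
        (𝓝 (0 : S × U)) :=
      Continuous.tendsto' (by fun_prop) _ _ (by simp)
    filter_upwards [ht.eventually h.eventually_iterate_symm] with z hz
    have hinv : modelMap ((2 : ℝ) • z.2, (1 / 2 : ℝ) • z.1) = z.swap := by
      simp [modelMap, smul_smul, Prod.swap]
    rw [hinv] at hz
    change f.symm^[l] (e.symm z.swap) = e.symm (modelMap z).swap
    rw [← hz, symm_iterate_iterate]
    rfl

theorem tendsto_apply (h : IsLinearizingChart f e p l) : Tendsto e (𝓝 p) (𝓝 0) :=
  h.apply_eq_zero ▸ e.continuousAt h.mem_source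

theorem eventually_apply_iterate (h : IsLinearizingChart f e p l) :
    ∀ᶠ y in 𝓝 p, e (f^[l] y) = modelMap (e y) := by
  have hL : Tendsto (modelMap : S × U → S × U) (𝓝 0) (𝓝 0) :=
    Continuous.tendsto' (by unfold modelMap; fun_prop) _ _ (by simp [modelMap])
  filter_upwards [e.open_source.mem_nhds h.mem_source,
    h.tendsto_apply.eventually h.eventually_iterate_symm,
    (hL.comp h.tendsto_apply).eventually (e.open_target.mem_nhds h.zero_mem_target)]
    with y hy hiter (hL : modelMap (e y) ∈ e.target)
  rw [e.left_inv hy] at hiter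
  rw [hiter, e.right_inv hL]

theorem exists_nhds_snd_eq_zero (h : IsLinearizingChart f e p l) :
    ∃ V ∈ 𝓝 p, ∀ y, (∀ j, (f^[l])^[j] y ∈ V) → (e y).2 = 0 := by
  refine ⟨_, h.eventually_apply_iterate.and
    (h.tendsto_apply.eventually (ball_mem_nhds 0 one_pos)), fun y hy => ?_⟩
  have hpow : ∀ j : ℕ, (e ((f^[l])^[j] y)).2 = (2 : ℝ) ^ j • (e y).2 := by
    intro j
    induction j with
    | zero => simp
    | succ j ih =>
      rw [Function.iterate_succ_apply', (hy j).1, modelMap, ih, smul_smul, pow_succ']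
  by_contra hne
  have hpos : 0 < ‖(e y).2‖ := norm_pos_iff.2 hne
  obtain ⟨j, hj⟩ := pow_unbounded_of_one_lt ‖(e y).2‖⁻¹ (one_lt_two (α := ℝ))
  have hlt : ‖(e ((f^[l])^[j] y)).2‖ < 1 :=
    (norm_snd_le _).trans_lt (mem_ball_zero_iff.1 (hy j).2)
  rw [hpow, norm_smul, norm_pow, Real.norm_ofNat] at hlt
  exact hlt.not_gt ((inv_lt_iff_one_lt_mul₀ hpos).1 hj)

theorem eventually_snd_eq_zero [CompactSpace M] (h : IsLinearizingChart f e p l)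
    (hf : IsExpansive f α) (hε : ε ≤ α) :
    ∀ᶠ y in 𝓝 p, y ∈ WsLoc f ε p → (e y).2 = 0 := by
  obtain ⟨V, hV, hV0⟩ := h.exists_nhds_snd_eq_zero
  obtain ⟨η, hη, hηV⟩ := Metric.nhds_basis_closedBall.mem_iff.1 hV
  obtain ⟨δ, hδ, hshrink⟩ := hf.exists_mem_WsLoc_of_dist_lt hε hη
  filter_upwards [ball_mem_nhds p hδ] with y hy hyW
  refine hV0 y fun j => hηV ?_
  have hle := mem_WsLoc.1 (hshrink p y hyW (mem_ball'.1 hy)) (l * j)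
  rwa [Function.iterate_mul, (h.isFixedPt.iterate j).eq, dist_comm] at hle

end IsLinearizingChart

/-- `Φ` is a parametrization of the global stable manifold of the periodic point `p` which extends
the stable axis of the linearizing chart `e`. -/
structure IsStableParam (f : M ≃ₜ M) (e : OpenPartialHomeomorph M (S × U)) (p : M) (l : ℕ)
    (Φ : S → M) : Prop where
  chart : IsLinearizingChart f e p l
  continuous : Continuous Φ
  injective : Function.Injective Φ
  eventually_eq : ∀ᶠ a in 𝓝 (0 : S), Φ a = e.symm (a, 0)
  iterate_apply : ∀ a, f^[l] (Φ a) = Φ ((1 / 2 : ℝ) • a)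

theorem IsLinearizingChart.exists_isStableParam (h : IsLinearizingChart f e p l) :
    ∃ Φ : S → M, IsStableParam f e p l Φ := by
  have haxis : Continuous fun a : S => (a, (0 : U)) := by fun_prop
  obtain ⟨R, hR, hball⟩ := Metric.eventually_nhds_iff_ball.1
    ((haxis.tendsto 0).eventually
      ((e.open_target.eventually_mem h.zero_mem_target).and h.eventually_iterate_symm))
  obtain ⟨Φ, hcont, hinj, heq, hF⟩ := exists_extension_of_semiconj_half
    (F := f^[l]) (φ := fun a => e.symm (a, 0)) (f.symm.continuous.iterate l)
    (symm_iterate_iterate f l) (iterate_symm_iterate f l) hR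
    (e.continuousOn_symm.comp haxis.continuousOn fun a ha => (hball a ha).1)
    (fun a ha b hb hab =>
      congrArg Prod.fst (e.symm.injOn (hball a ha).1 (hball b hb).1 hab))
    (fun a ha => by simpa [modelMap] using (hball a ha).2)
  exact ⟨Φ, h, hcont, hinj, eventually_of_mem (ball_mem_nhds 0 hR) heq, hF⟩

namespace IsStableParam

variable {Φ : S → M}

theorem apply_zero (h : IsStableParam f e p l Φ) : Φ 0 = p :=
  h.eventually_eq.self_of_nhds.trans h.chart.symm_zero

theorem iterate_iterate_apply (h : IsStableParam f e p l Φ) (k : ℕ) (a : S) :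
    (f^[l])^[k] (Φ a) = Φ ((1 / 2 : ℝ) ^ k • a) := by
  induction k with
  | zero => simp
  | succ k ih => rw [Function.iterate_succ_apply', ih, h.iterate_apply, smul_smul, pow_succ']

theorem apply_mem_of_isOpen (h : IsStableParam f e p l Φ) {O : Set M} (hO : IsOpen O) (hp : p ∈ O)
    (hinv : ∀ x, f x ∈ O → x ∈ O) (a : S) : Φ a ∈ O := by
  have hiter : ∀ k x, f^[k] x ∈ O → x ∈ O := by
    intro k
    induction k with
    | zero => exact fun x hx => hx
    | succ k ih => exact fun x hx => hinv x (ih _ hx)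
  have ht : Tendsto (fun j : ℕ => Φ ((1 / 2 : ℝ) ^ j • a)) atTop (𝓝 p) :=
    h.apply_zero ▸ (h.continuous.tendsto 0).comp (tendsto_half_pow_smul a)
  obtain ⟨j, hj⟩ := (ht.eventually (hO.mem_nhds hp)).exists
  rw [← h.iterate_iterate_apply, ← Function.iterate_mul] at hj
  exact hiter _ _ hj

variable [CompactSpace M]

theorem eventually_mem_WsLoc [FiniteDimensional ℝ S] (h : IsStableParam f e p l Φ) (a : S)
    (hη : 0 < η) : ∀ᶠ a' in 𝓝 a, Φ a' ∈ WsLoc f η (Φ a) := by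
  obtain ⟨δ, hδ, hiter⟩ := exists_forall_dist_iterate_lt f hη l
  have huc : UniformContinuousOn Φ (closedBall 0 (‖a‖ + 1)) :=
    (isCompact_closedBall _ _).uniformContinuousOn_of_continuous h.continuous.continuousOn
  obtain ⟨δ', hδ', hdist⟩ := Metric.uniformContinuousOn_iff.1 huc δ hδ
  have hscale : ∀ (k : ℕ) {b : S}, ‖b‖ ≤ ‖a‖ + 1 →
      (1 / 2 : ℝ) ^ k • b ∈ closedBall 0 (‖a‖ + 1) := fun k b hb =>
    mem_closedBall_zero_iff.2 ((norm_half_pow_smul_le k b).trans hb)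
  filter_upwards [ball_mem_nhds a hδ', ball_mem_nhds a one_pos] with a' ha' ha1
  rw [mem_ball'] at ha'
  have hnorm : ‖a'‖ ≤ ‖a‖ + 1 := (norm_lt_of_mem_ball ha1).le
  refine mem_WsLoc.2 fun k => ?_
  rw [← Nat.mod_add_div k l, Function.iterate_add_apply, Function.iterate_add_apply,
    Function.iterate_mul, h.iterate_iterate_apply, h.iterate_iterate_apply]
  refine (hiter _ _ (hdist _ (hscale _ (by linarith)) _ (hscale _ hnorm) ?_) _
    (Nat.mod_lt _ h.chart.one_le)).le
  rw [dist_eq_norm, ← smul_sub]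
  rw [dist_eq_norm] at ha'
  exact (norm_half_pow_smul_le _ _).trans_lt ha'

theorem exists_WsLoc_subset (h : IsStableParam f e p l Φ) (hf : IsExpansive f α) (hε : ε ≤ α) :
    ∃ R : ℝ, WsLoc f ε p ⊆ Φ '' closedBall 0 R := by
  have hfst : Tendsto (fun y => (e y).1) (𝓝 p) (𝓝 0) :=
    (continuous_fst.tendsto (0 : S × U)).comp h.chart.tendsto_apply
  obtain ⟨η, hη, hηp⟩ := Metric.eventually_nhds_iff.1
    ((h.chart.eventually_snd_eq_zero hf hε).and
      ((e.open_source.eventually_mem h.chart.mem_source).and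
        (hfst.eventually (h.eventually_eq.and (closedBall_mem_nhds 0 one_pos)))))
  obtain ⟨N, hN⟩ := hf.exists_forall_dist_iterate_lt hε hη
  refine ⟨2 ^ N, fun y hy => ?_⟩
  have hfix := h.chart.isFixedPt.iterate N
  set w := (f^[l])^[N] y
  have hwp : dist w p < η := by
    have := hN p y hy (l * N) (Nat.le_mul_of_pos_left N h.chart.one_le)
    rwa [Function.iterate_mul, hfix.eq, dist_comm] at this
  have hwW : w ∈ WsLoc f ε p := mem_WsLoc.2 fun k => by
    have := mem_WsLoc.1 hy (k + l * N)
    rwa [Function.iterate_add_apply, Function.iterate_add_apply, Function.iterate_mul,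
      hfix.eq] at this
  obtain ⟨hsnd, hsource, hΦw, hnorm⟩ := hηp hwp
  have hΦw' : Φ (e w).1 = w := by
    rw [hΦw, ← hsnd hwW, Prod.mk.eta, e.left_inv hsource]
  refine ⟨(2 : ℝ) ^ N • (e w).1, mem_closedBall_zero_iff.2 ?_, ?_⟩
  · rw [norm_smul, norm_pow, Real.norm_ofNat]
    exact mul_le_of_le_one_right (by positivity) (mem_closedBall_zero_iff.1 hnorm)
  · refine (f.injective.iterate l).iterate N ?_
    rw [h.iterate_iterate_apply, smul_smul, ← mul_pow, one_div,
      inv_mul_cancel₀ (two_ne_zero' ℝ), one_pow, one_smul, hΦw']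

end IsStableParam

end LinearizingChart

section HyperbolicPoint

variable {S U S' U' : Type*} [NormedAddCommGroup S] [NormedSpace ℝ S] [NormedAddCommGroup U]
  [NormedSpace ℝ U] [NormedAddCommGroup S'] [NormedSpace ℝ S'] [NormedAddCommGroup U']
  [NormedSpace ℝ U'] {f g : M ≃ₜ M} {p : M}

/-- `p` is a topologically hyperbolic periodic point of `f` whose stable and unstable directions are
modelled on `S` and `U`. -/
def IsHyperbolicAt (f : M ≃ₜ M) (S U : Type*) [NormedAddCommGroup S] [NormedSpace ℝ S]
    [NormedAddCommGroup U] [NormedSpace ℝ U] (p : M) : Prop :=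
  ∃ (e : OpenPartialHomeomorph M (S × U)) (l : ℕ), IsLinearizingChart f e p l

namespace IsHyperbolicAt

protected theorem symm (h : IsHyperbolicAt f S U p) : IsHyperbolicAt f.symm U S p := by
  obtain ⟨e, l, h⟩ := h
  exact ⟨_, l, h.symm⟩

theorem of_commute (hg : Function.Commute f g) (h : IsHyperbolicAt f S U p) :
    IsHyperbolicAt f S U (g p) := by
  obtain ⟨e, l, h⟩ := h
  refine ⟨g.symm.toOpenPartialHomeomorph.trans e, l, h.one_le, by simpa using h.mem_source,
    by simpa using h.apply_eq_zero, ?_⟩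
  filter_upwards [h.eventually_iterate_symm] with z hz
  change f^[l] (g (e.symm z)) = g (e.symm (modelMap z))
  rw [← hz]
  exact hg.iterate_left l _

theorem map (h : IsHyperbolicAt f S U p) : IsHyperbolicAt f S U (f p) :=
  h.of_commute (.refl f)

theorem map_symm (h : IsHyperbolicAt f S U p) : IsHyperbolicAt f S U (f.symm p) :=
  h.of_commute fun x => (f.apply_symm_apply x).trans (f.symm_apply_apply x).symm

theorem congr (h : IsHyperbolicAt f S U p) (A : S ≃L[ℝ] S') (B : U ≃L[ℝ] U') :
    IsHyperbolicAt f S' U' p := by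
  obtain ⟨e, l, h⟩ := h
  refine ⟨e.transHomeomorph (A.prodCongr B).toHomeomorph, l, h.one_le, h.mem_source, ?_, ?_⟩
  · change A.prodCongr B (e p) = 0
    rw [h.apply_eq_zero, map_zero]
  · have ht : Tendsto (A.prodCongr B).symm (𝓝 0) (𝓝 (0 : S × U)) :=
      (A.prodCongr B).symm.continuous.tendsto' _ _ (map_zero _)
    filter_upwards [ht.eventually h.eventually_iterate_symm] with z hz
    change f^[l] (e.symm ((A.prodCongr B).symm z)) = e.symm ((A.prodCongr B).symm (modelMap z))
    rw [hz]
    congr 1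
    ext <;> simp [modelMap]

end IsHyperbolicAt

end HyperbolicPoint

section Plaque

variable {S U : Type*} [NormedAddCommGroup S] {f : M ≃ₜ M} {p : M} {Φ : S → M} {α ε δ : ℝ}
  {B : Set M}

/-- The parameters of the connected piece through `p = Φ 0` of the local stable set of `p` in `B`,
where `Φ` parametrizes the stable manifold of `p`. -/
def stablePlaque (f : M ≃ₜ M) (Φ : S → M) (ε : ℝ) (p : M) (B : Set M) : Set S :=
  connectedComponentIn (Φ ⁻¹' (WsLoc f ε p ∩ B)) 0

theorem stablePlaque_subset : stablePlaque f Φ ε p B ⊆ Φ ⁻¹' (WsLoc f ε p ∩ B) :=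
  connectedComponentIn_subset _ _

theorem isPreconnected_stablePlaque : IsPreconnected (stablePlaque f Φ ε p B) :=
  isPreconnected_connectedComponentIn

variable [NormedSpace ℝ S] [NormedAddCommGroup U] [NormedSpace ℝ U]
  {e : OpenPartialHomeomorph M (S × U)} {l : ℕ}

namespace IsStableParam

theorem zero_mem_stablePlaque (h : IsStableParam f e p l Φ) (hε : 0 ≤ ε) (hp : p ∈ B) :
    0 ∈ stablePlaque f Φ ε p B := by
  refine mem_connectedComponentIn ?_
  rw [mem_preimage, h.apply_zero]
  exact ⟨self_mem_WsLoc f hε p, hp⟩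

theorem apply_mem_WsLoc_of_mem_closure (h : IsStableParam f e p l Φ) {a : S}
    (ha : a ∈ closure (stablePlaque f Φ ε p B)) : Φ a ∈ WsLoc f ε p :=
  closure_minimal (stablePlaque_subset.trans (preimage_mono inter_subset_left))
    ((isClosed_WsLoc f ε p).preimage h.continuous) ha

theorem mem_stablePlaque_of_mem_closure (h : IsStableParam f e p l Φ) (hε : 0 ≤ ε) (hp : p ∈ B)
    {a : S} (ha : a ∈ closure (stablePlaque f Φ ε p B)) (haB : Φ a ∈ B) :
    a ∈ stablePlaque f Φ ε p B := by
  have hconn : IsPreconnected (insert a (stablePlaque f Φ ε p B)) :=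
    isPreconnected_stablePlaque.subset_closure (subset_insert _ _)
      (insert_subset ha subset_closure)
  have hsub : insert a (stablePlaque f Φ ε p B) ⊆ Φ ⁻¹' (WsLoc f ε p ∩ B) :=
    insert_subset ⟨h.apply_mem_WsLoc_of_mem_closure ha, haB⟩ stablePlaque_subset
  exact hconn.subset_connectedComponentIn
    (mem_insert_of_mem _ (h.zero_mem_stablePlaque hε hp)) hsub (mem_insert _ _)

variable [CompactSpace M]

theorem isBounded_stablePlaque (h : IsStableParam f e p l Φ) (hf : IsExpansive f α)
    (hε : ε ≤ α) : Bornology.IsBounded (stablePlaque f Φ ε p B) := by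
  obtain ⟨R, hR⟩ := h.exists_WsLoc_subset hf hε
  refine (isBounded_closedBall (x := (0 : S)) (r := R)).subset fun a ha => ?_
  obtain ⟨b, hb, hab⟩ := hR (stablePlaque_subset ha).1
  exact h.injective hab ▸ hb

theorem isOpen_stablePlaque [FiniteDimensional ℝ S] (h : IsStableParam f e p l Φ) (hε : 0 < ε)
    (hB : IsOpen B) (hhalf : WsLoc f ε p ∩ B ⊆ WsLoc f (ε / 2) p) :
    IsOpen (stablePlaque f Φ ε p B) := by
  refine IsOpen.connectedComponentIn (isOpen_iff_mem_nhds.2 fun a ha => ?_)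
  filter_upwards [h.eventually_mem_WsLoc a (half_pos hε),
    h.continuous.continuousAt.preimage_mem_nhds (hB.mem_nhds ha.2)] with a' ha' haB
  exact ⟨add_halves ε ▸ mem_WsLoc_trans (hhalf ha) ha', haB⟩

end IsStableParam

theorem exists_smul_mem_closure_diff {C : Set S} (hC : IsOpen C) (hb : Bornology.IsBounded C)
    (h0 : 0 ∈ C) {v : S} (hv : v ≠ 0) :
    ∃ T > (0 : ℝ), (∀ t ∈ Ico 0 T, t • v ∈ C) ∧ T • v ∈ closure C \ C := by
  have hcont : Continuous fun t : ℝ => t • v := by fun_prop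
  let A : Set ℝ := {t | 0 ≤ t ∧ t • v ∉ C}
  have hAclosed : IsClosed A := isClosed_Ici.inter (hC.isClosed_compl.preimage hcont)
  have hAne : A.Nonempty := by
    obtain ⟨R, hR, hCR⟩ := hb.exists_pos_norm_lt
    refine ⟨R / ‖v‖, by positivity, fun hmem => (hCR _ hmem).ne ?_⟩
    rw [norm_smul, Real.norm_of_nonneg (by positivity), div_mul_cancel₀ _ (norm_ne_zero_iff.2 hv)]
  have hAbdd : BddBelow A := ⟨0, fun t ht => ht.1⟩
  obtain ⟨hT0, hTC⟩ : sInf A ∈ A := hAclosed.csInf_mem hAne hAbdd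
  have hTpos : 0 < sInf A := hT0.lt_of_ne fun h => hTC (by rwa [← h, zero_smul])
  have hlt : ∀ t ∈ Ico 0 (sInf A), t • v ∈ C := fun t ht => by
    by_contra hcon
    exact ht.2.not_ge (csInf_le hAbdd ⟨ht.1, hcon⟩)
  have hTcl : sInf A ∈ closure (Ico 0 (sInf A)) := by
    rw [closure_Ico hTpos.ne]
    exact right_mem_Icc.2 hTpos.le
  exact ⟨sInf A, hTpos, hlt, map_mem_closure (f := fun t : ℝ => t • v) hcont hTcl hlt, hTC⟩

theorem IsStableParam.exists_ray_exit [CompactSpace M] [FiniteDimensional ℝ S]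
    (h : IsStableParam f e p l Φ) (hf : IsExpansive f α) (hε0 : 0 < ε) (hε : ε ≤ α) (hδ : 0 < δ)
    (hhalf : WsLoc f ε p ∩ ball p δ ⊆ WsLoc f (ε / 2) p) {v : S} (hv : v ≠ 0) :
    ∃ T > (0 : ℝ), (∀ t ∈ Icc 0 T, Φ (t • v) ∈ WsLoc f ε p) ∧
      (∀ t ∈ Ico 0 T, dist p (Φ (t • v)) < δ) ∧ dist p (Φ (T • v)) = δ := by
  have hp : p ∈ ball p δ := mem_ball_self hδ
  obtain ⟨T, hT, hmem, hTcl, hTC⟩ := exists_smul_mem_closure_diff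
    (h.isOpen_stablePlaque hε0 isOpen_ball hhalf) (h.isBounded_stablePlaque hf hε)
    (h.zero_mem_stablePlaque hε0.le hp) hv
  refine ⟨T, hT, fun t ht => ?_, fun t ht => mem_ball'.1 (stablePlaque_subset (hmem t ht)).2,
    le_antisymm ?_ (not_lt.1 fun hlt => hTC ?_)⟩
  · rcases ht.2.lt_or_eq with hlt | rfl
    · exact (stablePlaque_subset (hmem t ⟨ht.1, hlt⟩)).1
    · exact h.apply_mem_WsLoc_of_mem_closure hTcl
  · have hle := closure_ball_subset_closedBall (map_mem_closure h.continuous hTcl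
      fun a ha => (stablePlaque_subset ha).2)
    exact mem_closedBall'.1 hle
  · exact h.mem_stablePlaque_of_mem_closure hε0.le hp hTcl (mem_ball'.2 hlt)

end Plaque

section NoSinks

variable {S U : Type*} [NormedAddCommGroup S] [NormedSpace ℝ S] [NormedAddCommGroup U]
  [NormedSpace ℝ U] {f : M ≃ₜ M} {e : OpenPartialHomeomorph M (S × U)} {p : M} {l : ℕ}
  {Φ : S → M} {α ε : ℝ}

theorem IsStableParam.mem_range_of_mem_WsLoc [CompactSpace M] [FiniteDimensional ℝ S]
    (h : IsStableParam f e p l Φ) (hf : IsExpansive f α) (hα : 0 < α) (hε : ε ≤ α) {a : S} {z : M}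
    (hz : z ∈ WsLoc f ε (Φ a)) : z ∈ range Φ := by
  obtain ⟨N, hN⟩ := hf.exists_forall_dist_iterate_lt hε (half_pos hα)
  obtain ⟨k, hnear, hkN⟩ := (((tendsto_half_pow_smul a).eventually
    (h.eventually_mem_WsLoc 0 (half_pos hα))).and (eventually_ge_atTop N)).exists
  rw [h.apply_zero, ← h.iterate_iterate_apply, ← Function.iterate_mul] at hnear
  have hz' : f^[l * k] z ∈ WsLoc f (α / 2) (f^[l * k] (Φ a)) := mem_WsLoc.2 fun j => by
    rw [← Function.iterate_add_apply, ← Function.iterate_add_apply]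
    refine (hN _ _ hz _ (hkN.trans ?_)).le
    exact (Nat.le_mul_of_pos_left k h.chart.one_le).trans (Nat.le_add_left _ _)
  obtain ⟨R, hR⟩ := h.exists_WsLoc_subset hf le_rfl
  obtain ⟨b, -, hb⟩ := hR (add_halves α ▸ mem_WsLoc_trans hnear hz')
  refine ⟨(2 : ℝ) ^ k • b, (f.injective.iterate l).iterate k ?_⟩
  rw [h.iterate_iterate_apply, smul_smul, ← mul_pow, one_div, inv_mul_cancel₀ (two_ne_zero' ℝ),
    one_pow, one_smul, hb, Function.iterate_mul]

theorem IsStableParam.isOpenMap [Subsingleton U] (h : IsStableParam f e p l Φ) : IsOpenMap Φ := by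
  have hfst : Tendsto (fun y => (e y).1) (𝓝 p) (𝓝 0) :=
    (continuous_fst.tendsto (0 : S × U)).comp h.chart.tendsto_apply
  have hright : ∀ᶠ y in 𝓝 p, y ∈ e.source ∧ Φ (e y).1 = y := by
    filter_upwards [e.open_source.mem_nhds h.chart.mem_source, hfst.eventually h.eventually_eq]
      with y hy hΦ
    exact ⟨hy, by rw [hΦ, Subsingleton.elim (0 : U) (e y).2, Prod.mk.eta, e.left_inv hy]⟩
  refine IsOpenMap.of_nhds_le fun b => ?_
  obtain ⟨k, hk⟩ : ∃ k : ℕ, ∀ᶠ y in 𝓝 (Φ ((1 / 2 : ℝ) ^ k • b)), y ∈ e.source ∧ Φ (e y).1 = y :=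
    (((h.continuous.tendsto 0).comp (tendsto_half_pow_smul b)).eventually
      (h.apply_zero ▸ hright.eventually_nhds)).exists
  set c := (1 / 2 : ℝ) ^ k • b
  have hfc : (e (Φ c)).1 = c := h.injective hk.self_of_nhds.2
  have hfstc : Tendsto (fun y => (e y).1) (𝓝 (Φ c)) (𝓝 c) := by
    have hcont : ContinuousAt (fun y => (e y).1) (Φ c) := (e.continuousAt hk.self_of_nhds.1).fst
    rwa [ContinuousAt, hfc] at hcont
  have hopen : 𝓝 (Φ c) ≤ map Φ (𝓝 c) := fun s hs => by
    filter_upwards [hk, hfstc hs] with y hy hys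
    exact hy.2 ▸ hys
  have hscale : map ((1 / 2 : ℝ) ^ k • ·) (𝓝 b) = 𝓝 c :=
    (Homeomorph.smulOfNeZero ((1 / 2 : ℝ) ^ k) (by positivity)).map_nhds_eq b
  have hsemi : (f^[l])^[k] ∘ Φ = Φ ∘ ((1 / 2 : ℝ) ^ k • ·) :=
    funext (h.iterate_iterate_apply k)
  rw [← Filter.map_le_map_iff ((f.injective.iterate l).iterate k), Filter.map_map, hsemi,
    ← Filter.map_map, hscale]
  refine le_trans ?_ hopen
  rw [← h.iterate_iterate_apply]
  exact ((f.continuous.iterate l).iterate k).tendsto (Φ b)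

variable [CompactSpace M] [FiniteDimensional ℝ S]

theorem IsStableParam.isOpen_inter_WsLoc [Subsingleton U] (h : IsStableParam f e p l Φ)
    (hf : IsExpansive f α) (hα : 0 < α) {N : Set M} (hN : IsOpen N) {a : S}
    (hhalf : WsLoc f α (Φ a) ∩ N ⊆ WsLoc f (α / 2) (Φ a)) : IsOpen (N ∩ WsLoc f α (Φ a)) := by
  refine isOpen_iff_mem_nhds.2 fun z hz => ?_
  obtain ⟨b, rfl⟩ := h.mem_range_of_mem_WsLoc hf hα le_rfl hz.2
  refine inter_mem (hN.mem_nhds hz.1) (mem_of_superset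
    (h.isOpenMap.image_mem_nhds (h.eventually_mem_WsLoc b (half_pos hα))) ?_)
  rintro _ ⟨b', hb', rfl⟩
  exact add_halves α ▸ mem_WsLoc_trans (hhalf hz.symm) hb'

theorem IsStableParam.isClosed_range [LocallyConnectedSpace M] [Subsingleton U]
    (h : IsStableParam f e p l Φ) (hf : IsExpansive f α) (hα : 0 < α) : IsClosed (range Φ) := by
  obtain ⟨δ, hδ0, hδ⟩ := hf.exists_mem_WsLoc_of_dist_lt le_rfl (half_pos hα)
  refine isClosed_of_closure_subset fun x hx => ?_
  obtain ⟨N, hNball, hN, hxN, hNconn⟩ := locallyConnectedSpace_iff_subsets_isOpen_isConnected.1 ‹_›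
    x (ball x (δ / 2)) (ball_mem_nhds x (half_pos hδ0))
  obtain ⟨_, haN, a, rfl⟩ := mem_closure_iff.1 hx N hN hxN
  have hhalf : WsLoc f α (Φ a) ∩ N ⊆ WsLoc f (α / 2) (Φ a) := fun z hz =>
    hδ _ z hz.1 (add_halves δ ▸ (dist_triangle_right (Φ a) z x).trans_lt
      (add_lt_add (hNball haN) (hNball hz.2)))
  have hsub : N ⊆ N ∩ WsLoc f α (Φ a) :=
    hNconn.isPreconnected.subset_of_closure_inter_subset
      (h.isOpen_inter_WsLoc hf hα hN hhalf) ⟨Φ a, haN, haN, self_mem_WsLoc f hα.le _⟩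
      fun z hz => ⟨hz.2, closure_minimal inter_subset_right (isClosed_WsLoc f α _) hz.1⟩
  exact h.mem_range_of_mem_WsLoc hf hα le_rfl (hsub hxN).2

theorem not_isHyperbolicAt_of_subsingleton [PreconnectedSpace M] [LocallyConnectedSpace M]
    [Nontrivial S] [Subsingleton U] (hf : IsExpansive f α) (hα : 0 < α) (p : M) :
    ¬IsHyperbolicAt f S U p := by
  rintro ⟨e, l, he⟩
  obtain ⟨Φ, h⟩ := he.exists_isStableParam
  have hsurj : Function.Surjective Φ := by
    have : Nonempty M := ⟨p⟩
    exact range_eq_univ.1 (IsClopen.eq_univ ⟨h.isClosed_range hf hα, h.isOpenMap.isOpen_range⟩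
      (range_nonempty Φ))
  let H : S ≃ₜ M :=
    (Equiv.ofBijective Φ ⟨h.injective, hsurj⟩).toHomeomorphOfContinuousOpen h.continuous
      h.isOpenMap
  exact (NormedSpace.noncompactSpace ℝ S).noncompact_univ H.symm.compactSpace.isCompact_univ

end NoSinks

section CrossingPlaques

variable {S U Y : Type*} [NormedAddCommGroup S] [NormedAddCommGroup U] [NormedAddCommGroup Y]
  {C : Set S} {D : Set U} {Φs : S → M} {Φu : U → M} {χ : OpenPartialHomeomorph M Y}

theorem continuousOn_sub_of_mapsTo (hΦs : Continuous Φs) (hΦu : Continuous Φu)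
    (hC : MapsTo Φs (closure C) χ.source) (hD : MapsTo Φu (closure D) χ.source) :
    ContinuousOn (fun z => χ (Φu z.2) - χ (Φs z.1)) (closure C ×ˢ closure D) :=
  .sub (χ.continuousOn.comp (hΦu.comp continuous_snd).continuousOn fun _ hz => hD hz.2)
    (χ.continuousOn.comp (hΦs.comp continuous_fst).continuousOn fun _ hz => hC hz.1)

variable [NormedSpace ℝ S] [FiniteDimensional ℝ S] [NormedSpace ℝ U] [FiniteDimensional ℝ U]
  [NormedSpace ℝ Y]

theorem IsEssential.exists_eq_zero_of_segment {F G : S × U → Y} (hF : IsEssential F (C ×ˢ D))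
    (hC : IsOpen C) (hD : IsOpen D) (hCb : Bornology.IsBounded C) (hDb : Bornology.IsBounded D)
    (hFc : ContinuousOn F (closure C ×ˢ closure D)) (hGc : ContinuousOn G (closure C ×ˢ closure D))
    (hseg : ∀ x ∈ closure C, ∀ y ∈ closure D, x ∉ C ∨ y ∉ D → ∀ t ∈ Icc (0 : ℝ) 1,
      (1 - t) • F (x, y) + t • G (x, y) ≠ 0) :
    ∃ x ∈ closure C, ∃ y ∈ closure D, G (x, y) = 0 := by
  have hcl : closure (C ×ˢ D) = closure C ×ˢ closure D := closure_prod_eq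
  have hG : IsEssential G (C ×ˢ D) := by
    refine hF.of_homotopy (hCb.prod hDb).isCompact_closure
      (H := fun w => (1 - w.2) • F w.1 + w.2 • G w.1) ?_ (fun z _ => by simp) (fun z _ => by simp)
      fun z hz t ht => ?_
    · have hsub : MapsTo Prod.fst (closure (C ×ˢ D) ×ˢ Icc (0 : ℝ) 1) (closure C ×ˢ closure D) :=
        fun w hw => hcl ▸ hw.1
      exact .add (.smul (by fun_prop) (hFc.comp continuousOn_fst hsub))
        (.smul (by fun_prop) (hGc.comp continuousOn_fst hsub))
    · rw [(hC.prod hD).frontier_eq, hcl] at hz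
      exact hseg z.1 hz.1.1 z.2 hz.1.2 (not_and_or.1 hz.2) t ht
  obtain ⟨z, hz, hz0⟩ := hG G (hcl ▸ hGc) (eqOn_refl _ _)
  rw [hcl] at hz
  exact ⟨z.1, hz.1, z.2, hz.2, hz0⟩

variable {f : M ≃ₜ M} {α ε : ℝ} {e : OpenPartialHomeomorph M (S × U)} {q : M} {l : ℕ}

theorem isEssential_sub (hf : IsExpansive f α) (hε0 : 0 ≤ ε) (hε : 2 * ε ≤ α)
    (hs : IsStableParam f e q l Φs) (hu : IsStableParam f.symm (swapChart e) q l Φu)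
    (hC : IsOpen C) (hD : IsOpen D) (hCb : Bornology.IsBounded C) (hDb : Bornology.IsBounded D)
    (hC0 : 0 ∈ C) (hD0 : 0 ∈ D) (hCχ : MapsTo Φs (closure C) χ.source)
    (hDχ : MapsTo Φu (closure D) χ.source) (hCW : MapsTo Φs (closure C) (WsLoc f ε q))
    (hDW : MapsTo Φu (closure D) (WsLoc f.symm ε q)) :
    IsEssential (fun z => χ (Φu z.2) - χ (Φs z.1)) (C ×ˢ D) := by
  have hcl : closure (C ×ˢ D) = closure C ×ˢ closure D := closure_prod_eq
  refine isEssential_of_eventuallyEq_split (ψ := e.symm.trans χ) (hC.prod hD) (hCb.prod hDb)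
    ⟨hC0, hD0⟩ (hcl ▸ continuousOn_sub_of_mapsTo hs.continuous hu.continuous hCχ hDχ)
    (fun z hz hz0 => ?_) ?_ ?_
  · rw [hcl] at hz
    have hmeet : Φu z.2 = Φs z.1 := χ.injOn (hDχ hz.2) (hCχ hz.1) (sub_eq_zero.1 hz0)
    have hsu : Φs z.1 ∈ WsLoc f.symm ε q := hmeet ▸ hDW hz.2
    have hq : Φs z.1 = q := hf.eq_of_mem_WsLoc_of_mem_WsLoc_symm hε (hCW hz.1)
      (self_mem_WsLoc f hε0 q) hsu (self_mem_WsLoc f.symm hε0 q)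
    exact Prod.ext (hs.injective (hq.trans hs.apply_zero.symm))
      (hu.injective ((hmeet.trans hq).trans hu.apply_zero.symm))
  · rw [OpenPartialHomeomorph.trans_source]
    exact ⟨hs.chart.zero_mem_target, by
      rw [mem_preimage, hs.chart.symm_zero, ← hs.apply_zero]
      exact hCχ (subset_closure hC0)⟩
  · filter_upwards [(continuous_fst.tendsto (0 : S × U)).eventually hs.eventually_eq,
      (continuous_snd.tendsto (0 : S × U)).eventually hu.eventually_eq] with z hzs hzu
    rw [hzs, hzu]
    rfl

end CrossingPlaques

section Semicontinuity

theorem eventually_disjoint_WsLoc [CompactSpace M] (f : M ≃ₜ M) (ε : ℝ) {p : M} {K : Set M}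
    (hK : IsCompact K) (h : Disjoint K (WsLoc f ε p)) :
    ∀ᶠ q in 𝓝 p, Disjoint K (WsLoc f ε q) := by
  let Z : Set M := Prod.fst '' ({z : M × M | z.2 ∈ WsLoc f ε z.1} ∩ Prod.snd ⁻¹' K)
  have hZ : IsClosed Z := (((isClosed_setOf_mem_WsLoc f ε).inter
    (hK.isClosed.preimage continuous_snd)).isCompact.image continuous_fst).isClosed
  have hp : p ∉ Z := by
    rintro ⟨⟨_, y⟩, ⟨hyW, hyK⟩, rfl⟩
    exact Set.disjoint_left.1 h hyK hyW
  filter_upwards [hZ.isOpen_compl.mem_nhds hp] with q hq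
  exact Set.disjoint_left.2 fun y hyK hyW => hq ⟨(q, y), ⟨hyW, hyK⟩, rfl⟩

theorem exists_continuous_ne_zero_near_of_finrank_lt {X Y : Type*} [NormedAddCommGroup X]
    [NormedSpace ℝ X] [FiniteDimensional ℝ X] [NormedAddCommGroup Y] [NormedSpace ℝ Y]
    [FiniteDimensional ℝ Y] (hd : Module.finrank ℝ X < Module.finrank ℝ Y) {g : X → Y} {K : Set X}
    (hK : IsClosed K) (hg : ContinuousOn g K) {η : ℝ} (hη : 0 < η) :
    ∃ g' : X → Y, Continuous g' ∧ (∀ x, g' x ≠ 0) ∧ ∀ x ∈ K, ‖g x - g' x‖ ≤ η := by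
  obtain ⟨g₁, hg₁, hg₁g⟩ := exists_continuous_eqOn hK hg
  obtain ⟨g₂, hg₂, hnear, -⟩ :=
    hg₁.exists_contDiff_approx 1 (ε := fun _ => η / 2) continuous_const fun _ => half_pos hη
  obtain ⟨c, hc, hcη⟩ := (ContDiff.dense_compl_range_of_finrank_lt_finrank
    (by exact_mod_cast hg₂) hd).exists_mem_open isOpen_ball ⟨0, mem_ball_self (half_pos hη)⟩
  refine ⟨fun x => g₂ x - c, hg₂.continuous.sub continuous_const,
    fun x hx => hc ⟨x, sub_eq_zero.1 hx⟩, fun x hx => ?_⟩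
  have hx₂ : ‖g x - g₂ x‖ < η / 2 := by
    rw [← hg₁g hx, ← dist_eq_norm, dist_comm]
    exact hnear x
  rw [← sub_add]
  exact (norm_add_le _ _).trans (by linarith [mem_ball_zero_iff.1 hcη])

variable {S U S' U' : Type*} [NormedAddCommGroup S] [NormedSpace ℝ S] [NormedAddCommGroup U]
  [NormedSpace ℝ U] {f : M ≃ₜ M} {α ε R : ℝ} {e : OpenPartialHomeomorph M (S × U)} {p q : M} {l : ℕ}

theorem segment_ne_zero_of_norm_bounds {u w : S × U} {v : S} (hR : 0 < R) (hu : ‖u.2‖ < R / 2)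
    (hw : ‖w.1‖ < R / 2) (hv : ‖u.1 - v‖ ≤ R / 4) (h : R ≤ ‖u.1‖ ∨ R ≤ ‖w.2‖) {t : ℝ}
    (ht : t ∈ Icc (0 : ℝ) 1) : (1 - t) • (w - u) + t • (-v, w.2) ≠ 0 := by
  have ht' : 1 - t ∈ Icc (0 : ℝ) 1 := ⟨sub_nonneg.2 ht.2, sub_le_self 1 ht.1⟩
  intro h0
  have h1 : (1 - t) • (w.1 - u.1) + t • -v = 0 := congrArg Prod.fst h0
  have h2 : (1 - t) • (w.2 - u.2) + t • w.2 = 0 := congrArg Prod.snd h0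
  rcases h with hu1 | hw2
  · have hu_eq : u.1 = (1 - t) • w.1 + t • (u.1 - v) := by
      rw [← sub_eq_zero, ← neg_eq_zero, ← h1]
      module
    have hnorm := norm_add_le ((1 - t) • w.1) (t • (u.1 - v))
    rw [← hu_eq] at hnorm
    linarith [norm_smul_le_of_mem_Icc ht' w.1, norm_smul_le_of_mem_Icc ht (u.1 - v)]
  · have hw_eq : w.2 = (1 - t) • u.2 := by
      rw [← sub_eq_zero, ← h2]
      module
    linarith [norm_smul_le_of_mem_Icc ht' u.2, congrArg norm hw_eq]

theorem IsLinearizingChart.eventually_box (he : IsLinearizingChart f e p l)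
    {δ : ℝ} (hδ : 0 < δ) :
    ∀ᶠ R in 𝓝[>] 0, closedBall (0 : S × U) R ⊆ e.target ∧
      ∀ᶠ q in 𝓝 p, q ∈ e.symm '' ball 0 R ∧ e.symm '' ball 0 R ⊆ ball q δ := by
  have hsymm : Tendsto e.symm (𝓝 0) (𝓝 p) :=
    he.symm_zero ▸ e.continuousAt_symm he.zero_mem_target
  obtain ⟨r, hr, hball⟩ := Metric.eventually_nhds_iff_ball.1
    ((e.open_target.eventually_mem he.zero_mem_target).and
      (hsymm.eventually (ball_mem_nhds p (half_pos hδ))))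
  filter_upwards [Ioo_mem_nhdsGT hr] with R hR
  have htarget : closedBall (0 : S × U) R ⊆ e.target :=
    fun z hz => (hball z (closedBall_subset_ball hR.2 hz)).1
  have hopen : IsOpen (e.symm '' ball 0 R) :=
    e.symm.isOpen_image_of_subset_source isOpen_ball (ball_subset_closedBall.trans htarget)
  refine ⟨htarget, ?_⟩
  filter_upwards [hopen.mem_nhds ⟨0, mem_ball_self hR.1, he.symm_zero⟩,
    ball_mem_nhds p (half_pos hδ)] with q hq hqp
  refine ⟨hq, ?_⟩
  rintro _ ⟨z, hz, rfl⟩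
  have hzp := (hball z (ball_subset_ball hR.2.le hz)).2
  exact (dist_triangle_right _ _ p).trans_lt (add_halves δ ▸ add_lt_add hzp hqp)

variable [CompactSpace M] [FiniteDimensional ℝ S] [FiniteDimensional ℝ U] [NormedAddCommGroup S']
  [NormedSpace ℝ S'] [FiniteDimensional ℝ S'] [NormedAddCommGroup U'] [NormedSpace ℝ U']

theorem IsLinearizingChart.eventually_norm_snd_lt (he : IsLinearizingChart f e p l)
    (hf : IsExpansive f α) (hε : ε ≤ α) :
    ∀ᶠ R in 𝓝[>] 0, ∀ᶠ q in 𝓝 p, ∀ z ∈ closedBall (0 : S × U) R,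
      e.symm z ∈ WsLoc f ε q → ‖z.2‖ < R / 2 := by
  have hsymm : Tendsto e.symm (𝓝 0) (𝓝 p) :=
    he.symm_zero ▸ e.continuousAt_symm he.zero_mem_target
  obtain ⟨r, hr, hball⟩ := Metric.eventually_nhds_iff_ball.1
    ((e.open_target.eventually_mem he.zero_mem_target).and
      (hsymm.eventually (he.eventually_snd_eq_zero hf hε)))
  filter_upwards [Ioo_mem_nhdsGT hr] with R hR
  have hsub : closedBall (0 : S × U) R ⊆ ball 0 r := closedBall_subset_ball hR.2
  let K : Set (S × U) := closedBall 0 R ∩ {z | R / 2 ≤ ‖z.2‖}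
  have hK : IsCompact (e.symm '' K) :=
    ((isCompact_closedBall _ _).inter_right
      (isClosed_le continuous_const (by fun_prop))).image_of_continuousOn
      (e.continuousOn_symm.mono fun z hz => (hball z (hsub hz.1)).1)
  have hdisj : Disjoint (e.symm '' K) (WsLoc f ε p) := by
    refine Set.disjoint_left.2 ?_
    rintro _ ⟨z, ⟨hzR, hz⟩, rfl⟩ hzW
    have hz0 := (hball z (hsub hzR)).2 hzW
    rw [e.right_inv (hball z (hsub hzR)).1] at hz0
    rw [mem_ofPred_eq, hz0, norm_zero] at hz
    linarith [hR.1]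
  filter_upwards [eventually_disjoint_WsLoc f ε hK hdisj] with q hq z hz hzW
  exact not_le.1 fun hle => Set.disjoint_left.1 hq ⟨z, ⟨hz, hle⟩, rfl⟩ hzW

theorem IsStableParam.exists_plaque_in_box {e' : OpenPartialHomeomorph M (S' × U')} {l' : ℕ}
    {Φ : S' → M} (h : IsStableParam f e' q l' Φ) (hf : IsExpansive f α) (hε0 : 0 < ε) (hε : ε ≤ α)
    (hR : closedBall (0 : S × U) R ⊆ e.target) (hq : q ∈ e.symm '' ball 0 R)
    (hhalf : WsLoc f ε q ∩ e.symm '' ball 0 R ⊆ WsLoc f (ε / 2) q)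
    (hsnd : ∀ z ∈ closedBall (0 : S × U) R, e.symm z ∈ WsLoc f ε q → ‖z.2‖ < R / 2) :
    ∃ C : Set S', IsOpen C ∧ Bornology.IsBounded C ∧ 0 ∈ C ∧ ∀ a ∈ closure C,
      Φ a ∈ WsLoc f ε q ∧ Φ a ∈ e.source ∧ ‖(e (Φ a)).2‖ < R / 2 ∧
        (a ∉ C → R ≤ ‖(e (Φ a)).1‖) := by
  have hopen : IsOpen (e.symm '' ball 0 R) :=
    e.symm.isOpen_image_of_subset_source isOpen_ball (ball_subset_closedBall.trans hR)
  refine ⟨stablePlaque f Φ ε q (e.symm '' ball 0 R), h.isOpen_stablePlaque hε0 hopen hhalf,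
    h.isBounded_stablePlaque hf hε, h.zero_mem_stablePlaque hε0.le hq, fun a ha => ?_⟩
  have hcompact : IsCompact (e.symm '' closedBall 0 R) :=
    (isCompact_closedBall _ _).image_of_continuousOn (e.continuousOn_symm.mono hR)
  obtain ⟨z, hz, hza⟩ : Φ a ∈ e.symm '' closedBall 0 R :=
    closure_minimal (image_mono ball_subset_closedBall) hcompact.isClosed
      (map_mem_closure h.continuous ha fun b hb => (stablePlaque_subset hb).2)
  have haW : Φ a ∈ WsLoc f ε q := h.apply_mem_WsLoc_of_mem_closure ha
  have hz2 : ‖z.2‖ < R / 2 := hsnd z hz (hza ▸ haW)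
  rw [← hza, e.right_inv (hR hz)]
  refine ⟨hza ▸ haW, e.map_target (hR hz), hz2, fun haC => ?_⟩
  have hzR : R ≤ ‖z‖ := not_lt.1 fun hlt => haC
    (h.mem_stablePlaque_of_mem_closure hε0.le hq ha ⟨z, mem_ball_zero_iff.2 hlt, hza⟩)
  exact (le_max_iff.1 hzR).resolve_right (by linarith [norm_nonneg z.2])

theorem IsLinearizingChart.eventually_exists_plaque (he : IsLinearizingChart f e p l)
    (hf : IsExpansive f α) (hε0 : 0 < ε) (hε : ε ≤ α) :
    ∀ᶠ R in 𝓝[>] 0, ∀ᶠ q in 𝓝 p,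
      ∀ (e' : OpenPartialHomeomorph M (S' × U')) (l' : ℕ) (Φ : S' → M),
        IsStableParam f e' q l' Φ → ∃ C : Set S', IsOpen C ∧ Bornology.IsBounded C ∧ 0 ∈ C ∧
          ∀ a ∈ closure C, Φ a ∈ WsLoc f ε q ∧ Φ a ∈ e.source ∧ ‖(e (Φ a)).2‖ < R / 2 ∧
            (a ∉ C → R ≤ ‖(e (Φ a)).1‖) := by
  obtain ⟨δ, hδ, hshrink⟩ := hf.exists_mem_WsLoc_of_dist_lt hε (half_pos hε0)
  filter_upwards [he.eventually_box hδ, he.eventually_norm_snd_lt hf hε] with R ⟨hR, hbox⟩ hsnd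
  filter_upwards [hbox, hsnd] with q ⟨hq, hqδ⟩ hq2 e' l' Φ h
  exact h.exists_plaque_in_box hf hε0 hε hR hq
    (fun y hy => hshrink q y hy.1 (mem_ball'.1 (hqδ hy.2))) hq2

theorem IsHyperbolicAt.eventually_not_of_finrank_lt [FiniteDimensional ℝ U']
    (hp : IsHyperbolicAt f S U p) (hd : Module.finrank ℝ S' < Module.finrank ℝ S)
    (hf : IsExpansive f α) (hα : 0 < α) : ∀ᶠ q in 𝓝 p, ¬IsHyperbolicAt f S' U' q := by
  obtain ⟨e, l, he⟩ := hp
  have hε : α / 2 ≤ α := half_le_self hα.le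
  obtain ⟨R, hsR, huR, hR⟩ := ((he.eventually_exists_plaque (S' := S') (U' := U') hf
    (half_pos hα) hε).and ((he.symm.eventually_exists_plaque (S' := U') (U' := S') hf.symm
      (half_pos hα) hε).and self_mem_nhdsWithin)).exists
  filter_upwards [hsR, huR] with q hqs hqu
  rintro ⟨e', l', he'⟩
  obtain ⟨Φs, hs⟩ := he'.exists_isStableParam
  obtain ⟨Φu, hu⟩ := he'.symm.exists_isStableParam
  obtain ⟨C, hC, hCb, hC0, hCq⟩ := hqs e' l' Φs hs
  obtain ⟨D, hD, hDb, hD0, hDq⟩ := hqu _ l' Φu hu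
  have hCe : MapsTo Φs (closure C) e.source := fun a ha => (hCq a ha).2.1
  have hDe : MapsTo Φu (closure D) e.source := fun a ha => (hDq a ha).2.1
  obtain ⟨g, hg, hg0, hgC⟩ := exists_continuous_ne_zero_near_of_finrank_lt hd isClosed_closure
    (e.continuousOn.comp hs.continuous.continuousOn hCe).fst
    (show 0 < R / 4 from div_pos hR four_pos)
  have hGc : ContinuousOn (fun z : S' × U' => (-g z.1, (e (Φu z.2)).2))
      (closure C ×ˢ closure D) :=
    (hg.comp continuous_fst).neg.continuousOn.prodMk
      ((e.continuousOn.comp hu.continuous.continuousOn hDe).snd.comp continuousOn_snd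
        fun z hz => hz.2)
  obtain ⟨x, -, y, -, hxy⟩ := (isEssential_sub hf (half_pos hα).le (by linarith) hs hu hC hD hCb hDb
    hC0 hD0 hCe hDe (fun a ha => (hCq a ha).1)
    fun a ha => (hDq a ha).1).exists_eq_zero_of_segment hC hD hCb hDb
    (continuousOn_sub_of_mapsTo hs.continuous hu.continuous hCe hDe) hGc
    fun x hx y hy hxy t ht => segment_ne_zero_of_norm_bounds hR (hCq x hx).2.2.1
      (hDq y hy).2.2.1 (hgC x hx) (hxy.imp (hCq x hx).2.2.2 (hDq y hy).2.2.2) ht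
  exact hg0 x (neg_eq_zero.1 (congrArg Prod.fst hxy))

end Semicontinuity

/-! ### Separating systems -/

theorem mem_connectedComponentIn_of_isPreconnected {X : Type*} [TopologicalSpace X]
    {F s : Set X} {c u v : X} (hs : IsPreconnected s) (hsF : s ⊆ F) (hu : u ∈ s) (hv : v ∈ s)
    (huc : u ∈ connectedComponentIn F c) : v ∈ connectedComponentIn F c := by
  rw [connectedComponentIn_eq huc]
  exact hs.subset_connectedComponentIn hu hsF hv

section Patches

variable {f : M ≃ₜ M} {α ε δ : ℝ} {B : Set M} {x y : M}

theorem exists_isPreconnected_disjoint_WsLoc [LocallyConnectedSpace M] (hy : y ∉ WsLoc f ε x)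
    (hB : B ∈ 𝓝 y) : ∃ V, IsOpen V ∧ IsPreconnected V ∧ y ∈ V ∧ V ⊆ B ∧
      ∀ᶠ p in 𝓝 x, Disjoint V (WsLoc f ε p) := by
  have hxy : {z : M × M | z.2 ∈ WsLoc f ε z.1}ᶜ ∈ 𝓝 (x, y) :=
    (isClosed_setOf_mem_WsLoc f ε).isOpen_compl.mem_nhds hy
  rw [nhds_prod_eq, mem_prod_iff] at hxy
  obtain ⟨A, hA, A', hA', hAA'⟩ := hxy
  obtain ⟨V, hV, hVo, hyV, hVc⟩ := locallyConnectedSpace_iff_subsets_isOpen_isConnected.1 ‹_› y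
    (A' ∩ B) (inter_mem hA' hB)
  refine ⟨V, hVo, hVc.isPreconnected, hyV, hV.trans inter_subset_right, ?_⟩
  filter_upwards [hA] with p hp
  exact Set.disjoint_left.2 fun v hv => hAA' (mk_mem_prod hp (hV hv).1)

/-- A cover `𝒱` of the points at distance `δ` from `p` in the local unstable set of `p` by
connected subsets of `B` missing the local stable set of `p`. The same cover serves all points
near a given one, so that it compares the complements in `B` of different stable plaques. -/
structure IsPatchCover (f : M ≃ₜ M) (ε δ : ℝ) (B : Set M) (𝒱 : Set (Set M)) (p : M) : Prop where
  isPreconnected : ∀ V ∈ 𝒱, IsPreconnected V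
  subset : ∀ V ∈ 𝒱, V ⊆ B
  disjoint : ∀ V ∈ 𝒱, Disjoint V (WsLoc f ε p)
  exists_mem : ∀ y ∈ WsLoc f.symm ε p, dist p y = δ → ∃ V ∈ 𝒱, y ∈ V

theorem eventually_forall_mem_of_dist_eq [CompactSpace M] {O : Set M} (hO : IsOpen O)
    (h : ∀ y ∈ WsLoc f ε x, dist x y = δ → y ∈ O) :
    ∀ᶠ p in 𝓝 x, ∀ y ∈ WsLoc f ε p, dist p y = δ → y ∈ O := by
  let Z : Set (M × M) := {z | z.2 ∈ WsLoc f ε z.1} ∩ ({z | dist z.1 z.2 = δ} ∩ Prod.snd ⁻¹' Oᶜ)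
  have hZ : IsClosed Z := (isClosed_setOf_mem_WsLoc f ε).inter
    ((isClosed_eq continuous_dist continuous_const).inter
      (hO.isClosed_compl.preimage continuous_snd))
  have hx : x ∉ Prod.fst '' Z := by
    rintro ⟨⟨_, y⟩, ⟨hyW, hyδ, hyO⟩, rfl⟩
    exact hyO (h y hyW hyδ)
  filter_upwards [(isClosedMap_fst_of_compactSpace Z hZ).isOpen_compl.mem_nhds hx] with p hp y hy hd
  by_contra hyO
  exact hp ⟨(p, y), ⟨hy, hd, hyO⟩, rfl⟩

theorem _root_.IsExpansive.exists_isPatchCover [CompactSpace M] [LocallyConnectedSpace M]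
    (hf : IsExpansive f α) (hε0 : 0 ≤ ε) (hε : 2 * ε ≤ α) (hδ : 0 < δ) (hB : IsOpen B)
    (hxB : closedBall x δ ⊆ B) : ∃ 𝒱 : Set (Set M), 𝒱.Finite ∧
      (∀ V ∈ 𝒱, IsOpen V ∧ V.Nonempty) ∧ ∀ᶠ p in 𝓝 x, IsPatchCover f ε δ B 𝒱 p := by
  let 𝒰 : Set (Set M) := {V | (IsOpen V ∧ V.Nonempty) ∧ IsPreconnected V ∧ V ⊆ B ∧
    ∀ᶠ p in 𝓝 x, Disjoint V (WsLoc f ε p)}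
  have hΓ : IsCompact (WsLoc f.symm ε x ∩ {y | dist x y = δ}) := ((isClosed_WsLoc f.symm ε x).inter
    (isClosed_eq (by fun_prop) continuous_const)).isCompact
  have cover : WsLoc f.symm ε x ∩ {y | dist x y = δ} ⊆ ⋃ V ∈ 𝒰, V := by
    rintro y ⟨hyu, hyδ⟩
    have hys : y ∉ WsLoc f ε x := fun hys => hδ.ne (by
      rw [← hyδ, hf.eq_of_mem_WsLoc_of_mem_WsLoc_symm hε hys (self_mem_WsLoc f hε0 x) hyu
        (self_mem_WsLoc f.symm hε0 x), dist_self])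
    obtain ⟨V, hVo, hVc, hyV, hVB, hVd⟩ := exists_isPreconnected_disjoint_WsLoc hys
      (hB.mem_nhds (hxB (mem_closedBall'.2 hyδ.le)))
    exact mem_biUnion (show V ∈ 𝒰 from ⟨⟨hVo, y, hyV⟩, hVc, hVB, hVd⟩) hyV
  obtain ⟨𝒱, h𝒱, hfin, h𝒱cover⟩ := hΓ.elim_finite_subcover_image (fun V hV => hV.1.1) cover
  refine ⟨𝒱, hfin, fun V hV => (h𝒱 hV).1, ?_⟩
  filter_upwards [hfin.eventually_all.2 fun V hV => (h𝒱 hV).2.2.2,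
    eventually_forall_mem_of_dist_eq (isOpen_biUnion fun V hV => (h𝒱 hV).1.1)
      fun y hy hd => h𝒱cover ⟨hy, hd⟩] with p hdisj hmem
  exact ⟨fun V hV => (h𝒱 hV).2.1, fun V hV => (h𝒱 hV).2.2.1, hdisj,
    fun y hy hd => by simpa only [mem_iUnion, exists_prop] using hmem y hy hd⟩

end Patches

/-- `J` is a connected piece of the local unstable set of `p` that contains `p`, stays within
distance `δ` of `p`, and reaches this distance at `a`. -/
structure IsUnstableArm (f : M ≃ₜ M) (ε δ : ℝ) (p a : M) (J : Set M) : Prop where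
  isPreconnected : IsPreconnected J
  self_mem : p ∈ J
  end_mem : a ∈ J
  dist_end : dist p a = δ
  subset_WsLoc : J ⊆ WsLoc f.symm ε p
  subset_closedBall : J ⊆ closedBall p δ

/-- `D` is a compact piece of the local stable set of `p`, connected inside `B`, that separates
`a` from `b` in `B`. -/
structure IsSeparatingPlaque (f : M ≃ₜ M) (ε : ℝ) (B : Set M) (p a b : M) (D : Set M) :
    Prop where
  isCompact : IsCompact D
  self_mem : p ∈ D
  subset_WsLoc : D ⊆ WsLoc f ε p
  isPreconnected_inter : IsPreconnected (D ∩ B)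
  separates : b ∉ connectedComponentIn (B \ D) a

/-- Two sets of points `P` and `Q` with dense union, such that local unstable sets of points of
either set, and local stable sets of points of `P`, miss the closure of the other set. There is an
unstable arm `J p` ending at `a p` at each point `p` of either set in the window `N`, and, at each
point `p` of `P` in `N`, a second end `b p` of `J p` and a stable plaque `D p` separating the two
ends in `B`. -/
structure IsSeparatingSystem (f : M ≃ₜ M) (ε δ : ℝ) (P Q B N : Set M) (D J : M → Set M)
    (a b : M → M) : Prop where
  closure_union_closure : closure P ∪ closure Q = univ
  stable_notMem : ∀ p ∈ P, ∀ y ∈ WsLoc f ε p, y ∉ closure Q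
  unstable_notMem : ∀ p ∈ P, ∀ y ∈ WsLoc f.symm (2 * ε) p, y ∉ closure Q
  unstable_notMem' : ∀ q ∈ Q, ∀ y ∈ WsLoc f.symm ε q, y ∉ closure P
  isOpen_chartBall : IsOpen B
  isPreconnected_chartBall : IsPreconnected B
  isOpen_window : IsOpen N
  closedBall_subset : ∀ x ∈ N, closedBall x δ ⊆ B
  arm : ∀ p ∈ (P ∪ Q) ∩ N, IsUnstableArm f ε δ p (a p) (J p)
  arm' : ∀ p ∈ P ∩ N, IsUnstableArm f ε δ p (b p) (J p)
  plaque : ∀ p ∈ P ∩ N, IsSeparatingPlaque f ε B p (a p) (b p) (D p)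

theorem IsSeparatingPlaque.inter_nonempty {f : M ≃ₜ M} {ε : ℝ} {B D J V V' : Set M}
    {p a b a' b' : M} (hD : IsSeparatingPlaque f ε B p a b D) (hJ : IsPreconnected J)
    (hJB : J ⊆ B) (hV : IsPreconnected V) (hVD : V ⊆ B \ D) (hV' : IsPreconnected V')
    (hVD' : V' ⊆ B \ D) (ha : a ∈ V) (ha' : a' ∈ V ∩ J) (hb : b ∈ V') (hb' : b' ∈ V' ∩ J) :
    (J ∩ D).Nonempty := by
  by_contra hJD
  have hJD' : J ⊆ B \ D := fun z hz => ⟨hJB hz, fun hzD => hJD ⟨z, hz, hzD⟩⟩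
  have haa' : a' ∈ connectedComponentIn (B \ D) a :=
    hV.subset_connectedComponentIn ha hVD ha'.1
  have hab' : b' ∈ connectedComponentIn (B \ D) a :=
    mem_connectedComponentIn_of_isPreconnected hJ hJD' ha'.2 hb'.2 haa'
  exact hD.separates (mem_connectedComponentIn_of_isPreconnected hV' hVD' hb'.1 hb hab')

/-- The points `x` that are limits of points `p` of `P` whose plaque `D p` separates `c` from all
points of `Q` within distance `ρ` of `x`. -/
def sideSet (P Q B N : Set M) (D : M → Set M) (c : M) (ρ : ℝ) : Set M :=
  {x | ∃ᶠ p in 𝓝 x, p ∈ P ∩ N ∧ c ∈ B \ D p ∧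
    ∀ q ∈ Q ∩ N, dist q x < ρ → q ∉ connectedComponentIn (B \ D p) c}

section SeparatingSystem

variable {f : M ≃ₜ M} {α ε δ ρ ρ' : ℝ} {P Q B N : Set M} {D J : M → Set M} {a b : M → M}
  {x y c : M}

theorem sideSet_anti (h : ρ' ≤ ρ) : sideSet P Q B N D c ρ ⊆ sideSet P Q B N D c ρ' :=
  fun _ hx => hx.mono fun _ ⟨hp, hc, hq⟩ => ⟨hp, hc, fun q hqQ hqx => hq q hqQ (hqx.trans_le h)⟩

theorem closure_sideSet_subset (hρ : 0 < ρ) :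
    closure (sideSet P Q B N D c ρ) ⊆ sideSet P Q B N D c (ρ / 2) := by
  intro x hx
  refine frequently_frequently_nhds.1 (((mem_closure_iff_frequently.1 hx).and_eventually
    (ball_mem_nhds x (half_pos hρ))).mono fun y ⟨hy, hyx⟩ => hy.mono ?_)
  rintro p ⟨hp, hc, hq⟩
  refine ⟨hp, hc, fun q hqQ hqx => hq q hqQ ?_⟩
  linarith [dist_triangle_right q y x, mem_ball.1 hyx]

namespace IsSeparatingSystem

theorem window_subset (h : IsSeparatingSystem f ε δ P Q B N D J a b) (hδ : 0 ≤ δ) : N ⊆ B :=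
  fun x hx => h.closedBall_subset x hx (mem_closedBall_self hδ)

theorem patch_subset (h : IsSeparatingSystem f ε δ P Q B N D J a b) {𝒱 : Set (Set M)} {p : M}
    (hp : p ∈ P ∩ N) (h𝒱 : IsPatchCover f ε δ B 𝒱 p) {V : Set M} (hV : V ∈ 𝒱) : V ⊆ B \ D p :=
  subset_sdiff.2 ⟨h𝒱.subset V hV, (h𝒱.disjoint V hV).mono_right (h.plaque p hp).subset_WsLoc⟩

theorem arm_subset (h : IsSeparatingSystem f ε δ P Q B N D J a b) {p q : M} (hp : p ∈ P ∩ N)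
    (hq : q ∈ Q ∩ N) : J q ⊆ B \ D p := by
  have hJ := h.arm q ⟨Or.inr hq.1, hq.2⟩
  refine fun z hz => ⟨h.closedBall_subset q hq.2 (hJ.subset_closedBall hz), fun hzD => ?_⟩
  have hzP : z ∉ closure P := h.unstable_notMem' q hq.1 z (hJ.subset_WsLoc hz)
  have hzQ : z ∉ closure Q := h.stable_notMem p hp.1 z ((h.plaque p hp).subset_WsLoc hzD)
  exact (h.closure_union_closure ▸ mem_univ z : z ∈ closure P ∪ closure Q).elim hzP hzQ

theorem exists_mem_patch (h : IsSeparatingSystem f ε δ P Q B N D J a b) {𝒱 : Set (Set M)}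
    {p : M} (hp : p ∈ P ∩ N) (h𝒱 : IsPatchCover f ε δ B 𝒱 p) :
    (∃ V ∈ 𝒱, a p ∈ V) ∧ ∃ V ∈ 𝒱, b p ∈ V := by
  have ha := h.arm p ⟨Or.inl hp.1, hp.2⟩
  have hb := h.arm' p hp
  exact ⟨h𝒱.exists_mem _ (ha.subset_WsLoc ha.end_mem) ha.dist_end,
    h𝒱.exists_mem _ (hb.subset_WsLoc hb.end_mem) hb.dist_end⟩

theorem exists_mem_closure_inter_nonempty [CompactSpace M] [LocallyConnectedSpace M]
    (h : IsSeparatingSystem f ε δ P Q B N D J a b) (hf : IsExpansive f α) (hε0 : 0 ≤ ε)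
    (hε : 2 * ε ≤ α) (hδ : 0 < δ) {P' : Set M} (hP' : P' ⊆ P) (hxN : x ∈ N)
    (hxP' : x ∈ closure P') :
    ∃ p₀ ∈ P' ∩ N, x ∈ closure {p ∈ P ∩ N | (J p ∩ D p₀).Nonempty} := by
  obtain ⟨𝒱, hfin, -, h𝒱⟩ :=
    hf.exists_isPatchCover hε0 hε hδ h.isOpen_chartBall (h.closedBall_subset x hxN)
  have : Finite 𝒱 := hfin
  have freq : ∃ᶠ p in 𝓝 x, ∃ V : 𝒱 × 𝒱, (p ∈ P' ∩ N ∧ IsPatchCover f ε δ B 𝒱 p) ∧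
      a p ∈ V.1.1 ∧ b p ∈ V.2.1 := by
    refine ((mem_closure_iff_frequently.1 hxP').and_eventually
      ((h.isOpen_window.eventually_mem hxN).and h𝒱)).mono ?_
    rintro p ⟨hpP', hpN, hp𝒱⟩
    obtain ⟨⟨V, hV, haV⟩, V', hV', hbV'⟩ := h.exists_mem_patch ⟨hP' hpP', hpN⟩ hp𝒱
    exact ⟨(⟨V, hV⟩, ⟨V', hV'⟩), ⟨⟨hpP', hpN⟩, hp𝒱⟩, haV, hbV'⟩
  obtain ⟨⟨V, V'⟩, hVV'⟩ := frequently_exists.1 freq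
  obtain ⟨p₀, ⟨hp₀, hp₀𝒱⟩, ha₀, hb₀⟩ := hVV'.exists
  refine ⟨p₀, hp₀, mem_closure_iff_frequently.2 (hVV'.mono ?_)⟩
  rintro p ⟨⟨hp, hp𝒱⟩, ha, hb⟩
  have hpP : p ∈ P ∩ N := ⟨hP' hp.1, hp.2⟩
  have hp₀P : p₀ ∈ P ∩ N := ⟨hP' hp₀.1, hp₀.2⟩
  have hJ := h.arm p ⟨Or.inl hpP.1, hp.2⟩
  exact ⟨hpP, (h.plaque p₀ hp₀P).inter_nonempty hJ.isPreconnected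
    (hJ.subset_closedBall.trans (h.closedBall_subset p hp.2))
    (hp𝒱.isPreconnected V V.2) (h.patch_subset hp₀P hp₀𝒱 V.2)
    (hp𝒱.isPreconnected V' V'.2) (h.patch_subset hp₀P hp₀𝒱 V'.2)
    ha₀ ⟨ha, hJ.end_mem⟩ hb₀ ⟨hb, (h.arm' p hpP).end_mem⟩⟩

theorem exists_patch_notMem (h : IsSeparatingSystem f ε δ P Q B N D J a b) {𝒱 : Set (Set M)}
    {c : 𝒱 → M} (hc : ∀ V, c V ∈ V.1) {p : M} (hp : p ∈ P ∩ N) (h𝒱 : IsPatchCover f ε δ B 𝒱 p)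
    (x : M) : ∃ V, x ∉ connectedComponentIn (B \ D p) (c V) := by
  by_contra! hx
  obtain ⟨⟨V, hV, haV⟩, V', hV', hbV'⟩ := h.exists_mem_patch hp h𝒱
  have same : connectedComponentIn (B \ D p) (c ⟨V, hV⟩) =
      connectedComponentIn (B \ D p) (c ⟨V', hV'⟩) := by
    rw [connectedComponentIn_eq (hx ⟨V, hV⟩), connectedComponentIn_eq (hx ⟨V', hV'⟩)]
  have ha : a p ∈ connectedComponentIn (B \ D p) (c ⟨V, hV⟩) :=
    (h𝒱.isPreconnected V hV).subset_connectedComponentIn (hc ⟨V, hV⟩)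
      (h.patch_subset hp h𝒱 hV) haV
  have hb : b p ∈ connectedComponentIn (B \ D p) (c ⟨V', hV'⟩) :=
    (h𝒱.isPreconnected V' hV').subset_connectedComponentIn (hc ⟨V', hV'⟩)
      (h.patch_subset hp h𝒱 hV') hbV'
  refine (h.plaque p hp).separates ?_
  rwa [← connectedComponentIn_eq ha, same]

theorem mem_connectedComponentIn_of_patches (h : IsSeparatingSystem f ε δ P Q B N D J a b)
    {𝒱 : Set (Set M)} {c : 𝒱 → M} (hc : ∀ V, c V ∈ V.1) {p p' q z : M} (hp : p ∈ P ∩ N)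
    (hp𝒱 : IsPatchCover f ε δ B 𝒱 p) (hp' : p' ∈ P ∩ N) (hp𝒱' : IsPatchCover f ε δ B 𝒱 p')
    (hpp' : ∀ V, c V ∈ connectedComponentIn (B \ D p) z → c V ∈ connectedComponentIn (B \ D p') z)
    (hq : q ∈ Q ∩ N) (hq𝒱 : IsPatchCover f ε δ B 𝒱 q)
    (hqp : q ∈ connectedComponentIn (B \ D p) z) :
    q ∈ connectedComponentIn (B \ D p') z := by
  have hJ := h.arm q ⟨Or.inr hq.1, hq.2⟩
  obtain ⟨V, hV, haV⟩ := hq𝒱.exists_mem _ (hJ.subset_WsLoc hJ.end_mem) hJ.dist_end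
  have hVc := hq𝒱.isPreconnected V hV
  have ha : a q ∈ connectedComponentIn (B \ D p) z := mem_connectedComponentIn_of_isPreconnected
    hJ.isPreconnected (h.arm_subset hp hq) hJ.self_mem hJ.end_mem hqp
  have hcV := hpp' ⟨V, hV⟩ <| mem_connectedComponentIn_of_isPreconnected hVc
    (h.patch_subset hp hp𝒱 hV) haV (hc ⟨V, hV⟩) ha
  have ha' : a q ∈ connectedComponentIn (B \ D p') z := mem_connectedComponentIn_of_isPreconnected
    hVc (h.patch_subset hp' hp𝒱' hV) (hc ⟨V, hV⟩) haV hcV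
  exact mem_connectedComponentIn_of_isPreconnected hJ.isPreconnected (h.arm_subset hp' hq)
    hJ.end_mem hJ.self_mem ha'

theorem exists_mem_sideSet [CompactSpace M] [LocallyConnectedSpace M]
    (h : IsSeparatingSystem f ε δ P Q B N D J a b) (hf : IsExpansive f α) (hε0 : 0 ≤ ε)
    (hε : 2 * ε ≤ α) (hδ : 0 < δ) {A : Set M} (hA : Dense A) (hxN : x ∈ N)
    (hxP : x ∈ closure P) (hxQ : x ∈ closure Q) :
    ∃ c ∈ A, ∃ ρ > 0, x ∈ sideSet P Q B N D c ρ := by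
  obtain ⟨𝒱, hfin, hopen, h𝒱⟩ :=
    hf.exists_isPatchCover hε0 hε hδ h.isOpen_chartBall (h.closedBall_subset x hxN)
  have : Finite 𝒱 := hfin
  choose c hcA hcV using fun V : 𝒱 => hA.exists_mem_open (hopen V V.2).1 (hopen V V.2).2
  let I (p : M) (V : 𝒱) : Set 𝒱 := {V' | c V' ∈ connectedComponentIn (B \ D p) (c V)}
  have freq : ∃ᶠ p in 𝓝 x, ∃ VI : 𝒱 × Set 𝒱, (p ∈ P ∩ N ∧ IsPatchCover f ε δ B 𝒱 p) ∧
      x ∉ connectedComponentIn (B \ D p) (c VI.1) ∧ I p VI.1 = VI.2 := by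
    refine ((mem_closure_iff_frequently.1 hxP).and_eventually
      ((h.isOpen_window.eventually_mem hxN).and h𝒱)).mono ?_
    rintro p ⟨hpP, hpN, hp𝒱⟩
    obtain ⟨V, hV⟩ := h.exists_patch_notMem hcV ⟨hpP, hpN⟩ hp𝒱 x
    exact ⟨(V, I p V), ⟨⟨hpP, hpN⟩, hp𝒱⟩, hV, rfl⟩
  obtain ⟨⟨V, I₀⟩, hVI⟩ := frequently_exists.1 freq
  obtain ⟨p₀, ⟨hp₀, hp₀𝒱⟩, hx₀, hI₀⟩ := hVI.exists
  have hopen₀ : IsOpen (B \ D p₀) := h.isOpen_chartBall.sdiff (h.plaque p₀ hp₀).isCompact.isClosed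
  have hx : x ∈ B \ D p₀ := ⟨h.window_subset hδ.le hxN, fun hxD =>
    h.stable_notMem p₀ hp₀.1 x ((h.plaque p₀ hp₀).subset_WsLoc hxD) hxQ⟩
  have near : ∀ᶠ q in 𝓝 x, q ∈ connectedComponentIn (B \ D p₀) x :=
    hopen₀.connectedComponentIn.mem_nhds (mem_connectedComponentIn hx)
  obtain ⟨ρ, hρ, hρq⟩ := Metric.eventually_nhds_iff.1 (near.and h𝒱)
  refine ⟨c V, hcA V, ρ, hρ, hVI.mono ?_⟩
  rintro p ⟨⟨hp, hp𝒱⟩, -, hI⟩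
  refine ⟨hp, h.patch_subset hp hp𝒱 V.2 (hcV V), fun q hq hqx hqp => hx₀ ?_⟩
  obtain ⟨hqx₀, hq𝒱⟩ := hρq hqx
  have hq₀ : q ∈ connectedComponentIn (B \ D p₀) (c V) :=
    h.mem_connectedComponentIn_of_patches hcV hp hp𝒱 hp₀ hp₀𝒱
      (fun V' hV' => (Set.ext_iff.1 (hI.trans hI₀.symm) V').1 hV') hq hq𝒱 hqp
  rw [connectedComponentIn_eq hq₀, ← connectedComponentIn_eq hqx₀]
  exact mem_connectedComponentIn hx

end IsSeparatingSystem

end SeparatingSystem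

section Connected

variable {X : Type*} [TopologicalSpace X]

theorem closure_connectedComponentIn_inter_subset (F : Set X) (c : X) :
    closure (connectedComponentIn F c) ∩ F ⊆ connectedComponentIn F c := by
  rintro z ⟨hz, hzF⟩
  obtain ⟨w, hw⟩ := closure_nonempty_iff.1 ⟨z, hz⟩
  exact mem_connectedComponentIn_of_isPreconnected
    (isPreconnected_connectedComponentIn.subset_closure (subset_insert z _)
      (insert_subset hz subset_closure))
    (insert_subset hzF (connectedComponentIn_subset F c)) (mem_insert_of_mem z hw)
    (mem_insert z _) hw

variable [LocallyConnectedSpace X] {B D D' : Set X} {c p p' : X}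

theorem nonempty_inter_closure_connectedComponentIn_diff (hB : IsOpen B) (hBc : IsPreconnected B)
    (hD : IsClosed D) (hDB : (D ∩ B).Nonempty) (hc : c ∈ B \ D) :
    (D ∩ B ∩ closure (connectedComponentIn (B \ D) c)).Nonempty := by
  by_contra! hempty
  have hsub : closure (connectedComponentIn (B \ D) c) ∩ B ⊆ connectedComponentIn (B \ D) c :=
    fun z hz => closure_connectedComponentIn_inter_subset _ _ ⟨hz.1, hz.2, fun hzD =>
      (eq_empty_iff_forall_notMem.1 hempty) z ⟨⟨hzD, hz.2⟩, hz.1⟩⟩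
  have hBsub := hBc.subset_of_closure_inter_subset (hB.sdiff hD).connectedComponentIn
    ⟨c, hc.1, mem_connectedComponentIn hc⟩ hsub
  obtain ⟨z, hzD, hzB⟩ := hDB
  exact (connectedComponentIn_subset _ _ (hBsub hzB)).2 hzD

theorem mem_connectedComponentIn_diff_of_notMem (hB : IsOpen B) (hBc : IsPreconnected B)
    (hD : IsClosed D) (hDc : IsPreconnected (D ∩ B)) (hDc' : IsPreconnected (D' ∩ B))
    (hdisj : Disjoint D D') (hc : c ∈ B \ D) (hp : p ∈ D ∩ B) (hp' : p' ∈ D' ∩ B)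
    (hp'c : p' ∉ connectedComponentIn (B \ D) c) : p ∈ connectedComponentIn (B \ D') c := by
  obtain ⟨d, hdD, hdc⟩ :=
    nonempty_inter_closure_connectedComponentIn_diff hB hBc hD ⟨p, hp⟩ hc
  have hDD' : D ∩ B ⊆ B \ D' := fun z hz => ⟨hz.2, Set.disjoint_left.1 hdisj hz.1⟩
  have hD'D : D' ∩ B ⊆ B \ D := fun z hz => ⟨hz.2, Set.disjoint_right.1 hdisj hz.1⟩
  have component_subset : connectedComponentIn (B \ D) c ⊆ B \ D' := by
    refine fun z hz => ⟨(connectedComponentIn_subset _ _ hz).1, fun hzD' => hp'c ?_⟩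
    exact mem_connectedComponentIn_of_isPreconnected hDc' hD'D
      ⟨hzD', (connectedComponentIn_subset _ _ hz).1⟩ hp' hz
  have hd : d ∈ connectedComponentIn (B \ D') c :=
    (isPreconnected_connectedComponentIn.subset_closure (subset_insert d _)
      (insert_subset hdc subset_closure)).subset_connectedComponentIn
      (mem_insert_of_mem d (mem_connectedComponentIn hc))
      (insert_subset (hDD' hdD) component_subset) (mem_insert d _)
  exact mem_connectedComponentIn_of_isPreconnected hDc hDD' hdD hp hd

end Connected

theorem not_isPreconnected_diff_closure_inter {X : Type*} [TopologicalSpace X] {P Q U : Set X}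
    {x : X} (hPQ : closure P ∪ closure Q = univ) (hP : Disjoint P (closure Q))
    (hQ : Disjoint Q (closure P)) (hU : IsOpen U) (hxU : x ∈ U)
    (hx : x ∈ closure P ∩ closure Q) : ¬IsPreconnected (U \ (closure P ∩ closure Q)) := by
  intro hconn
  obtain ⟨p, hpU, hpP⟩ := mem_closure_iff.1 hx.1 U hU hxU
  obtain ⟨q, hqU, hqQ⟩ := mem_closure_iff.1 hx.2 U hU hxU
  have hpQ := Set.disjoint_left.1 hP hpP
  have hqP := Set.disjoint_left.1 hQ hqQ
  obtain ⟨z, -, hzQ, hzP⟩ := hconn _ _ isClosed_closure.isOpen_compl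
    isClosed_closure.isOpen_compl (fun z hz => (not_and_or.1 hz.2).symm)
    ⟨p, ⟨hpU, fun h => hpQ h.2⟩, hpQ⟩ ⟨q, ⟨hqU, fun h => hqP h.1⟩, hqP⟩
  exact (hPQ ▸ mem_univ z : z ∈ closure P ∪ closure Q).elim hzP hzQ

theorem exists_isOpen_inter_subset_of_isLocallyClosed {X ι : Type*} [TopologicalSpace X]
    [LocallyCompactSpace X] [T2Space X] [Countable ι] {Y : Set X} (hY : IsLocallyClosed Y)
    (hne : Y.Nonempty) {T : ι → Set X} (hT : ∀ i, IsClosed (T i)) (hYT : Y ⊆ ⋃ i, T i) :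
    ∃ i, ∃ W, IsOpen W ∧ (Y ∩ W).Nonempty ∧ Y ∩ W ⊆ T i := by
  have := hY.locallyCompactSpace
  have := hne.to_subtype
  obtain ⟨i, y, hy⟩ := nonempty_interior_of_iUnion_of_closed
    (f := fun i => (Subtype.val : Y → X) ⁻¹' T i) (fun i => (hT i).preimage continuous_subtype_val)
    (by rw [← preimage_iUnion, preimage_eq_univ_iff, Subtype.range_coe]; exact hYT)
  obtain ⟨_, hWT, ⟨W, hW, rfl⟩, hyW⟩ := mem_interior.1 hy
  exact ⟨i, W, hW, ⟨y, y.2, hyW⟩, fun z hz => hWT (show (⟨z, hz.1⟩ : Y) ∈ _ from hz.2)⟩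

theorem continuousOn_of_isCompact_graph {X Y : Type*} [TopologicalSpace X] [T2Space X]
    [TopologicalSpace Y] {K : Set X} {w : X → Y} (h : IsCompact ((fun z => (z, w z)) '' K)) :
    ContinuousOn w K := by
  have hcont := continuousOn_image_of_leftInvOn h continuousOn_fst
    (σ := fun z => (z, w z)) (by rintro _ ⟨z, -, rfl⟩; rfl)
  rw [image_image, image_id'] at hcont
  exact continuous_snd.comp_continuousOn hcont

theorem exists_closedBall_subset_target_inter_preimage {X Y : Type*} [TopologicalSpace X]
    [PseudoMetricSpace Y] (e : OpenPartialHomeomorph X Y) {x : X} (hx : x ∈ e.source) {O : Set X}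
    (hO : IsOpen O) (hxO : x ∈ O) :
    ∃ r > 0, closedBall (e x) r ⊆ e.target ∩ e.symm ⁻¹' O := by
  refine Metric.nhds_basis_closedBall.mem_iff.1
    ((e.symm.isOpen_inter_preimage hO).mem_nhds ⟨e.map_source hx, ?_⟩)
  rwa [mem_preimage, e.left_inv hx]

theorem isPreconnected_image_ball_diff {X Y S : Type*} [TopologicalSpace X]
    [NormedAddCommGroup Y] [NormedSpace ℝ Y] [FiniteDimensional ℝ Y] [NormedAddCommGroup S]
    [NormedSpace ℝ S] [FiniteDimensional ℝ S]
    (hdim : Module.finrank ℝ Y = Module.finrank ℝ S + 1) (e : OpenPartialHomeomorph Y X) {y₀ : Y}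
    {r : ℝ} (hr : closedBall y₀ r ⊆ e.source) {A : Set X} (hA : IsClosed A) {π : X → S}
    (hπ : ContinuousOn π (A ∩ e '' closedBall y₀ r)) (hπi : InjOn π (A ∩ e '' closedBall y₀ r))
    (hπ0 : interior (π '' (A ∩ e '' closedBall y₀ r)) = ∅) :
    IsPreconnected (e '' ball y₀ r \ A) := by
  have he : ContinuousOn e (closedBall y₀ r) := e.continuousOn.mono hr
  let K := closedBall y₀ r ∩ e ⁻¹' A
  have himage : e '' K = A ∩ e '' closedBall y₀ r := by rw [image_inter_preimage, inter_comm]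
  have hK : IsCompact K := (isCompact_closedBall _ _).of_isClosed_subset
    (he.preimage_isClosed_of_isClosed isClosed_closedBall hA) inter_subset_left
  have hmaps : MapsTo e K (A ∩ e '' closedBall y₀ r) := himage ▸ mapsTo_image e K
  have hconn : IsPreconnected (ball y₀ r \ K) := isPreconnected_ball_diff hdim hK
    (hπ.comp (he.mono inter_subset_left) hmaps)
    (hπi.comp (e.injOn.mono fun z hz => hr hz.1) hmaps) (by rwa [image_comp, himage])
  have hdiff : e '' (ball y₀ r \ K) = e '' ball y₀ r \ A := by
    ext x
    constructor
    · rintro ⟨z, ⟨hz, hzK⟩, rfl⟩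
      exact ⟨⟨z, hz, rfl⟩, fun hzA => hzK ⟨ball_subset_closedBall hz, hzA⟩⟩
    · rintro ⟨⟨z, hz, rfl⟩, hzA⟩
      exact ⟨z, ⟨hz, fun hzK => hzA hzK.2⟩, rfl⟩
  exact hdiff ▸ hconn.image e (he.mono (sdiff_subset.trans ball_subset_closedBall))

section Holonomy

variable {f : M ≃ₜ M} {ε : ℝ} {D K A : Set M}

theorem continuousOn_of_mem_WsLoc {w : M → M} (hK : IsCompact K) (hD : IsCompact D)
    (hwD : MapsTo w K D) (hw : ∀ z ∈ K, w z ∈ WsLoc f ε z)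
    (huniq : ∀ z, (D ∩ WsLoc f ε z).Subsingleton) : ContinuousOn w K := by
  have hgraph : (fun z => (z, w z)) '' K = K ×ˢ D ∩ {z | z.2 ∈ WsLoc f ε z.1} := by
    ext ⟨z, u⟩
    constructor
    · rintro ⟨z, hz, ⟨⟩⟩
      exact ⟨⟨hz, hwD hz⟩, hw z hz⟩
    · rintro ⟨⟨hz, hu⟩, huz⟩
      exact ⟨z, hz, Prod.ext rfl (huniq z ⟨hwD hz, hw z hz⟩ ⟨hu, huz⟩)⟩
  exact continuousOn_of_isCompact_graph
    (hgraph ▸ (hK.prod hD).inter_right (isClosed_setOf_mem_WsLoc f ε))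

theorem exists_mem_inter_WsLoc_of_mem_closure {x : M} {J : M → Set M} (hD : IsCompact D)
    (hJ : ∀ p ∈ A, J p ⊆ WsLoc f ε p) (hx : x ∈ closure {p ∈ A | (J p ∩ D).Nonempty}) :
    ∃ u ∈ D ∩ WsLoc f ε x, u ∈ closure {v ∈ D | ∃ p ∈ A, v ∈ J p} := by
  obtain ⟨p, hp, hpx⟩ := mem_closure_iff_seq_limit.1 hx
  choose hpA v hv using hp
  obtain ⟨u, hu, φ, hφ, hvu⟩ := hD.tendsto_subseq fun k => (hv k).2
  refine ⟨u, ⟨hu, ?_⟩, ?_⟩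
  · exact mem_WsLoc_of_tendsto (hpx.comp hφ.tendsto_atTop) hvu
      (Eventually.of_forall fun k => hJ _ (hpA (φ k)) (hv (φ k)).1)
  · exact mem_closure_of_tendsto hvu
      (Eventually.of_forall fun k => ⟨(hv (φ k)).2, p (φ k), hpA (φ k), (hv (φ k)).1⟩)

end Holonomy

namespace IsSeparatingSystem

variable {f : M ≃ₜ M} {α ε δ ρ : ℝ} {P Q B N : Set M} {D J : M → Set M} {a b : M → M}
  {x y c : M}

theorem notMem_connectedComponentIn (h : IsSeparatingSystem f ε δ P Q B N D J a b)
    (hδ : 0 ≤ δ) {V : Set M} (hVo : IsOpen V) (hVc : IsPreconnected V) (hyV : y ∈ V)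
    (hyQ : y ∈ closure Q) (hV : V ⊆ N ∩ ball x ρ) {p p' : M} (hVp : Disjoint V (D p))
    (hsep : ∀ q ∈ Q ∩ N, dist q x < ρ → q ∉ connectedComponentIn (B \ D p) c) (hp' : p' ∈ V) :
    p' ∉ connectedComponentIn (B \ D p) c := by
  intro hmem
  obtain ⟨q, hqV, hqQ⟩ := mem_closure_iff.1 hyQ V hVo hyV
  refine hsep q ⟨hqQ, (hV hqV).1⟩ (hV hqV).2 (mem_connectedComponentIn_of_isPreconnected hVc
    (subset_sdiff.2 ⟨fun z hz => h.window_subset hδ (hV hz).1, hVp⟩) hp' hqV hmem)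

theorem eq_of_mem_sideSet [LocallyConnectedSpace M]
    (h : IsSeparatingSystem f ε δ P Q B N D J a b) (hf : IsExpansive f α) (hε0 : 0 ≤ ε)
    (hε : 4 * ε ≤ α) (hδ : 0 ≤ δ) (hx : x ∈ sideSet P Q B N D c ρ)
    (hy : y ∈ sideSet P Q B N D c ρ) (hxN : x ∈ N) (hyN : y ∈ N) (hxQ : x ∈ closure Q)
    (hyQ : y ∈ closure Q) (hxy : dist x y < ρ) (hyx : y ∈ WsLoc f.symm (2 * ε) x) : x = y := by
  by_contra hne
  have hε2 : 0 ≤ 2 * ε := by positivity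
  have hys : y ∉ WsLoc f (2 * ε) x := fun hys => hne <|
    hf.eq_of_mem_WsLoc_of_mem_WsLoc_symm (by linarith) (self_mem_WsLoc f hε2 x) hys
      (self_mem_WsLoc f.symm hε2 x) hyx
  obtain ⟨V, hVo, hVc, hyV, hV, hVx⟩ := exists_isPreconnected_disjoint_WsLoc hys
    ((h.isOpen_window.inter Metric.isOpen_ball).mem_nhds ⟨hyN, mem_ball'.2 hxy⟩)
  obtain ⟨V', hVo', hVc', hxV', hV', hVy'⟩ := exists_isPreconnected_disjoint_WsLoc
    (mt mem_WsLoc_comm.1 hys)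
    ((h.isOpen_window.inter Metric.isOpen_ball).mem_nhds ⟨hxN, mem_ball.2 hxy⟩)
  obtain ⟨p, ⟨hp, hcp, hsep⟩, hVp, hpV'⟩ :=
    (hx.and_eventually (hVx.and (hVo'.eventually_mem hxV'))).exists
  obtain ⟨p', ⟨hp', -, hsep'⟩, hVp', hpV⟩ :=
    (hy.and_eventually (hVy'.and (hVo.eventually_mem hyV))).exists
  have hD := h.plaque p hp
  have hD' := h.plaque p' hp'
  have hmono (z : M) : WsLoc f ε z ⊆ WsLoc f (2 * ε) z := WsLoc_mono (by linarith) z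
  have hp'c := h.notMem_connectedComponentIn hδ hVo hVc hyV hyQ hV
    (hVp.mono_right (hD.subset_WsLoc.trans (hmono p))) hsep hpV
  have hpc := h.notMem_connectedComponentIn hδ hVo' hVc' hxV' hxQ hV'
    (hVp'.mono_right (hD'.subset_WsLoc.trans (hmono p'))) hsep' hpV'
  have hdisj : Disjoint (D p) (D p') := Set.disjoint_left.2 fun z hz hz' => by
    have hp'p := mem_WsLoc_trans (hD.subset_WsLoc hz) (mem_WsLoc_comm.1 (hD'.subset_WsLoc hz'))
    exact Set.disjoint_left.1 hVp hpV (two_mul ε ▸ hp'p)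
  exact hpc (mem_connectedComponentIn_diff_of_notMem h.isOpen_chartBall h.isPreconnected_chartBall
    hD.isCompact.isClosed hD.isPreconnected_inter hD'.isPreconnected_inter hdisj hcp
    ⟨hD.self_mem, h.window_subset hδ hp.2⟩ ⟨hD'.self_mem, h.window_subset hδ hp'.2⟩ hp'c)

theorem exists_isOpen_inter_subset_sideSet [CompactSpace M] [LocallyConnectedSpace M]
    (h : IsSeparatingSystem f ε δ P Q B N D J a b) (hf : IsExpansive f α) (hε0 : 0 ≤ ε)
    (hε : 2 * ε ≤ α) (hδ : 0 < δ) {O : Set M} (hO : IsOpen O) (hON : O ⊆ N)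
    (hne : (closure P ∩ closure Q ∩ O).Nonempty) :
    ∃ W, IsOpen W ∧ W ⊆ O ∧ (closure P ∩ closure Q ∩ W).Nonempty ∧
      ∃ c, ∃ ρ > 0, ∃ p₀ ∈ P ∩ N, closure P ∩ closure Q ∩ W ⊆
        sideSet P Q B N D c ρ ∩ closure {p ∈ P ∩ N | (J p ∩ D p₀).Nonempty} := by
  obtain ⟨P', hP'P, hP'c, hPP'⟩ :=
    (TopologicalSpace.IsSeparable.of_separableSpace P).exists_countable_dense_subset
  obtain ⟨A, hAc, hA⟩ := TopologicalSpace.exists_countable_dense M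
  have : Countable A := hAc.to_subtype
  have : Countable (P' ∩ N : Set M) := (hP'c.mono inter_subset_left).to_subtype
  let T (i : A × ℕ × (P' ∩ N : Set M)) : Set M :=
    closure (sideSet P Q B N D i.1 (1 / ((i.2.1 : ℝ) + 1))) ∩
      closure {p ∈ P ∩ N | (J p ∩ D i.2.2).Nonempty}
  have cover : closure P ∩ closure Q ∩ O ⊆ ⋃ i, T i := by
    rintro x ⟨⟨hxP, hxQ⟩, hxO⟩
    obtain ⟨c, hcA, ρ, hρ, hxρ⟩ := h.exists_mem_sideSet hf hε0 hε hδ hA (hON hxO) hxP hxQ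
    obtain ⟨p₀, hp₀, hxp₀⟩ := h.exists_mem_closure_inter_nonempty hf hε0 hε hδ hP'P (hON hxO)
      (closure_minimal hPP' isClosed_closure hxP)
    obtain ⟨m, hm⟩ := exists_nat_one_div_lt hρ
    exact mem_iUnion.2 ⟨(⟨c, hcA⟩, m, ⟨p₀, hp₀⟩),
      subset_closure (sideSet_anti hm.le hxρ), hxp₀⟩
  obtain ⟨⟨c, m, p₀⟩, W, hW, hneW, hWT⟩ := exists_isOpen_inter_subset_of_isLocallyClosed
    ((isClosed_closure.inter isClosed_closure).isLocallyClosed.inter hO.isLocallyClosed) hne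
    (fun i => isClosed_closure.inter isClosed_closure) cover
  refine ⟨O ∩ W, hO.inter hW, inter_subset_left, by rwa [← inter_assoc], c,
    1 / ((m : ℝ) + 1) / 2, by positivity, p₀, ⟨hP'P p₀.2.1, p₀.2.2⟩, ?_⟩
  rw [← inter_assoc]
  exact hWT.trans (inter_subset_inter_left _ (closure_sideSet_subset (by positivity)))

theorem exists_injOn_of_subset_sideSet [CompactSpace M] [LocallyConnectedSpace M]
    (h : IsSeparatingSystem f ε δ P Q B N D J a b) (hf : IsExpansive f α) (hε0 : 0 ≤ ε)
    (hε : 4 * ε ≤ α) (hδ : 0 ≤ δ) {S : Type*} [TopologicalSpace S] {p₀ : M} (hp₀ : p₀ ∈ P ∩ N)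
    {σ : M → S} (hσ : ContinuousOn σ (D p₀)) (hσi : InjOn σ (D p₀)) {K : Set M}
    (hK : IsCompact K) (hKQ : K ⊆ closure Q) (hKN : K ⊆ N)
    (hKρ : ∀ z ∈ K, ∀ z' ∈ K, dist z z' < ρ)
    (hKc : K ⊆ sideSet P Q B N D c ρ ∩ closure {p ∈ P ∩ N | (J p ∩ D p₀).Nonempty}) :
    ∃ π : M → S, ContinuousOn π K ∧ InjOn π K ∧ interior (π '' K) = ∅ := by
  have hD := h.plaque p₀ hp₀
  have harm : ∀ p ∈ P ∩ N, J p ⊆ WsLoc f.symm ε p := fun p hp =>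
    (h.arm p ⟨Or.inl hp.1, hp.2⟩).subset_WsLoc
  have hsection (z : M) : ∃ u, z ∈ K → u ∈ D p₀ ∩ WsLoc f.symm ε z ∧
      u ∈ closure {v ∈ D p₀ | ∃ p ∈ P ∩ N, v ∈ J p} := by
    by_cases hz : z ∈ K
    · obtain ⟨u, hu, huJ⟩ := exists_mem_inter_WsLoc_of_mem_closure hD.isCompact harm (hKc hz).2
      exact ⟨u, fun _ => ⟨hu, huJ⟩⟩
    · exact ⟨z, fun hzK => absurd hzK hz⟩
  choose w hw using hsection
  have hwD : MapsTo w K (D p₀) := fun z hz => (hw z hz).1.1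
  have hwz : ∀ z ∈ K, w z ∈ WsLoc f.symm ε z := fun z hz => (hw z hz).1.2
  have huniq (z : M) : (D p₀ ∩ WsLoc f.symm ε z).Subsingleton := fun u hu v hv =>
    hf.eq_of_mem_WsLoc_of_mem_WsLoc_symm (by linarith) (hD.subset_WsLoc hu.1)
      (hD.subset_WsLoc hv.1) hu.2 hv.2
  refine ⟨σ ∘ w, hσ.comp (continuousOn_of_mem_WsLoc hK hD.isCompact hwD hwz huniq) hwD,
    fun z hz z' hz' hzz' => ?_, not_nonempty_iff_eq_empty.1 ?_⟩
  · have hww' : w z = w z' := hσi (hwD hz) (hwD hz') hzz'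
    have hz'z := mem_WsLoc_trans (hwz z hz) (mem_WsLoc_comm.1 (hww' ▸ hwz z' hz'))
    exact h.eq_of_mem_sideSet hf hε0 hε hδ (hKc hz).1 (hKc hz').1 (hKN hz) (hKN hz') (hKQ hz)
      (hKQ hz') (hKρ z hz z' hz') (two_mul ε ▸ hz'z)
  · rintro ⟨s, hs⟩
    obtain ⟨z, hz, rfl⟩ := interior_subset hs
    have hnear : ∀ᶠ v in 𝓝[D p₀] w z, σ v ∈ interior (σ ∘ w '' K) :=
      (hσ _ (hwD hz)).eventually_mem (isOpen_interior.mem_nhds hs)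
    obtain ⟨v, ⟨hvD, p, hp, hvJ⟩, hv⟩ := ((mem_closure_iff_frequently.1 (hw z hz).2).and_eventually
      (eventually_nhdsWithin_iff.1 hnear)).exists
    obtain ⟨z', hz', hz'v⟩ := interior_subset (hv hvD)
    have hw' : w z' = v := hσi (hwD hz') hvD hz'v
    have hz'p := mem_WsLoc_trans (harm p hp hvJ) (mem_WsLoc_comm.1 (hw' ▸ hwz z' hz'))
    exact h.unstable_notMem p hp.1 z' (two_mul ε ▸ hz'p) (hKQ hz')

theorem notMem_closure_inter_closure [CompactSpace M] [LocallyConnectedSpace M]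
    (h : IsSeparatingSystem f ε δ P Q B N D J a b) (hf : IsExpansive f α) (hε0 : 0 ≤ ε)
    (hε : 4 * ε ≤ α) (hδ : 0 < δ) {Y S : Type*} [NormedAddCommGroup Y] [NormedSpace ℝ Y]
    [FiniteDimensional ℝ Y] [NormedAddCommGroup S] [NormedSpace ℝ S] [FiniteDimensional ℝ S]
    (hdim : Module.finrank ℝ Y = Module.finrank ℝ S + 1) (χ : OpenPartialHomeomorph M Y)
    (hσ : ∀ p ∈ P ∩ N, ∃ σ : M → S, ContinuousOn σ (D p) ∧ InjOn σ (D p)) (hxN : x ∈ N)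
    (hxχ : x ∈ χ.source) : x ∉ closure P ∩ closure Q := by
  intro hx
  obtain ⟨W, hW, hWO, ⟨x₁, hx₁, hx₁W⟩, c, ρ, hρ, p₀, hp₀, hWc⟩ :=
    h.exists_isOpen_inter_subset_sideSet hf hε0 (by linarith) hδ
      (h.isOpen_window.inter χ.open_source) inter_subset_left ⟨x, hx, hxN, hxχ⟩
  obtain ⟨σ, hσc, hσi⟩ := hσ p₀ hp₀
  have hx₁χ : x₁ ∈ χ.source := (hWO hx₁W).2
  obtain ⟨r, hr, hball⟩ := exists_closedBall_subset_target_inter_preimage χ hx₁χ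
    (hW.inter Metric.isOpen_ball) ⟨hx₁W, mem_ball_self (half_pos hρ)⟩
  let K := closure P ∩ closure Q ∩ χ.symm '' closedBall (χ x₁) r
  have hK : IsCompact K := ((isCompact_closedBall _ _).image_of_continuousOn
    (χ.continuousOn_symm.mono fun z hz => (hball hz).1)).inter_left
    (isClosed_closure.inter isClosed_closure)
  have hKW : ∀ z ∈ K, z ∈ W ∩ ball x₁ (ρ / 2) := by
    rintro _ ⟨-, z, hz, rfl⟩
    exact (hball hz).2
  have hKρ : ∀ z ∈ K, ∀ z' ∈ K, dist z z' < ρ := by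
    intro z hz z' hz'
    have hzx := mem_ball.1 (hKW z hz).2
    have hzx' := mem_ball.1 (hKW z' hz').2
    linarith [dist_triangle_right z z' x₁]
  obtain ⟨w, hw, hwi, hw0⟩ := h.exists_injOn_of_subset_sideSet hf hε0 hε hδ.le hp₀ hσc hσi hK
    (fun z hz => hz.1.2) (fun z hz => (hWO (hKW z hz).1).1)
    hKρ (fun z hz => hWc ⟨hz.1, (hKW z hz).1⟩)
  refine not_isPreconnected_diff_closure_inter h.closure_union_closure
    (Set.disjoint_left.2 fun p hp => h.stable_notMem p hp p (self_mem_WsLoc f hε0 p))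
    (Set.disjoint_left.2 fun q hq => h.unstable_notMem' q hq q (self_mem_WsLoc f.symm hε0 q))
    (χ.symm.isOpen_image_of_subset_source Metric.isOpen_ball
      (ball_subset_closedBall.trans fun z hz => (hball hz).1))
    ⟨χ x₁, mem_ball_self hr, χ.left_inv hx₁χ⟩ hx₁
    (isPreconnected_image_ball_diff hdim χ.symm (fun z hz => (hball hz).1)
      (isClosed_closure.inter isClosed_closure) hw hwi hw0)

end IsSeparatingSystem

/-! ### Unstable arms and separating plaques at hyperbolic points -/

theorem exists_continuous_of_mem_connectedComponentIn {X : Type*} [TopologicalSpace X]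
    [LocallyPathConnectedSpace X] {O : Set X} (hO : IsOpen O) {x y : X} (hx : x ∈ O)
    (hy : y ∈ connectedComponentIn O x) {s t : ℝ} (hst : s < t) :
    ∃ g : ℝ → X, Continuous g ∧ (∀ τ, g τ ∈ O) ∧ g s = y ∧ g t = x := by
  have hxO : x ∈ connectedComponentIn O x := mem_connectedComponentIn hx
  obtain ⟨γ, hγ⟩ := (hO.connectedComponentIn.isConnected_iff_isPathConnected.1
    ⟨⟨x, hxO⟩, isPreconnected_connectedComponentIn⟩).joinedIn y hy x hxO
  refine ⟨fun τ => γ.extend ((τ - s) / (t - s)), γ.continuous_extend.comp (by fun_prop),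
    fun τ => connectedComponentIn_subset _ _ (hγ _), by simp, ?_⟩
  simp [div_self (sub_pos.2 hst).ne']

section Cells

variable {S U Y : Type*} [NormedAddCommGroup S] [NormedSpace ℝ S] [NormedAddCommGroup U]
  [NormedSpace ℝ U] [NormedAddCommGroup Y] [NormedSpace ℝ Y] {f : M ≃ₜ M} {α ε δ : ℝ} {p : M}
  {l : ℕ}

theorem IsHyperbolicAt.notMem_of_mem_WsLoc [CompactSpace M] (hp : IsHyperbolicAt f S U p)
    (hf : IsExpansive f α) (hε : ε ≤ α) {A : Set M} (hA : IsClosed A) (hpA : p ∉ A)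
    (hinv : MapsTo f A A) : ∀ y ∈ WsLoc f ε p, y ∉ A := by
  obtain ⟨e, l, he⟩ := hp
  obtain ⟨Φ, hΦ⟩ := he.exists_isStableParam
  obtain ⟨R, hR⟩ := hΦ.exists_WsLoc_subset hf hε
  intro y hy
  obtain ⟨a, -, rfl⟩ := hR hy
  exact hΦ.apply_mem_of_isOpen hA.isOpen_compl hpA (fun x hx hxA => hx (hinv hxA)) a

theorem IsUnstableArm.union {a b : M} {J J' : Set M} (h : IsUnstableArm f ε δ p a J)
    (h' : IsUnstableArm f ε δ p b J') : IsUnstableArm f ε δ p a (J ∪ J') where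
  isPreconnected := h.isPreconnected.union p h.self_mem h'.self_mem h'.isPreconnected
  self_mem := .inl h.self_mem
  end_mem := .inl h.end_mem
  dist_end := h.dist_end
  subset_WsLoc := union_subset h.subset_WsLoc h'.subset_WsLoc
  subset_closedBall := union_subset h.subset_closedBall h'.subset_closedBall

theorem IsStableParam.exists_isUnstableArm [CompactSpace M] [FiniteDimensional ℝ U]
    {e : OpenPartialHomeomorph M (U × S)} {Φ : U → M} (h : IsStableParam f.symm e p l Φ)
    (hf : IsExpansive f α) (hε0 : 0 < ε) (hε : ε ≤ α) (hδ : 0 < δ)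
    (hhalf : WsLoc f.symm ε p ∩ ball p δ ⊆ WsLoc f.symm (ε / 2) p) {v : U} (hv : v ≠ 0) :
    ∃ T > 0, IsUnstableArm f ε δ p (Φ (T • v)) ((fun t : ℝ => Φ (t • v)) '' Icc 0 T) := by
  obtain ⟨T, hT, hW, hlt, hTδ⟩ := h.exists_ray_exit hf.symm hε0 hε hδ hhalf hv
  refine ⟨T, hT, isPreconnected_Icc.image _ (h.continuous.comp (by fun_prop)).continuousOn,
    ⟨0, left_mem_Icc.2 hT.le, by simp only [zero_smul, h.apply_zero]⟩,
    mem_image_of_mem _ (right_mem_Icc.2 hT.le), hTδ, image_subset_iff.2 hW,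
    image_subset_iff.2 fun t ht => mem_closedBall'.2 ?_⟩
  rcases ht.2.lt_or_eq with htT | rfl
  · exact (hlt t ⟨ht.1, htT⟩).le
  · exact hTδ.le

theorem IsHyperbolicAt.exists_isUnstableArm [CompactSpace M] [FiniteDimensional ℝ U]
    [Nontrivial U] (hp : IsHyperbolicAt f S U p) (hf : IsExpansive f α) (hε0 : 0 < ε)
    (hε : ε ≤ α) (hδ : 0 < δ)
    (hhalf : WsLoc f.symm ε p ∩ ball p δ ⊆ WsLoc f.symm (ε / 2) p) :
    ∃ a J, IsUnstableArm f ε δ p a J := by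
  obtain ⟨e, l, he⟩ := hp.symm
  obtain ⟨Φ, hΦ⟩ := he.exists_isStableParam
  obtain ⟨v, hv⟩ := exists_ne (0 : U)
  obtain ⟨T, -, h⟩ := hΦ.exists_isUnstableArm hf hε0 hε hδ hhalf hv
  exact ⟨_, _, h⟩

theorem IsStableParam.exists_isUnstableArm_Icc [CompactSpace M]
    {e : OpenPartialHomeomorph M (ℝ × S)} {Φ : ℝ → M} (h : IsStableParam f.symm e p l Φ)
    (hf : IsExpansive f α) (hε0 : 0 < ε) (hε : ε ≤ α) (hδ : 0 < δ)
    (hhalf : WsLoc f.symm ε p ∩ ball p δ ⊆ WsLoc f.symm (ε / 2) p) :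
    ∃ s < 0, ∃ t > 0, ∃ J, IsUnstableArm f ε δ p (Φ s) J ∧ IsUnstableArm f ε δ p (Φ t) J ∧
      MapsTo Φ (Icc s t) J := by
  obtain ⟨T, hT, hJ⟩ := h.exists_isUnstableArm hf hε0 hε hδ hhalf (v := 1) one_ne_zero
  obtain ⟨T', hT', hJ'⟩ :=
    h.exists_isUnstableArm hf hε0 hε hδ hhalf (v := -1) (neg_ne_zero.2 one_ne_zero)
  simp only [smul_eq_mul, mul_one, mul_neg] at hJ hJ'
  refine ⟨-T', neg_lt_zero.2 hT', T, hT, _, hJ'.union hJ, union_comm _ _ ▸ hJ.union hJ', ?_⟩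
  intro τ hτ
  rcases le_total 0 τ with h0 | h0
  · exact .inr ⟨τ, ⟨h0, hτ.2⟩, rfl⟩
  · exact .inl ⟨-τ, ⟨neg_nonneg.2 h0, neg_le.1 hτ.1⟩, congrArg Φ (neg_neg τ)⟩

theorem IsStableParam.exists_plaque_in [CompactSpace M] [FiniteDimensional ℝ S]
    {e : OpenPartialHomeomorph M (S × U)} {Φ : S → M} (h : IsStableParam f e p l Φ)
    (hf : IsExpansive f α) (hε0 : 0 < ε) (hε : ε ≤ α) {B : Set M} (hB : IsOpen B) (hp : p ∈ B)
    (hhalf : WsLoc f ε p ∩ B ⊆ WsLoc f (ε / 2) p) :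
    ∃ C : Set S, IsOpen C ∧ Bornology.IsBounded C ∧ 0 ∈ C ∧
      IsPreconnected (Φ '' closure C ∩ B) ∧ MapsTo Φ (closure C) (WsLoc f ε p) ∧
      MapsTo Φ (closure C) (closure B) ∧ ∀ a ∈ closure C, Φ a ∈ B → a ∈ C := by
  have hCB : ∀ a ∈ closure (stablePlaque f Φ ε p B), Φ a ∈ B → a ∈ stablePlaque f Φ ε p B :=
    fun a ha haB => h.mem_stablePlaque_of_mem_closure hε0.le hp ha haB
  have himage : Φ '' closure (stablePlaque f Φ ε p B) ∩ B = Φ '' stablePlaque f Φ ε p B := by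
    refine subset_antisymm ?_ (image_subset_iff.2 fun a ha =>
      ⟨mem_image_of_mem Φ (subset_closure ha), (stablePlaque_subset ha).2⟩)
    rintro _ ⟨⟨a, ha, rfl⟩, haB⟩
    exact mem_image_of_mem Φ (hCB a ha haB)
  refine ⟨stablePlaque f Φ ε p B, h.isOpen_stablePlaque hε0 hB hhalf,
    h.isBounded_stablePlaque hf hε, h.zero_mem_stablePlaque hε0.le hp, ?_,
    fun a ha => h.apply_mem_WsLoc_of_mem_closure ha,
    fun a ha => map_mem_closure h.continuous ha fun b hb => (stablePlaque_subset hb).2, hCB⟩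
  rw [himage]
  exact isPreconnected_stablePlaque.image Φ h.continuous.continuousOn

variable {e : OpenPartialHomeomorph M (S × ℝ)} {Φs : S → M} {Φu : ℝ → M}
  {χ : OpenPartialHomeomorph M Y} {C : Set S} {V : Set Y} {s t : ℝ}

theorem eq_zero_of_apply_mem_image (hf : IsExpansive f α) (hε0 : 0 ≤ ε) (hε : 2 * ε ≤ α)
    (hu : IsStableParam f.symm (swapChart e) p l Φu) {D : Set M} (hD : D ⊆ WsLoc f ε p) {τ : ℝ}
    (hτ : Φu τ ∈ WsLoc f.symm ε p) (hτD : Φu τ ∈ D) : τ = 0 := by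
  refine hu.injective (Eq.trans ?_ hu.apply_zero.symm)
  exact hf.eq_of_mem_WsLoc_of_mem_WsLoc_symm hε (hD hτD) (self_mem_WsLoc f hε0 p) hτ
    (self_mem_WsLoc f.symm hε0 p)

theorem exists_apply_mem_image_closure [FiniteDimensional ℝ S] (hf : IsExpansive f α)
    (hε0 : 0 ≤ ε) (hε : 2 * ε ≤ α) (hs : IsStableParam f e p l Φs)
    (hu : IsStableParam f.symm (swapChart e) p l Φu) (hC : IsOpen C)
    (hCb : Bornology.IsBounded C) (hC0 : 0 ∈ C) (hCχ : MapsTo Φs (closure C) χ.source)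
    (hCW : MapsTo Φs (closure C) (WsLoc f ε p)) (hV : Convex ℝ V)
    (hCV : ∀ a ∈ closure C, χ (Φs a) ∈ V → a ∈ C) (hs0 : s < 0) (ht0 : 0 < t)
    (huV : MapsTo Φu (Icc s t) (χ.source ∩ χ ⁻¹' V))
    (huW : MapsTo Φu (Icc s t) (WsLoc f.symm ε p)) {g : ℝ → M} (hg : Continuous g)
    (hgV : ∀ τ, g τ ∈ χ.source ∩ χ ⁻¹' V) (hgs : g s = Φu s) (hgt : g t = Φu t) :
    ∃ τ, g τ ∈ Φs '' closure C := by
  have hcl : closure (Ioo s t) = Icc s t := closure_Ioo (hs0.trans ht0).ne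
  rw [← hcl] at huV huW
  have huχ : MapsTo Φu (closure (Ioo s t)) χ.source := fun τ hτ => (huV hτ).1
  have hgχ : MapsTo g (closure (Ioo s t)) χ.source := fun τ _ => (hgV τ).1
  have hseg : ∀ a ∈ closure C, ∀ τ ∈ closure (Ioo s t), a ∉ C ∨ τ ∉ Ioo s t →
      ∀ θ ∈ Icc (0 : ℝ) 1,
        (1 - θ) • (χ (Φu τ) - χ (Φs a)) + θ • (χ (g τ) - χ (Φs a)) ≠ 0 := by
    intro a ha τ hτ hor θ hθ h0
    have hcomb : (1 - θ) • χ (Φu τ) + θ • χ (g τ) = χ (Φs a) := by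
      rw [← sub_eq_zero, ← h0]
      module
    have haC : a ∈ C := hCV a ha (hcomb ▸ hV (huV hτ).2 (hgV τ).2 (sub_nonneg.2 hθ.2) hθ.1
      (sub_add_cancel 1 θ))
    obtain ⟨hgτ, hτ0⟩ : g τ = Φu τ ∧ τ ≠ 0 := by
      rcases eq_endpoints_or_mem_Ioo_of_mem_Icc (hcl ▸ hτ) with rfl | rfl | h
      exacts [⟨hgs, hs0.ne⟩, ⟨hgt, ht0.ne'⟩, absurd h (hor.resolve_left (not_not_intro haC))]
    rw [hgτ, ← add_smul, sub_add_cancel, one_smul] at hcomb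
    exact hτ0 (eq_zero_of_apply_mem_image hf hε0 hε hu (mapsTo_iff_image_subset.1 hCW) (huW hτ)
      ⟨a, ha, (χ.injOn (huχ hτ) (hCχ ha) hcomb).symm⟩)
  obtain ⟨a, ha, τ, hτ, h0⟩ := (isEssential_sub hf hε0 hε hs hu hC isOpen_Ioo hCb
    (isBounded_Ioo s t) hC0 ⟨hs0, ht0⟩ hCχ huχ hCW huW).exists_eq_zero_of_segment hC isOpen_Ioo
    hCb (isBounded_Ioo s t) (continuousOn_sub_of_mapsTo hs.continuous hu.continuous hCχ huχ)
    (continuousOn_sub_of_mapsTo hs.continuous hg hCχ hgχ) hseg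
  exact ⟨τ, a, ha, χ.injOn (hCχ ha) (hgχ hτ) (sub_eq_zero.1 h0).symm⟩

variable [LocallyPathConnectedSpace M] [FiniteDimensional ℝ S]

theorem notMem_connectedComponentIn_diff_image_closure [CompactSpace M] (hf : IsExpansive f α)
    (hε0 : 0 ≤ ε) (hε : 2 * ε ≤ α) (hs : IsStableParam f e p l Φs)
    (hu : IsStableParam f.symm (swapChart e) p l Φu) (hC : IsOpen C)
    (hCb : Bornology.IsBounded C) (hC0 : 0 ∈ C) (hCχ : MapsTo Φs (closure C) χ.source)
    (hCW : MapsTo Φs (closure C) (WsLoc f ε p)) (hV : Convex ℝ V)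
    (hVo : IsOpen (χ.source ∩ χ ⁻¹' V)) (hCV : ∀ a ∈ closure C, χ (Φs a) ∈ V → a ∈ C)
    (hs0 : s < 0) (ht0 : 0 < t) (huV : MapsTo Φu (Icc s t) (χ.source ∩ χ ⁻¹' V))
    (huW : MapsTo Φu (Icc s t) (WsLoc f.symm ε p)) :
    Φu s ∉ connectedComponentIn ((χ.source ∩ χ ⁻¹' V) \ Φs '' closure C) (Φu t) := by
  intro hmem
  have ht : t ∈ Icc s t := right_mem_Icc.2 (hs0.trans ht0).le
  have htD : Φu t ∉ Φs '' closure C := fun h => ht0.ne'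
    (eq_zero_of_apply_mem_image hf hε0 hε hu (mapsTo_iff_image_subset.1 hCW) (huW ht) h)
  obtain ⟨g, hg, hgB, hgs, hgt⟩ := exists_continuous_of_mem_connectedComponentIn
    (hVo.sdiff (hCb.isCompact_closure.image hs.continuous).isClosed) ⟨huV ht, htD⟩ hmem
    (hs0.trans ht0)
  obtain ⟨τ, hτ⟩ := exists_apply_mem_image_closure hf hε0 hε hs hu hC hCb hC0 hCχ hCW hV hCV hs0
    ht0 huV huW hg (fun τ => (hgB τ).1) hgs hgt
  exact (hgB τ).2 hτ

theorem IsHyperbolicAt.exists_isSeparatingPlaque [CompactSpace M]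
    (hp : IsHyperbolicAt f S ℝ p) (hf : IsExpansive f α) (hε0 : 0 < ε) (hε : 2 * ε ≤ α)
    (hδ : 0 < δ) (hV : Convex ℝ V) (hVo : IsOpen (χ.source ∩ χ ⁻¹' V))
    (hVχ : closure (χ.source ∩ χ ⁻¹' V) ⊆ χ.source)
    (hpV : closedBall p δ ⊆ χ.source ∩ χ ⁻¹' V)
    (hhalf : WsLoc f ε p ∩ (χ.source ∩ χ ⁻¹' V) ⊆ WsLoc f (ε / 2) p)
    (hhalf' : WsLoc f.symm ε p ∩ ball p δ ⊆ WsLoc f.symm (ε / 2) p) :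
    ∃ a b D J, IsUnstableArm f ε δ p a J ∧ IsUnstableArm f ε δ p b J ∧
      IsSeparatingPlaque f ε (χ.source ∩ χ ⁻¹' V) p a b D ∧
      ∃ σ : M → S, ContinuousOn σ D ∧ InjOn σ D := by
  obtain ⟨e, l, he⟩ := hp
  obtain ⟨Φs, hs⟩ := he.exists_isStableParam
  obtain ⟨Φu, hu⟩ := he.symm.exists_isStableParam
  have hεα : ε ≤ α := by linarith
  obtain ⟨s, hs0, t, ht0, J, hJs, hJt, hJ⟩ := hu.exists_isUnstableArm_Icc hf hε0 hεα hδ hhalf'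
  obtain ⟨C, hC, hCb, hC0, hCc, hCW, hCcl, hCB⟩ :=
    hs.exists_plaque_in hf hε0 hεα hVo (hpV (mem_closedBall_self hδ.le)) hhalf
  have hCχ : MapsTo Φs (closure C) χ.source := fun a ha => hVχ (hCcl ha)
  have hsep := notMem_connectedComponentIn_diff_image_closure hf hε0.le hε hs hu hC hCb hC0 hCχ
    hCW hV hVo (fun a ha haV => hCB a ha ⟨hCχ ha, haV⟩) hs0 ht0
    (fun τ hτ => hpV (hJs.subset_closedBall (hJ hτ))) fun τ hτ => hJs.subset_WsLoc (hJ hτ)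
  have hinv : LeftInvOn (Function.invFun Φs) Φs (closure C) := fun a _ =>
    Function.leftInverse_invFun hs.injective a
  exact ⟨_, _, _, J, hJt, hJs, ⟨hCb.isCompact_closure.image hs.continuous,
    ⟨0, subset_closure hC0, hs.apply_zero⟩, hCW.image_subset, hCc, hsep⟩, Function.invFun Φs,
    continuousOn_image_of_leftInvOn hCb.isCompact_closure hs.continuous.continuousOn hinv,
    hinv.rightInvOn_image.injOn⟩

end Cells

/-! ### The dichotomy -/

section IndexSets

variable {f : M ≃ₜ M} {α : ℝ} {m : ℕ} {p q : M}

/-- The topologically hyperbolic periodic points with `m`-dimensional stable and one-dimensional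
unstable direction. -/
def codimOnePoints (f : M ≃ₜ M) (m : ℕ) : Set M :=
  {p | IsHyperbolicAt f (Fin m → ℝ) ℝ p}

/-- The topologically hyperbolic periodic points of index less than `m`, in dimension `m + 1`. -/
def lowIndexPoints (f : M ≃ₜ M) (m : ℕ) : Set M :=
  {q | ∃ r < m, IsHyperbolicAt f (Fin r → ℝ) (Fin (m + 1 - r) → ℝ) q}

theorem mapsTo_codimOnePoints_symm (f : M ≃ₜ M) (m : ℕ) :
    MapsTo f.symm (codimOnePoints f m) (codimOnePoints f m) :=
  fun _ hp => IsHyperbolicAt.map_symm hp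

theorem mapsTo_lowIndexPoints (f : M ≃ₜ M) (m : ℕ) :
    MapsTo f (lowIndexPoints f m) (lowIndexPoints f m) :=
  fun _ ⟨r, hr, hq⟩ => ⟨r, hr, hq.map⟩

theorem mapsTo_lowIndexPoints_symm (f : M ≃ₜ M) (m : ℕ) :
    MapsTo f.symm (lowIndexPoints f m) (lowIndexPoints f m) :=
  fun _ ⟨r, hr, hq⟩ => ⟨r, hr, hq.map_symm⟩

variable [CompactSpace M]

theorem notMem_closure_lowIndexPoints (hf : IsExpansive f α) (hα : 0 < α)
    (hp : p ∈ codimOnePoints f m) : p ∉ closure (lowIndexPoints f m) := by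
  have hev : ∀ᶠ q in 𝓝 p, ∀ r < m, ¬IsHyperbolicAt f (Fin r → ℝ) (Fin (m + 1 - r) → ℝ) q :=
    (finite_Iio m).eventually_all.2 fun r hr =>
      IsHyperbolicAt.eventually_not_of_finrank_lt hp (by simpa using hr) hf hα
  rw [mem_closure_iff_frequently, not_frequently]
  filter_upwards [hev] with q hq
  rintro ⟨r, hr, hqr⟩
  exact hq r hr hqr

theorem notMem_closure_codimOnePoints (hf : IsExpansive f α) (hα : 0 < α)
    (hq : q ∈ lowIndexPoints f m) : q ∉ closure (codimOnePoints f m) := by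
  obtain ⟨r, hr, hq⟩ := hq
  have hdim : Module.finrank ℝ ℝ < Module.finrank ℝ (Fin (m + 1 - r) → ℝ) := by
    rw [Module.finrank_self, Module.finrank_fin_fun]
    omega
  rw [mem_closure_iff_frequently, not_frequently]
  filter_upwards [hq.symm.eventually_not_of_finrank_lt (U' := Fin m → ℝ) hdim hf.symm hα]
    with p hp hpm
  exact hp hpm.symm

end IndexSets

section ChartWindow

theorem exists_chartBall {Y : Type*} [PseudoMetricSpace Y] [ProperSpace Y]
    {χ : OpenPartialHomeomorph M Y} {x : M} {η : ℝ} (hx : x ∈ χ.source) (hη : 0 < η) :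
    ∃ ρ > 0, ball (χ x) ρ ⊆ χ.target ∧ closure (χ.source ∩ χ ⁻¹' ball (χ x) ρ) ⊆ χ.source ∧
      χ.source ∩ χ ⁻¹' ball (χ x) ρ ⊆ ball x η := by
  have hopen : IsOpen (χ.target ∩ χ.symm ⁻¹' ball x η) := χ.symm.isOpen_inter_preimage isOpen_ball
  have hmem : χ x ∈ χ.target ∩ χ.symm ⁻¹' ball x η :=
    ⟨χ.map_source hx, by rw [mem_preimage, χ.left_inv hx]; exact mem_ball_self hη⟩
  obtain ⟨ρ, hρ, hsub⟩ := nhds_basis_closedBall.mem_iff.1 (hopen.mem_nhds hmem)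
  have htarget : closedBall (χ x) ρ ⊆ χ.target := hsub.trans inter_subset_left
  have hclosed : IsClosed (χ.symm '' closedBall (χ x) ρ) :=
    ((isCompact_closedBall _ _).image_of_continuousOn (χ.continuousOn_symm.mono htarget)).isClosed
  refine ⟨ρ, hρ, ball_subset_closedBall.trans htarget, ?_⟩
  rw [← χ.symm_image_eq_source_inter_preimage (ball_subset_closedBall.trans htarget)]
  constructor
  · refine (closure_minimal (image_mono ball_subset_closedBall) hclosed).trans ?_
    exact image_subset_iff.2 fun y hy => χ.map_target (htarget hy)
  · exact image_subset_iff.2 fun y hy => (hsub (ball_subset_closedBall hy)).2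

variable {Y : Type*} [NormedAddCommGroup Y] [NormedSpace ℝ Y] {χ : OpenPartialHomeomorph M Y}
  {V : Set Y} {f : M ≃ₜ M} {α ε δ : ℝ} {m : ℕ} {N : Set M} {p x : M}

/-- A convex piece `V` of the chart `χ` and a window `N` such that, at every point of `N`, the
`δ`-ball lies in the preimage of `V`, and local stable sets inside this preimage and local unstable
sets inside the `δ`-ball have size `ε / 2` as soon as they have size `ε`. -/
structure IsChartWindow (f : M ≃ₜ M) (ε δ : ℝ) (χ : OpenPartialHomeomorph M Y) (V : Set Y)
    (N : Set M) : Prop where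
  convex : Convex ℝ V
  isOpen_chartBall : IsOpen (χ.source ∩ χ ⁻¹' V)
  isPreconnected_chartBall : IsPreconnected (χ.source ∩ χ ⁻¹' V)
  closure_subset : closure (χ.source ∩ χ ⁻¹' V) ⊆ χ.source
  isOpen_window : IsOpen N
  closedBall_subset : ∀ p ∈ N, closedBall p δ ⊆ χ.source ∩ χ ⁻¹' V
  stable_half : ∀ p ∈ N, WsLoc f ε p ∩ (χ.source ∩ χ ⁻¹' V) ⊆ WsLoc f (ε / 2) p
  unstable_half : ∀ p ∈ N, WsLoc f.symm ε p ∩ ball p δ ⊆ WsLoc f.symm (ε / 2) p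

variable [CompactSpace M]

theorem exists_isChartWindow [ProperSpace Y] (hf : IsExpansive f α) (hε0 : 0 < ε) (hε : ε ≤ α)
    (hx : x ∈ χ.source) : ∃ δ > 0, ∃ V N, IsChartWindow f ε δ χ V N ∧ x ∈ N := by
  obtain ⟨δs, hδs, hs⟩ := hf.exists_mem_WsLoc_of_dist_lt hε (half_pos hε0)
  obtain ⟨δu, hδu, hu⟩ := hf.symm.exists_mem_WsLoc_of_dist_lt hε (half_pos hε0)
  obtain ⟨ρ, hρ, htarget, hclosure, hsub⟩ := exists_chartBall hx (half_pos hδs)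
  have hopen : IsOpen (χ.source ∩ χ ⁻¹' ball (χ x) ρ) := χ.isOpen_inter_preimage isOpen_ball
  obtain ⟨r, hr, hball⟩ := Metric.isOpen_iff.1 hopen x ⟨hx, mem_ball_self hρ⟩
  have hclosedBall : ∀ p ∈ ball x (r / 2), closedBall p (min (r / 2) δu / 2) ⊆
      χ.source ∩ χ ⁻¹' ball (χ x) ρ := fun p hp y hy => hball <| by
    have hy' : dist y p < r / 2 := (mem_closedBall.1 hy).trans_lt
      ((half_lt_self (lt_min (half_pos hr) hδu)).trans_le (min_le_left _ _))
    exact (dist_triangle y p x).trans_lt (add_halves r ▸ add_lt_add hy' hp)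
  refine ⟨min (r / 2) δu / 2, half_pos (lt_min (half_pos hr) hδu), ball (χ x) ρ, ball x (r / 2),
    ⟨convex_ball _ _, hopen, ?_, hclosure, isOpen_ball, hclosedBall, fun p hp y hy => ?_,
      fun p _ y hy => ?_⟩, mem_ball_self (half_pos hr)⟩
  · rw [← χ.symm_image_eq_source_inter_preimage htarget]
    exact (convex_ball _ _).isPreconnected.image _ (χ.continuousOn_symm.mono htarget)
  · have hpx : dist p x < δs / 2 := hsub (hball (ball_subset_ball (half_le_self hr.le) hp))
    exact hs p y hy.1 ((dist_triangle_right p y x).trans_lt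
      (add_halves δs ▸ add_lt_add hpx (hsub hy.2)))
  · refine hu p y hy.1 ((mem_ball'.1 hy.2).trans_le ?_)
    exact (half_le_self (lt_min (half_pos hr) hδu).le).trans (min_le_right _ _)

theorem exists_isUnstableArm_of_mem_lowIndexPoints (hp : p ∈ lowIndexPoints f m)
    (hf : IsExpansive f α) (hε0 : 0 < ε) (hε : ε ≤ α) (hδ : 0 < δ)
    (hhalf : WsLoc f.symm ε p ∩ ball p δ ⊆ WsLoc f.symm (ε / 2) p) :
    ∃ a J, IsUnstableArm f ε δ p a J := by
  obtain ⟨r, hr, hp⟩ := hp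
  have : Nonempty (Fin (m + 1 - r)) := ⟨⟨0, by omega⟩⟩
  exact hp.exists_isUnstableArm hf hε0 hε hδ hhalf

namespace IsChartWindow

theorem exists_arms_and_plaques [LocallyPathConnectedSpace M] (h : IsChartWindow f ε δ χ V N)
    (hf : IsExpansive f α) (hε0 : 0 < ε) (hε : 2 * ε ≤ α) (hδ : 0 < δ) (m : ℕ) :
    ∃ (D J : M → Set M) (a b : M → M),
      (∀ p ∈ (codimOnePoints f m ∪ lowIndexPoints f m) ∩ N, IsUnstableArm f ε δ p (a p) (J p)) ∧
      ∀ p ∈ codimOnePoints f m ∩ N, IsUnstableArm f ε δ p (b p) (J p) ∧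
        IsSeparatingPlaque f ε (χ.source ∩ χ ⁻¹' V) p (a p) (b p) (D p) ∧
        ∃ σ : M → Fin m → ℝ, ContinuousOn σ (D p) ∧ InjOn σ (D p) := by
  have hpoint : ∀ p, ∃ D J a b,
      (p ∈ (codimOnePoints f m ∪ lowIndexPoints f m) ∩ N → IsUnstableArm f ε δ p a J) ∧
      (p ∈ codimOnePoints f m ∩ N → IsUnstableArm f ε δ p b J ∧
        IsSeparatingPlaque f ε (χ.source ∩ χ ⁻¹' V) p a b D ∧
        ∃ σ : M → Fin m → ℝ, ContinuousOn σ D ∧ InjOn σ D) := fun p => by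
    by_cases hpP : p ∈ codimOnePoints f m ∩ N
    · obtain ⟨a, b, D, J, ha, hb, hD, hσ⟩ := IsHyperbolicAt.exists_isSeparatingPlaque hpP.1 hf hε0
        hε hδ h.convex h.isOpen_chartBall h.closure_subset (h.closedBall_subset p hpP.2)
        (h.stable_half p hpP.2) (h.unstable_half p hpP.2)
      exact ⟨D, J, a, b, fun _ => ha, fun _ => ⟨hb, hD, hσ⟩⟩
    · by_cases hpQ : p ∈ lowIndexPoints f m ∩ N
      · obtain ⟨a, J, ha⟩ := exists_isUnstableArm_of_mem_lowIndexPoints hpQ.1 hf hε0 (by linarith)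
          hδ (h.unstable_half p hpQ.2)
        exact ⟨∅, J, a, p, fun _ => ha, fun hp => (hpP hp).elim⟩
      · exact ⟨∅, ∅, p, p, fun hp => (hp.1.elim (fun hP => hpP ⟨hP, hp.2⟩)
          fun hQ => hpQ ⟨hQ, hp.2⟩).elim, fun hp => (hpP hp).elim⟩
  choose D J a b harm hplaque using hpoint
  exact ⟨D, J, a, b, harm, hplaque⟩

theorem exists_isSeparatingSystem [LocallyPathConnectedSpace M] (h : IsChartWindow f ε δ χ V N)
    (hf : IsExpansive f α) (hε0 : 0 < ε) (hε : 2 * ε ≤ α) (hδ : 0 < δ)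
    (hcover : closure (codimOnePoints f m) ∪ closure (lowIndexPoints f m) = univ) :
    ∃ D J a b, IsSeparatingSystem f ε δ (codimOnePoints f m) (lowIndexPoints f m)
        (χ.source ∩ χ ⁻¹' V) N D J a b ∧
      ∀ p ∈ codimOnePoints f m ∩ N, ∃ σ : M → Fin m → ℝ, ContinuousOn σ (D p) ∧ InjOn σ (D p) := by
  obtain ⟨D, J, a, b, harm, hplaque⟩ := h.exists_arms_and_plaques hf hε0 hε hδ m
  have hα : 0 < α := by linarith
  refine ⟨D, J, a, b, ⟨hcover, fun p hp => ?_, fun p hp => ?_, fun q hq => ?_, h.isOpen_chartBall,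
    h.isPreconnected_chartBall, h.isOpen_window, h.closedBall_subset, harm,
    fun p hp => (hplaque p hp).1, fun p hp => (hplaque p hp).2.1⟩, fun p hp => (hplaque p hp).2.2⟩
  · exact IsHyperbolicAt.notMem_of_mem_WsLoc hp hf (by linarith) isClosed_closure
      (notMem_closure_lowIndexPoints hf hα hp) ((mapsTo_lowIndexPoints f m).closure f.continuous)
  · exact (IsHyperbolicAt.symm hp).notMem_of_mem_WsLoc hf.symm hε isClosed_closure
      (notMem_closure_lowIndexPoints hf hα hp)
      ((mapsTo_lowIndexPoints_symm f m).closure f.symm.continuous)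
  · obtain ⟨r, -, hqr⟩ := id hq
    exact hqr.symm.notMem_of_mem_WsLoc hf.symm (by linarith) isClosed_closure
      (notMem_closure_codimOnePoints hf hα hq)
      ((mapsTo_codimOnePoints_symm f m).closure f.symm.continuous)

end IsChartWindow

theorem codimOnePoints_eq_empty_or_lowIndexPoints_eq_empty [ConnectedSpace M]
    [ChartedSpace (EuclideanSpace ℝ (Fin (m + 1))) M] (hf : IsExpansive f α) (hα : 0 < α)
    (hdense : Dense (codimOnePoints f m ∪ lowIndexPoints f m)) :
    codimOnePoints f m = ∅ ∨ lowIndexPoints f m = ∅ := by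
  have := ChartedSpace.locallyConnectedSpace (EuclideanSpace ℝ (Fin (m + 1))) M
  have := ChartedSpace.locallyPathConnectedSpace (EuclideanSpace ℝ (Fin (m + 1))) M
  rw [or_iff_not_imp_left, ← ne_eq, ← nonempty_iff_ne_empty]
  refine fun hP => not_nonempty_iff_eq_empty.1 fun hQ => ?_
  have hcover : closure (codimOnePoints f m) ∪ closure (lowIndexPoints f m) = univ := by
    rw [← closure_union, hdense.closure_eq]
  obtain ⟨x, -, hx⟩ := isPreconnected_closed_iff.1 isPreconnected_univ _ _ isClosed_closure
    isClosed_closure hcover.ge (by simpa using hP) (by simpa using hQ)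
  obtain ⟨δ, hδ, V, N, h, hxN⟩ := exists_isChartWindow (ε := α / 4) hf (by positivity)
    (by linarith) (mem_chart_source (EuclideanSpace ℝ (Fin (m + 1))) x)
  obtain ⟨D, J, a, b, hsys, hσ⟩ := h.exists_isSeparatingSystem hf (by positivity) (by linarith) hδ
    hcover
  have hdim : Module.finrank ℝ (EuclideanSpace ℝ (Fin (m + 1))) =
      Module.finrank ℝ (Fin m → ℝ) + 1 := by simp
  exact hsys.notMem_closure_inter_closure hf (by positivity) (by linarith) hδ hdim _ hσ hxN
    (mem_chart_source _ x) hx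

theorem eq_or_eq_empty_of_subset_codimOnePoints [ConnectedSpace M]
    [ChartedSpace (EuclideanSpace ℝ (Fin (m + 1))) M] (hf : IsExpansive f α) (hα : 0 < α)
    {A H : Set M} (hAH : A ⊆ H) (hH : Dense H) (hA : A ⊆ codimOnePoints f m)
    (hHA : H \ A ⊆ lowIndexPoints f m) : A = H ∨ A = ∅ := by
  have hdense : Dense (codimOnePoints f m ∪ lowIndexPoints f m) :=
    hH.mono ((sdiff_subset_iff.1 hHA).trans (union_subset_union_left _ hA))
  rcases codimOnePoints_eq_empty_or_lowIndexPoints_eq_empty hf hα hdense with hP | hQ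
  · exact .inr (subset_empty_iff.1 (hP ▸ hA))
  · exact .inl (hAH.antisymm (sdiff_eq_empty.1 (subset_empty_iff.1 (hQ ▸ hHA))))

end ChartWindow

section PeriodicPoints

variable {f : M ≃ₜ M} {α : ℝ} {n m r : ℕ} {p : M}

theorem exists_openPartialHomeomorph_of_homeomorph {X Y : Type*} [TopologicalSpace X]
    [TopologicalSpace Y] {U : Set X} {V : Set Y} (hU : IsOpen U) (hV : IsOpen V) (h : U ≃ₜ V)
    (hne : U.Nonempty) : ∃ e : OpenPartialHomeomorph X Y, e.source = U ∧ e.target = V ∧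
      ∀ z (hz : z ∈ U), e z = h ⟨z, hz⟩ := by
  have : Nonempty U := hne.to_subtype
  have : Nonempty V := this.map h
  let cU := (⟨U, hU⟩ : TopologicalSpace.Opens X).openPartialHomeomorphSubtypeCoe ‹_›
  let cV := (⟨V, hV⟩ : TopologicalSpace.Opens Y).openPartialHomeomorphSubtypeCoe ‹_›
  refine ⟨(cU.symm.trans h.toOpenPartialHomeomorph).trans cV, by simp [cU, cV], by simp [cU, cV],
    fun z hz => ?_⟩
  have hcU : cU.symm z = ⟨z, hz⟩ := cU.left_inv (x := ⟨z, hz⟩) (by simp [cU])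
  change cV (h (cU.symm z)) = _
  rw [hcU]
  rfl

theorem modelL_eq_modelMap (z : ModelSp n r) : modelL n r z = modelMap z := by
  ext i
  · simp [modelL, modelMap, div_eq_inv_mul]
  · simp [modelL, modelMap]

theorem isHyperbolicAt_of_mem_PerHr (h : p ∈ PerHr f n r) :
    IsHyperbolicAt f (Fin r → ℝ) (Fin (n - r) → ℝ) p := by
  obtain ⟨l, hl, hfix, U, V, h, hU, hV, h0, hp, hp0, hconj⟩ := h
  have hpow : ∀ z, (f.toEquiv ^ l) z = f^[l] z := iterZ_natCast f l
  simp only [hpow] at hfix hconj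
  obtain ⟨e, rfl, rfl, he⟩ := exists_openPartialHomeomorph_of_homeomorph hU hV h ⟨p, hp⟩
  have hep : e p = 0 := (he p hp).trans hp0
  have hs0 : e.symm 0 = p := hep ▸ e.left_inv hp
  have hsymm : Tendsto e.symm (𝓝 0) (𝓝 p) := hs0 ▸ e.continuousAt_symm h0
  have hiter : Tendsto (fun z => f^[l] (e.symm z)) (𝓝 0) (𝓝 p) :=
    ((f.continuous.iterate l).tendsto' p p hfix).comp hsymm
  refine ⟨e, l, hl, hp, hep, ?_⟩
  filter_upwards [hiter.eventually (hU.mem_nhds hp), hV.mem_nhds h0] with z hz hzt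
  have hconj' := hconj (e.symm z) (e.map_target hzt) hz
  rw [← he, ← he, e.right_inv hzt, modelL_eq_modelMap] at hconj'
  rw [← hconj', e.left_inv hz]

theorem mem_PerH : p ∈ PerH f n ↔ ∃ r ≤ n, p ∈ PerHr f n r := by
  simp [PerH]

theorem PerHr_subset_PerH (hr : r ≤ n) : PerHr f n r ⊆ PerH f n :=
  fun _ hp => mem_PerH.2 ⟨r, hr, hp⟩

theorem PerHr_subset_codimOnePoints : PerHr f (m + 1) m ⊆ codimOnePoints f m := fun _ hp =>
  (isHyperbolicAt_of_mem_PerHr hp).congr (.refl ℝ _) (.ofFinrankEq (by simp))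

theorem PerHr_one_subset_codimOnePoints_symm :
    PerHr f (m + 1) 1 ⊆ codimOnePoints f.symm m := fun _ hp =>
  (isHyperbolicAt_of_mem_PerHr hp).symm.congr (.refl ℝ _) (.ofFinrankEq (by simp))

variable [CompactSpace M] [PreconnectedSpace M] [LocallyConnectedSpace M]

theorem PerHr_eq_empty_of_le (hf : IsExpansive f α) (hα : 0 < α) (hr : 1 ≤ r) (hn : n ≤ r) :
    PerHr f n r = ∅ := by
  have : Nonempty (Fin r) := ⟨⟨0, hr⟩⟩
  have : IsEmpty (Fin (n - r)) := by
    rw [Nat.sub_eq_zero_of_le hn]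
    infer_instance
  exact eq_empty_of_forall_notMem fun p hp =>
    not_isHyperbolicAt_of_subsingleton hf hα p (isHyperbolicAt_of_mem_PerHr hp)

theorem PerHr_succ_zero_eq_empty (hf : IsExpansive f α) (hα : 0 < α) :
    PerHr f (m + 1) 0 = ∅ := eq_empty_of_forall_notMem fun p hp =>
  not_isHyperbolicAt_of_subsingleton (S := Fin (m + 1) → ℝ) hf.symm hα p
    (isHyperbolicAt_of_mem_PerHr hp).symm

theorem PerH_diff_subset_lowIndexPoints (hf : IsExpansive f α) (hα : 0 < α) :
    PerH f (m + 1) \ PerHr f (m + 1) m ⊆ lowIndexPoints f m := by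
  rintro p ⟨hp, hpm⟩
  obtain ⟨r, hr, hpr⟩ := mem_PerH.1 hp
  have hr_top : r ≠ m + 1 := by
    rintro rfl
    rwa [PerHr_eq_empty_of_le hf hα (Nat.succ_pos m) le_rfl] at hpr
  have hrm : r ≠ m := by
    rintro rfl
    exact hpm hpr
  exact ⟨r, by omega, isHyperbolicAt_of_mem_PerHr hpr⟩

theorem PerH_diff_subset_lowIndexPoints_symm (hf : IsExpansive f α) (hα : 0 < α) :
    PerH f (m + 1) \ PerHr f (m + 1) 1 ⊆ lowIndexPoints f.symm m := by
  rintro p ⟨hp, hp1⟩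
  obtain ⟨r, hr, hpr⟩ := mem_PerH.1 hp
  have hr0 : r ≠ 0 := by
    rintro rfl
    rwa [PerHr_succ_zero_eq_empty hf hα] at hpr
  have hr1 : r ≠ 1 := by
    rintro rfl
    exact hp1 hpr
  exact ⟨m + 1 - r, by omega, (isHyperbolicAt_of_mem_PerHr hpr).symm.congr (.refl ℝ _)
    (.ofFinrankEq (by simp; omega))⟩

end PeriodicPoints

end ExpansiveDynamics

/-- **Theorem 2.** If `f` is an expansive homeomorphism of a compact connected boundaryless
`n`-manifold with dense topologically hyperbolic periodic points, then `Per_H^{n-1} = Per_H`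
or `Per_H^{n-1} = ∅`, and analogously for `Per_H^1`. -/
theorem stmt1 {M : Type*} [MetricSpace M] [CompactSpace M] [ConnectedSpace M]
    (n : ℕ) [ChartedSpace (EuclideanSpace ℝ (Fin n)) M]
    (f : M ≃ₜ M) (α : ℝ) (hα : 0 < α) (hexp : IsExpansive f α)
    (hdense : closure (PerH f n) = Set.univ) :
    (PerHr f n (n - 1) = PerH f n ∨ PerHr f n (n - 1) = ∅) ∧
      (PerHr f n 1 = PerH f n ∨ PerHr f n 1 = ∅) := by
  have := ChartedSpace.locallyConnectedSpace (EuclideanSpace ℝ (Fin n)) M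
  have hPerH : Dense (PerH f n) := dense_iff_closure_eq.2 hdense
  cases n with
  | zero =>
    exact ⟨.inl (by simp [PerH]),
      .inr (ExpansiveDynamics.PerHr_eq_empty_of_le hexp hα le_rfl zero_le_one)⟩
  | succ m =>
    exact ⟨ExpansiveDynamics.eq_or_eq_empty_of_subset_codimOnePoints hexp hα
        (ExpansiveDynamics.PerHr_subset_PerH m.le_succ) hPerH
        ExpansiveDynamics.PerHr_subset_codimOnePoints
        (ExpansiveDynamics.PerH_diff_subset_lowIndexPoints hexp hα),
      ExpansiveDynamics.eq_or_eq_empty_of_subset_codimOnePoints hexp.symm hα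
        (ExpansiveDynamics.PerHr_subset_PerH (Nat.succ_pos m)) hPerH
        ExpansiveDynamics.PerHr_one_subset_codimOnePoints_symm
        (ExpansiveDynamics.PerH_diff_subset_lowIndexPoints_symm hexp hα)⟩
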